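/- Fix an integer d ≥ 1, δ ∈ (0,1), K > 0, and T ∈ (0,∞). Let a^{jk} : ℝ² → ℝ (1 ≤ j,k ≤ d) be measurable functions of (t,x¹) only (independent of x'), with a^{jk} = a^{kj} and δ|θ|² ≤ Σ_{j,k=1}^d a^{jk}(t,x¹) θ^j θ^k ≤ δ⁻¹|θ|² for all (t,x¹) and θ ∈ ℝ^d; let b^j, c : ℝ^{d+1} → ℝ be measurable with |b^j| ≤ K and |c| ≤ K. Set Lu = u_t + Σ_{j,k} a^{jk} u_{x^j x^k} + Σ_j b^j u_{x^j} + c u. Then there exists N = N(d,δ,K,T) such that for every smooth compactly supported u : ℝ^{d+1} → ℝ with u(t,x) = 0 whenever t ≥ T: ‖u‖_{L²(Ω_T)} + ‖u_t‖_{L²(Ω_T)} + ‖u_x‖_{L²(Ω_T)} + ‖u_{xx}‖_{L²(Ω_T)} ≤ N ‖Lu‖_{L²(Ω_T)}. (This is the a priori estimate of the paper's Theorem on unique solvability in W₂^{1,2}(Ω_T).) -/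

import Mathlib

open MeasureTheory

/-- Partial derivative in `t`. -/
noncomputable def pdt {d : ℕ} (u : ℝ × (Fin d → ℝ) → ℝ) : ℝ × (Fin d → ℝ) → ℝ :=
  fun p => fderiv ℝ u p (1, 0)

/-- Partial derivative in `x^j`. -/
noncomputable def pdx {d : ℕ} (j : Fin d) (u : ℝ × (Fin d → ℝ) → ℝ) :
    ℝ × (Fin d → ℝ) → ℝ :=
  fun p => fderiv ℝ u p (0, Pi.single j 1)

/-- Second partial derivative in `x^j, x^k`. -/
noncomputable def pdxx {d : ℕ} (j k : Fin d) (u : ℝ × (Fin d → ℝ) → ℝ) :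
    ℝ × (Fin d → ℝ) → ℝ :=
  pdx j (pdx k u)

/-- `Ω_T = (0,T) × ℝ^d`. -/
def OmegaT (d : ℕ) (T : ℝ) : Set (ℝ × (Fin d → ℝ)) := Set.Ioo 0 T ×ˢ Set.univ

/-- `L²(Ω)` norm on a set `Ω`. -/
noncomputable def L2NormOn {d : ℕ} (s : Set (ℝ × (Fin d → ℝ)))
    (f : ℝ × (Fin d → ℝ) → ℝ) : ℝ :=
  Real.sqrt (∫ q in s, (f q) ^ 2)

/-!
For `u` supported in `t ≤ T`, the function `w = exp (lam t) u` satisfies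
`(L - lam) w = exp (lam t) L u`, so it is enough to bound `w`, with `lam` large, on the half-space
`t > 0`. The bound for `L - lam` without lower order terms controls `lam² ‖w‖² + lam ‖w_x‖²`, hence
the terms `b^j w_{x^j}` and `c w` are absorbed for large `lam`.

Since `a^{jk}` does not depend on `x'`, a Fourier transform in `x'` turns the second order operator
into the family `∂_t + a ∂_1² + 2iβ ∂_1 - γ` of operators in `(t, x¹)`, with `a = a^{11}`, where
ellipticity gives `β² ≤ a (γ - κ)` for some `κ` comparable to `lam + |ξ|²`. By Kato's inequality the
modulus of a solution is a subsolution of `∂_t + a ∂_1² - κ`. Its `L²` bound is obtained for a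
finite difference scheme: the equation is divided by `a` and squared, and the cross term then has a
sign without any regularity of `a`. The scheme is monotone, so it also bounds subsolutions. Undoing
the Fourier transform bounds `lam u - Δ_{x'} u`.

Integration by parts now controls all `u_{x^j x^k}` with `(j, k) ≠ (1, 1)` up to a small multiple of
`u_{x¹ x¹}`. What is left is `u_t + a^{11} u_{x¹ x¹}`, and dividing by `a^{11}` and squaring once
more bounds `u_t` and `u_{x¹ x¹}`.
-/

section TestFunctions

open scoped ContDiff

variable {V V' F F' : Type*} [NormedAddCommGroup V] [NormedSpace ℝ V]
  [NormedAddCommGroup V'] [NormedSpace ℝ V'] [NormedAddCommGroup F] [NormedSpace ℝ F]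
  [NormedAddCommGroup F'] [NormedSpace ℝ F']

/-- Test functions: smooth maps with compact support. -/
structure IsTestFunction (f : V → F) : Prop where
  contDiff : ContDiff ℝ ∞ f
  hasCompactSupport : HasCompactSupport f

/-- The derivative `∂_v f` of `f` in the constant direction `v`, again as a function on `V`. -/
noncomputable def dirDeriv (v : V) (f : V → F) : V → F := fun z ↦ fderiv ℝ f z v

theorem dirDeriv_eq_of_hasFDerivAt {f : V → F} {f' : V → V →L[ℝ] F}
    (h : ∀ z, HasFDerivAt f (f' z) z) (v : V) : dirDeriv v f = fun z ↦ f' z v :=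
  funext fun z ↦ by rw [dirDeriv, (h z).fderiv]

namespace IsTestFunction

variable {f g : V → F}

theorem continuous (hf : IsTestFunction f) : Continuous f := hf.contDiff.continuous

theorem hasFDerivAt (hf : IsTestFunction f) (z : V) : HasFDerivAt f (fderiv ℝ f z) z :=
  (hf.contDiff.differentiable (by simp) z).hasFDerivAt

protected theorem fderiv (hf : IsTestFunction f) : IsTestFunction (fderiv ℝ f) :=
  ⟨hf.contDiff.fderiv_right (by simp), hf.hasCompactSupport.fderiv ℝ⟩

protected theorem dirDeriv (hf : IsTestFunction f) (v : V) : IsTestFunction (dirDeriv v f) where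
  contDiff := hf.fderiv.contDiff.clm_apply contDiff_const
  hasCompactSupport := hf.hasCompactSupport.fderiv_apply ℝ v

theorem add (hf : IsTestFunction f) (hg : IsTestFunction g) :
    IsTestFunction fun z ↦ f z + g z :=
  ⟨hf.contDiff.add hg.contDiff, hf.hasCompactSupport.add hg.hasCompactSupport⟩

theorem smul {𝕜 : Type*} [NormedRing 𝕜] [NormedAlgebra ℝ 𝕜] [Module 𝕜 F] [IsBoundedSMul 𝕜 F]
    [IsScalarTower ℝ 𝕜 F] {c : V → 𝕜} (hf : IsTestFunction f) (hc : ContDiff ℝ ∞ c) :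
    IsTestFunction fun z ↦ c z • f z :=
  ⟨hc.smul hf.contDiff, hf.hasCompactSupport.smul_left⟩

theorem const_smul (hf : IsTestFunction f) (c : ℝ) : IsTestFunction fun z ↦ c • f z :=
  hf.smul contDiff_const

theorem sub (hf : IsTestFunction f) (hg : IsTestFunction g) :
    IsTestFunction fun z ↦ f z - g z := by
  simpa only [neg_one_smul, ← sub_eq_add_neg] using hf.add (hg.const_smul (-1))

theorem sum {ι : Type*} {f : ι → V → F} (s : Finset ι) (hf : ∀ i, IsTestFunction (f i)) :
    IsTestFunction fun z ↦ ∑ i ∈ s, f i z := by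
  classical
  induction s using Finset.induction_on with
  | empty => simpa using (⟨contDiff_const, .zero⟩ : IsTestFunction fun _ : V ↦ (0 : F))
  | insert i s hi ih => simpa only [Finset.sum_insert hi] using (hf i).add ih

theorem clm_comp (hf : IsTestFunction f) (L : F →L[ℝ] F') : IsTestFunction fun z ↦ L (f z) :=
  ⟨L.contDiff.comp hf.contDiff, hf.hasCompactSupport.comp_left (map_zero L)⟩

theorem comp_equiv (hf : IsTestFunction f) (e : V' ≃L[ℝ] V) : IsTestFunction fun z ↦ f (e z) :=
  ⟨hf.contDiff.comp e.contDiff, hf.hasCompactSupport.comp_homeomorph e.toHomeomorph⟩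

theorem hasDerivAt_line (hf : IsTestFunction f) (z v : V) (s : ℝ) :
    HasDerivAt (fun s : ℝ ↦ f (z + s • v)) (dirDeriv v f (z + s • v)) s :=
  (hf.hasFDerivAt _).comp_hasDerivAt s
    (by simpa using ((hasDerivAt_id s).smul_const v).const_add z)

theorem exists_norm_le (hf : IsTestFunction f) : ∃ C, ∀ z, ‖f z‖ ≤ C :=
  hf.hasCompactSupport.exists_bound_of_continuous hf.continuous

theorem exists_eq_zero_of_lt_norm (hf : IsTestFunction f) : ∃ R, ∀ z, R < ‖z‖ → f z = 0 := by
  obtain ⟨R, hR⟩ := hf.hasCompactSupport.isCompact.isBounded.exists_norm_le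
  exact ⟨R, fun z hz ↦ image_eq_zero_of_notMem_tsupport fun hmem ↦ (hR z hmem).not_gt hz⟩

theorem dirDeriv_comm (hf : IsTestFunction f) (v w : V) :
    dirDeriv v (dirDeriv w f) = dirDeriv w (dirDeriv v f) := by
  have snd_deriv (v w z) :
      dirDeriv v (dirDeriv w f) z = fderiv ℝ (fderiv ℝ f) z v w := by
    have hdiff : DifferentiableAt ℝ (fderiv ℝ f) z :=
      hf.fderiv.contDiff.differentiable (by simp) z
    change fderiv ℝ (fun y ↦ fderiv ℝ f y w) z v = _
    simp [fderiv_clm_apply hdiff (differentiableAt_const w)]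
  have symm (z) : IsSymmSndFDerivAt ℝ f z :=
    (contDiff_infty.1 hf.contDiff 2).contDiffAt.isSymmSndFDerivAt (by simp)
  funext z
  rw [snd_deriv, snd_deriv, (symm z).eq]

theorem dirDeriv_clm_comp (hf : IsTestFunction f) (L : F →L[ℝ] F') (v : V) :
    dirDeriv v (fun z ↦ L (f z)) = fun z ↦ L (dirDeriv v f z) :=
  dirDeriv_eq_of_hasFDerivAt (fun z ↦ L.hasFDerivAt.comp z (hf.hasFDerivAt z)) v

theorem dirDeriv_comp_equiv (hf : IsTestFunction f) (e : V' ≃L[ℝ] V) (v : V') :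
    dirDeriv v (fun z ↦ f (e z)) = fun z ↦ dirDeriv (e v) f (e z) :=
  dirDeriv_eq_of_hasFDerivAt (fun z ↦ (hf.hasFDerivAt (e z)).comp z e.hasFDerivAt) v

theorem mul {f g : V → ℝ} (hf : IsTestFunction f) (hg : IsTestFunction g) :
    IsTestFunction fun z ↦ f z * g z :=
  hg.smul hf.contDiff

theorem dirDeriv_mul {f g : V → ℝ} (hf : IsTestFunction f) (hg : IsTestFunction g) (v : V) :
    dirDeriv v (fun z ↦ f z * g z)
      = fun z ↦ f z * dirDeriv v g z + g z * dirDeriv v f z :=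
  dirDeriv_eq_of_hasFDerivAt (fun z ↦ (hf.hasFDerivAt z).mul (hg.hasFDerivAt z)) v

section Integrals

variable [MeasurableSpace V] [OpensMeasurableSpace V] {μ : Measure V}

theorem memLp [SecondCountableTopologyEither V F] [IsFiniteMeasureOnCompacts μ]
    (hf : IsTestFunction f) (p : ENNReal) : MemLp f p μ :=
  hf.continuous.memLp_of_hasCompactSupport hf.hasCompactSupport

theorem integrable [IsFiniteMeasureOnCompacts μ] (hf : IsTestFunction f) : Integrable f μ :=
  hf.continuous.integrable_of_hasCompactSupport hf.hasCompactSupport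

end Integrals

end IsTestFunction

end TestFunctions

section LpNormTwo

variable {α F : Type*} [MeasurableSpace α] {μ : Measure α} [NormedAddCommGroup F] {f : α → F}

theorem eLpNorm_two_sq (f : α → F) (μ : Measure α) :
    eLpNorm f 2 μ ^ 2 = ∫⁻ x, ‖f x‖ₑ ^ 2 ∂μ := by
  have h := eLpNorm_nnreal_pow_eq_lintegral (f := f) (μ := μ) two_ne_zero
  norm_num at h
  exact_mod_cast h

theorem lpNorm_two_eq_sqrt_integral (hf : AEStronglyMeasurable f μ) :
    lpNorm f 2 μ = √(∫ x, ‖f x‖ ^ 2 ∂μ) := by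
  simp [lpNorm_eq_integral_norm_rpow_toReal two_ne_zero ENNReal.ofNat_ne_top hf,
    Real.sqrt_eq_rpow]

theorem lpNorm_two_sq (hf : AEStronglyMeasurable f μ) :
    lpNorm f 2 μ ^ 2 = ∫ x, ‖f x‖ ^ 2 ∂μ := by
  rw [lpNorm_two_eq_sqrt_integral hf, Real.sq_sqrt (integral_nonneg fun _ ↦ sq_nonneg _)]

theorem memLp_of_bound_of_eq_zero_off {s : Set α} {c : ℝ} (hf : AEStronglyMeasurable f μ)
    (hs : MeasurableSet s) (hμs : μ s ≠ ⊤) (hfc : ∀ x, ‖f x‖ ≤ c) (hfs : ∀ x ∉ s, f x = 0)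
    (p : ENNReal) : MemLp f p μ := by
  refine (memLp_indicator_const p hs c (.inr hμs)).mono hf (.of_forall fun x ↦ ?_)
  by_cases hx : x ∈ s
  · simpa [hx] using (hfc x).trans (le_abs_self c)
  · simp [hx, hfs x hx]

theorem lpNorm_two_le_of_bound_of_eq_zero_off {s : Set α} {c : ℝ} (hs : MeasurableSet s)
    (hμs : μ s ≠ ⊤) (hc : 0 ≤ c) (hfc : ∀ x, ‖f x‖ ≤ c) (hfs : ∀ x ∉ s, f x = 0) :
    lpNorm f 2 μ ≤ c * √(μ.real s) := by
  calc lpNorm f 2 μ ≤ lpNorm (s.indicator fun _ ↦ c) 2 μ := by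
        refine lpNorm_mono_real (memLp_indicator_const 2 hs c (.inr hμs)) fun x ↦ ?_
        by_cases hx : x ∈ s <;> simp [hx, hfc, hfs]
    _ = c * √(μ.real s) := by
        rw [lpNorm_two_eq_sqrt_integral (aestronglyMeasurable_const.indicator hs)]
        simp_rw [norm_indicator_eq_indicator_norm, sq, ← Set.indicator_mul]
        rw [integral_indicator_const _ hs, smul_eq_mul, Real.sqrt_mul measureReal_nonneg,
          Real.sqrt_mul_self (norm_nonneg c), Real.norm_of_nonneg hc, mul_comm]

theorem lpNorm_two_le_add_of_norm_le_add {F' : Type*} [NormedAddCommGroup F'] {g : α → F'}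
    {s : Set α} {c : ℝ} (hg : MemLp g 2 μ) (hs : MeasurableSet s) (hμs : μ s ≠ ⊤) (hc : 0 ≤ c)
    (hfg : ∀ x ∈ s, ‖f x‖ ≤ ‖g x‖ + c) (hfs : ∀ x ∉ s, f x = 0) :
    lpNorm f 2 μ ≤ lpNorm g 2 μ + c * √(μ.real s) := by
  have hconst : MemLp (s.indicator fun _ ↦ c) 2 μ := memLp_indicator_const 2 hs c (.inr hμs)
  calc lpNorm f 2 μ ≤ lpNorm ((fun x ↦ ‖g x‖) + s.indicator fun _ ↦ c) 2 μ := by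
        refine lpNorm_mono_real (hg.norm.add hconst) fun x ↦ ?_
        by_cases hx : x ∈ s
        · simpa [hx] using hfg x hx
        · simp [hx, hfs x hx]
    _ ≤ lpNorm (fun x ↦ ‖g x‖) 2 μ + lpNorm (s.indicator fun _ ↦ c) 2 μ :=
        lpNorm_add_le hg.norm one_le_two
    _ ≤ lpNorm g 2 μ + c * √(μ.real s) := by
        refine add_le_add (lpNorm_norm hg.aestronglyMeasurable 2).le ?_
        refine lpNorm_two_le_of_bound_of_eq_zero_off hs hμs hc (fun x ↦ ?_) fun x hx ↦ ?_
        · exact (norm_indicator_le_norm_self _ x).trans_eq (Real.norm_of_nonneg hc)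
        · exact Set.indicator_of_notMem hx _

theorem integrable_mul_of_memLp_two {f g : α → ℝ} (hf : MemLp f 2 μ) (hg : MemLp g 2 μ) :
    Integrable (fun x ↦ f x * g x) μ :=
  hf.integrable_mul hg

end LpNormTwo

section DifferenceOperator

variable {G : Type*} [AddCommGroup G]

/-- The second difference of `w` with step `r`. -/
def sndDiff (r : G) (w : G → ℝ) (q : G) : ℝ := w (q + r) - 2 * w q + w (q - r)

/-- The explicit finite difference analogue of `w ↦ ∂_p w + A ∂_r² w - κ w`, with `α` the
reciprocal of the step in the direction `p`. -/
def diffOp (α κ : ℝ) (A : G → ℝ) (p r : G) (w : G → ℝ) (q : G) : ℝ :=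
  α * (w (q + p) - w q) + A q * sndDiff r w q - κ * w q

variable {w v A : G → ℝ} {α κ m M : ℝ} {p r : G}

theorem transport_sq_div_sub_le_diffOp_sq_div (hm : 0 < m) {q : G} (hAm : m ≤ A q)
    (hAM : A q ≤ M) :
    (κ * w q - α * (w (q + p) - w q)) ^ 2 / M
        - 2 * (sndDiff r w q * (κ * w q - α * (w (q + p) - w q)))
      ≤ diffOp α κ A p r w q ^ 2 / m := by
  set D := κ * w q - α * (w (q + p) - w q)
  set X := sndDiff r w q
  have hA : 0 < A q := hm.trans_le hAm
  have hop : diffOp α κ A p r w q = A q * X - D := by simp only [diffOp, D, X]; ring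
  calc D ^ 2 / M - 2 * (X * D) ≤ D ^ 2 / A q - 2 * (X * D) + A q * X ^ 2 := by
        have : D ^ 2 / M ≤ D ^ 2 / A q := by gcongr
        have : 0 ≤ A q * X ^ 2 := by positivity
        linarith
    _ = (A q * X - D) ^ 2 / A q := by field_simp; ring
    _ ≤ diffOp α κ A p r w q ^ 2 / m := by rw [hop]; gcongr

variable [MeasurableSpace G] [MeasurableAdd G] {μ : Measure G} [μ.IsAddRightInvariant]

theorem memLp_comp_add_right {f : G → ℝ} {p : ENNReal} (hf : MemLp f p μ) (r : G) :
    MemLp (fun q ↦ f (q + r)) p μ :=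
  hf.comp_measurePreserving (measurePreserving_add_right μ r)

theorem memLp_sndDiff {p : ENNReal} (hw : MemLp w p μ) (r : G) : MemLp (sndDiff r w) p μ := by
  have hback : MemLp (fun q ↦ w (q - r)) p μ := by
    simpa only [← sub_eq_add_neg] using memLp_comp_add_right hw (-r)
  exact ((memLp_comp_add_right hw r).sub (hw.const_mul 2)).add hback

theorem integral_sndDiff_mul (hw : MemLp w 2 μ) (hv : MemLp v 2 μ) (r : G) :
    ∫ q, sndDiff r w q * v q ∂μ = -∫ q, (w (q + r) - w q) * (v (q + r) - v q) ∂μ := by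
  have hwv := integrable_mul_of_memLp_two hw hv
  have hwv_rr := hwv.comp_add_right r
  have hwv_r := integrable_mul_of_memLp_two (memLp_comp_add_right hw r) hv
  have hwv_r' := integrable_mul_of_memLp_two hw (memLp_comp_add_right hv r)
  have shift_mul : ∫ q, w (q + r) * v (q + r) ∂μ = ∫ q, w q * v q ∂μ :=
    integral_add_right_eq_self (fun q ↦ w q * v q) r
  have hwv_neg : Integrable (fun q ↦ w (q - r) * v q) μ := by
    simpa using hwv_r'.comp_sub_right r
  have shift_cross : ∫ q, w q * v (q + r) ∂μ = ∫ q, w (q - r) * v q ∂μ := by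
    simpa using integral_add_right_eq_self (fun q ↦ w (q - r) * v q) r
  calc ∫ q, sndDiff r w q * v q ∂μ
      = ∫ q, (w (q + r) * v q - 2 * (w q * v q) + w (q - r) * v q) ∂μ := by
        congr with q; simp only [sndDiff]; ring
    _ = -(∫ q, w (q + r) * v (q + r) ∂μ - ∫ q, w (q + r) * v q ∂μ
          - ∫ q, w q * v (q + r) ∂μ + ∫ q, w q * v q ∂μ) := by
        rw [integral_add (by fun_prop) (by fun_prop), integral_sub (by fun_prop) (by fun_prop),
          integral_const_mul, shift_mul, shift_cross]
        ring
    _ = -∫ q, (w (q + r) * v (q + r) - w (q + r) * v q - w q * v (q + r) + w q * v q) ∂μ := by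
        rw [integral_add (by fun_prop) (by fun_prop), integral_sub (by fun_prop) (by fun_prop),
          integral_sub (by fun_prop) (by fun_prop)]
    _ = -∫ q, (w (q + r) - w q) * (v (q + r) - v q) ∂μ := by congr with q; ring

theorem integral_mul_translate_le (hw : MemLp w 2 μ) (p : G) :
    ∫ q, w q * w (q + p) ∂μ ≤ ∫ q, w q ^ 2 ∂μ := by
  have hsq := hw.integrable_sq
  have hsq_p := hsq.comp_add_right p
  have shift : ∫ q, w (q + p) ^ 2 ∂μ = ∫ q, w q ^ 2 ∂μ :=
    integral_add_right_eq_self (fun q ↦ w q ^ 2) p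
  calc ∫ q, w q * w (q + p) ∂μ ≤ ∫ q, (1 / 2 * w q ^ 2 + 1 / 2 * w (q + p) ^ 2) ∂μ :=
        integral_mono (integrable_mul_of_memLp_two hw (memLp_comp_add_right hw p)) (by fun_prop)
          fun q ↦ by nlinarith only [sq_nonneg (w q - w (q + p))]
    _ = ∫ q, w q ^ 2 ∂μ := by
        rw [integral_add (by fun_prop) (by fun_prop), integral_const_mul, integral_const_mul,
          shift]
        ring

theorem integral_sndDiff_mul_transport_nonpos (hw : MemLp w 2 μ) (hα : 0 ≤ α) (hκ : 0 ≤ κ) :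
    ∫ q, sndDiff r w q * (κ * w q - α * (w (q + p) - w q)) ∂μ ≤ 0 := by
  have hw_p := memLp_comp_add_right hw p
  have hXw := integrable_mul_of_memLp_two (memLp_sndDiff hw r) hw
  have hXw_p := integrable_mul_of_memLp_two (memLp_sndDiff hw r) hw_p
  have corr := integral_mul_translate_le ((memLp_comp_add_right hw r).sub hw) p
  have nonneg : 0 ≤ ∫ q, (w (q + r) - w q) ^ 2 ∂μ := integral_nonneg fun q ↦ sq_nonneg _
  simp only [Pi.sub_apply, add_right_comm _ p r] at corr
  calc ∫ q, sndDiff r w q * (κ * w q - α * (w (q + p) - w q)) ∂μ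
      = ∫ q, ((κ + α) * (sndDiff r w q * w q) - α * (sndDiff r w q * w (q + p))) ∂μ := by
        congr with q; ring
    _ = (κ + α) * ∫ q, sndDiff r w q * w q ∂μ - α * ∫ q, sndDiff r w q * w (q + p) ∂μ := by
        rw [integral_sub (by fun_prop) (by fun_prop), integral_const_mul, integral_const_mul]
    _ = α * ∫ q, (w (q + r) - w q) * (w (q + r + p) - w (q + p)) ∂μ
          - (κ + α) * ∫ q, (w (q + r) - w q) ^ 2 ∂μ := by
        rw [integral_sndDiff_mul hw hw r, integral_sndDiff_mul hw hw_p r]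
        simp only [← sq]
        ring
    _ ≤ 0 := by nlinarith only [mul_le_mul_of_nonneg_left corr hα, mul_nonneg hκ nonneg]

theorem sq_mul_integral_le_integral_transport_sq (hw : MemLp w 2 μ) (hα : 0 ≤ α) (hκ : 0 ≤ κ) :
    κ ^ 2 * ∫ q, w q ^ 2 ∂μ ≤ ∫ q, (κ * w q - α * (w (q + p) - w q)) ^ 2 ∂μ := by
  have hsq := hw.integrable_sq
  have hsq_p := hsq.comp_add_right p
  have hww_p := integrable_mul_of_memLp_two hw (memLp_comp_add_right hw p)
  have shift : ∫ q, w (q + p) ^ 2 ∂μ = ∫ q, w q ^ 2 ∂μ :=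
    integral_add_right_eq_self (fun q ↦ w q ^ 2) p
  have corr := mul_le_mul_of_nonneg_left (integral_mul_translate_le hw p)
    (by positivity : 0 ≤ 2 * α * (κ + α))
  calc κ ^ 2 * ∫ q, w q ^ 2 ∂μ
      ≤ (κ + α) ^ 2 * ∫ q, w q ^ 2 ∂μ + α ^ 2 * ∫ q, w (q + p) ^ 2 ∂μ
        - 2 * α * (κ + α) * ∫ q, w q * w (q + p) ∂μ := by rw [shift]; linarith
    _ = ∫ q, ((κ + α) ^ 2 * w q ^ 2 + α ^ 2 * w (q + p) ^ 2
          - 2 * α * (κ + α) * (w q * w (q + p))) ∂μ := by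
        rw [integral_sub (by fun_prop) (by fun_prop), integral_add (by fun_prop) (by fun_prop),
          integral_const_mul, integral_const_mul, integral_const_mul]
    _ = ∫ q, (κ * w q - α * (w (q + p) - w q)) ^ 2 ∂μ := by congr with q; ring

theorem memLp_diffOp (hw : MemLp w 2 μ) (hA : Measurable A) (hAM : ∀ q, |A q| ≤ M) :
    MemLp (diffOp α κ A p r w) 2 μ := by
  have hX := memLp_sndDiff hw r
  have hAX : MemLp (fun q ↦ A q * sndDiff r w q) 2 μ :=
    hX.of_le_mul (c := M) (hA.aestronglyMeasurable.mul hX.aestronglyMeasurable)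
      (.of_forall fun q ↦ by
        simpa only [norm_mul, Real.norm_eq_abs] using
          mul_le_mul_of_nonneg_right (hAM q) (abs_nonneg _))
  exact ((((memLp_comp_add_right hw p).sub hw).const_mul α).add hAX).sub (hw.const_mul κ)

/-- Dividing by the coefficient before squaring leaves a cross term without `A`, so that summation
by parts applies although `A` is merely measurable. -/
theorem mul_lpNorm_le_lpNorm_diffOp (hw : MemLp w 2 μ) (hα : 0 ≤ α) (hκ : 0 ≤ κ)
    (hA : Measurable A) (hm : 0 < m) (hAm : ∀ q, m ≤ A q) (hAM : ∀ q, A q ≤ M) :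
    κ * lpNorm w 2 μ ≤ √(M / m) * lpNorm (diffOp α κ A p r w) 2 μ := by
  have hM : 0 < M := hm.trans_le ((hAm 0).trans (hAM 0))
  have hD : MemLp (fun q ↦ κ * w q - α * (w (q + p) - w q)) 2 μ :=
    (hw.const_mul κ).sub (((memLp_comp_add_right hw p).sub hw).const_mul α)
  have hop : MemLp (diffOp α κ A p r w) 2 μ :=
    memLp_diffOp hw hA fun q ↦ abs_le.2 ⟨by linarith [hAm q], hAM q⟩
  have hDsq := hD.integrable_sq
  have hop_sq := hop.integrable_sq
  have hXD := integrable_mul_of_memLp_two (memLp_sndDiff hw r) hD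
  have transport_div_le : (∫ q, (κ * w q - α * (w (q + p) - w q)) ^ 2 ∂μ) / M
      ≤ (∫ q, diffOp α κ A p r w q ^ 2 ∂μ) / m := by
    have mono := integral_mono (hDsq.div_const M |>.sub (hXD.const_mul 2)) (hop_sq.div_const m)
      fun q ↦ transport_sq_div_sub_le_diffOp_sq_div hm (hAm q) (hAM q)
    simp only [Pi.sub_apply] at mono
    rw [integral_sub (by fun_prop) (by fun_prop), integral_div, integral_div,
      integral_const_mul] at mono
    linarith [integral_sndDiff_mul_transport_nonpos (p := p) (r := r) hw hα hκ]
  refine (sq_le_sq₀ (mul_nonneg hκ lpNorm_nonneg)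
    (mul_nonneg (Real.sqrt_nonneg _) lpNorm_nonneg)).1 ?_
  rw [mul_pow, mul_pow, lpNorm_two_sq hw.1, lpNorm_two_sq hop.1, Real.sq_sqrt (by positivity)]
  simp only [Real.norm_eq_abs, sq_abs]
  calc κ ^ 2 * ∫ q, w q ^ 2 ∂μ ≤ ∫ q, (κ * w q - α * (w (q + p) - w q)) ^ 2 ∂μ :=
        sq_mul_integral_le_integral_transport_sq hw hα hκ
    _ ≤ (∫ q, diffOp α κ A p r w q ^ 2 ∂μ) / m * M := (div_le_iff₀ hM).1 transport_div_le
    _ = M / m * ∫ q, diffOp α κ A p r w q ^ 2 ∂μ := by ring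

end DifferenceOperator

section JacobiIteration

variable {E : Type*} [AddCommGroup E] {α κ M m R : ℝ} {A G W W' : E → ℝ} {p r q : E}

/-- One step of the Jacobi iteration for the equation `diffOp α κ A p r W = -G`: the value of `W`
at the central point is expressed through its values at the neighbouring points. -/
noncomputable def jacobiStep (α κ : ℝ) (A : E → ℝ) (p r : E) (G W : E → ℝ) (q : E) : ℝ :=
  (α * W (q + p) + A q * (W (q + r) + W (q - r)) + G q) / (α + κ + 2 * A q)

theorem diffOp_add_eq_mul_jacobiStep_sub (h : α + κ + 2 * A q ≠ 0) :
    diffOp α κ A p r W q + G q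
      = (α + κ + 2 * A q) * (jacobiStep α κ A p r G W q - W q) := by
  rw [mul_sub, jacobiStep, mul_div_cancel₀ _ h, diffOp, sndDiff]
  ring

theorem le_jacobiStep_of_neg_le_diffOp (hpos : 0 < α + κ + 2 * A q)
    (hsub : -G q ≤ diffOp α κ A p r W q) : W q ≤ jacobiStep α κ A p r G W q := by
  have residual := diffOp_add_eq_mul_jacobiStep_sub (p := p) (r := r) (W := W) (G := G) hpos.ne'
  exact sub_nonneg.1 (nonneg_of_mul_nonneg_right (by linarith) hpos)

theorem jacobiStep_monotone (hα : 0 ≤ α) (hκ : 0 ≤ κ) (hA : ∀ q, 0 ≤ A q) :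
    Monotone (jacobiStep α κ A p r G) := fun W W' hWW' q ↦ by
  have := hA q
  unfold jacobiStep
  gcongr <;> exact hWW' _

theorem jacobiStep_le {C : ℝ} (hα : 0 ≤ α) (hκ : 0 < κ) (hA : 0 ≤ A q) (hWC : ∀ q, W q ≤ C)
    (hGC : G q ≤ κ * C) : jacobiStep α κ A p r G W q ≤ C := by
  rw [jacobiStep, div_le_iff₀ (by positivity)]
  calc α * W (q + p) + A q * (W (q + r) + W (q - r)) + G q
      ≤ α * C + A q * (C + C) + κ * C := by gcongr <;> exact hWC _
    _ = C * (α + κ + 2 * A q) := by ring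

theorem iterate_jacobiStep_le {C : ℝ} (hα : 0 ≤ α) (hκ : 0 < κ) (hA : ∀ q, 0 ≤ A q)
    (hWC : ∀ q, W q ≤ C) (hGC : ∀ q, G q ≤ κ * C) (n : ℕ) :
    ∀ q, (jacobiStep α κ A p r G)^[n] W q ≤ C := by
  induction n with
  | zero => exact hWC
  | succ n ih =>
    intro q
    rw [Function.iterate_succ_apply']
    exact jacobiStep_le hα hκ (hA q) ih (hGC q)

theorem jacobiStep_sub_le {c : ℝ} (hα : 0 ≤ α) (hκ : 0 < κ) (hA : 0 ≤ A q) (hAM : A q ≤ M)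
    (hc : 0 ≤ c) (hWW' : ∀ q, W' q - W q ≤ c) :
    jacobiStep α κ A p r G W' q - jacobiStep α κ A p r G W q
      ≤ (1 - κ / (α + κ + 2 * M)) * c := by
  calc jacobiStep α κ A p r G W' q - jacobiStep α κ A p r G W q
      = (α * (W' (q + p) - W (q + p))
          + A q * ((W' (q + r) - W (q + r)) + (W' (q - r) - W (q - r)))) / (α + κ + 2 * A q) := by
        simp only [jacobiStep]
        ring
    _ ≤ (α * c + A q * (c + c)) / (α + κ + 2 * A q) := by gcongr <;> exact hWW' _
    _ = (1 - κ / (α + κ + 2 * A q)) * c := by field_simp; ring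
    _ ≤ (1 - κ / (α + κ + 2 * M)) * c := by gcongr

theorem iterate_jacobiStep_succ_sub_le {c : ℝ} (hα : 0 ≤ α) (hκ : 0 < κ) (hA : ∀ q, 0 ≤ A q)
    (hAM : ∀ q, A q ≤ M) (hc : 0 ≤ c) (hW : ∀ q, jacobiStep α κ A p r G W q - W q ≤ c) (n : ℕ) :
    ∀ q, (jacobiStep α κ A p r G)^[n + 1] W q - (jacobiStep α κ A p r G)^[n] W q
      ≤ (1 - κ / (α + κ + 2 * M)) ^ n * c := by
  have hM : 0 ≤ M := (hA 0).trans (hAM 0)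
  have hθ : 0 ≤ 1 - κ / (α + κ + 2 * M) := sub_nonneg.2 ((div_le_one (by positivity)).2
    (by linarith))
  induction n with
  | zero => simpa using hW
  | succ n ih =>
    intro q
    rw [Function.iterate_succ_apply', Function.iterate_succ_apply' _ n, pow_succ', mul_assoc]
    simp only [Function.iterate_succ_apply'] at ih
    exact jacobiStep_sub_le hα hκ (hA q) (hAM q) (by positivity) ih

theorem iterate_jacobiStep_eq_zero {E : Type*} [NormedAddCommGroup E] {A G W : E → ℝ} {p r : E}
    (hGR : ∀ q, R < ‖q‖ → G q = 0) (hWR : ∀ q, R < ‖q‖ → W q = 0) (n : ℕ) :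
    ∀ q, R + n * (‖p‖ + ‖r‖) < ‖q‖ → (jacobiStep α κ A p r G)^[n] W q = 0 := by
  induction n with
  | zero => simpa using hWR
  | succ n ih =>
    intro q hq
    have hp := norm_nonneg p
    have hr := norm_nonneg r
    have hns : 0 ≤ (n : ℝ) * (‖p‖ + ‖r‖) := by positivity
    push_cast [add_mul, one_mul] at hq
    have hnp := norm_sub_le (q + p) p
    have hnr := norm_sub_le (q + r) r
    have hnr' := norm_add_le (q - r) r
    simp only [add_sub_cancel_right, sub_add_cancel] at hnp hnr hnr'
    rw [Function.iterate_succ_apply', jacobiStep, ih (q + p) (by linarith),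
      ih (q + r) (by linarith), ih (q - r) (by linarith), hGR q (by linarith)]
    simp

theorem measurable_iterate_jacobiStep [MeasurableSpace E] [MeasurableAdd E] (hA : Measurable A)
    (hG : Measurable G) (hW : Measurable W) (n : ℕ) :
    Measurable ((jacobiStep α κ A p r G)^[n] W) := by
  induction n with
  | zero => exact hW
  | succ n ih =>
    rw [Function.iterate_succ_apply']
    have hback : Measurable fun q ↦ (jacobiStep α κ A p r G)^[n] W (q - r) :=
      ih.comp (by simpa only [sub_eq_add_neg] using measurable_add_const (-r))
    exact (((ih.comp (measurable_add_const p)).const_mul α).add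
      (hA.mul ((ih.comp (measurable_add_const r)).add hback)) |>.add hG).div
      ((hA.const_mul 2).const_add _)

end JacobiIteration

section DiscreteComparison

open Filter Topology Metric

variable {E : Type*} [NormedAddCommGroup E] [NormedSpace ℝ E] [FiniteDimensional ℝ E]
  [MeasurableSpace E] [BorelSpace E] {μ : Measure E} [μ.IsAddHaarMeasure]

theorem tendsto_pow_mul_measureReal_closedBall {θ R s : ℝ} (hθ : 0 ≤ θ) (hθ1 : θ < 1)
    (hR : 0 ≤ R) (hs : 0 ≤ s) :
    Tendsto (fun n : ℕ ↦ θ ^ n * μ.real (closedBall (0 : E) (R + n * s))) atTop (𝓝 0) := by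
  set k := Module.finrank ℝ E
  have growth (n : ℕ) : μ.real (closedBall (0 : E) (R + n * s))
      = (R + n * s) ^ k * μ.real (ball (0 : E) 1) := by
    rw [measureReal_def, Measure.addHaar_closedBall μ _ (by positivity), ENNReal.toReal_mul,
      ENNReal.toReal_ofReal (by positivity), measureReal_def]
  have bound (n : ℕ) (hn : 1 ≤ n) : θ ^ n * μ.real (closedBall (0 : E) (R + n * s))
      ≤ (R + s) ^ k * μ.real (ball (0 : E) 1) * ((n : ℝ) ^ k * θ ^ n) := by
    have hn' : (1 : ℝ) ≤ n := mod_cast hn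
    calc θ ^ n * μ.real (closedBall (0 : E) (R + n * s))
        ≤ θ ^ n * ((n * (R + s)) ^ k * μ.real (ball (0 : E) 1)) := by
          rw [growth]
          gcongr
          nlinarith
      _ = (R + s) ^ k * μ.real (ball (0 : E) 1) * ((n : ℝ) ^ k * θ ^ n) := by
          rw [mul_pow]
          ring
  refine squeeze_zero' (.of_forall fun n ↦ by positivity)
    ((eventually_ge_atTop 1).mono bound) ?_
  simpa using (tendsto_pow_const_mul_const_pow_of_lt_one k hθ hθ1).const_mul
    ((R + s) ^ k * μ.real (ball (0 : E) 1))

variable {α κ m M C R : ℝ} {A G ρ : E → ℝ} {p r : E}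

theorem lpNorm_diffOp_iterate_add_le (hα : 0 ≤ α) (hκ : 0 < κ) (hA0 : ∀ q, 0 ≤ A q)
    (hAM : ∀ q, A q ≤ M) (hρ0 : ∀ q, 0 ≤ ρ q) (hρC : ∀ q, ρ q ≤ C) (hGC : ∀ q, G q ≤ κ * C)
    (hρR : ∀ q, R < ‖q‖ → ρ q = 0) (hGR : ∀ q, R < ‖q‖ → G q = 0)
    (hsub : ∀ q, -G q ≤ diffOp α κ A p r ρ q) (n : ℕ) :
    lpNorm (fun q ↦ diffOp α κ A p r ((jacobiStep α κ A p r G)^[n] ρ) q + G q) 2 μ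
      ≤ (α + κ + 2 * M) * C * √(((1 - κ / (α + κ + 2 * M)) ^ 2) ^ n
          * μ.real (closedBall (0 : E) (R + (‖p‖ + ‖r‖) + n * (‖p‖ + ‖r‖)))) := by
  set W := fun n ↦ (jacobiStep α κ A p r G)^[n] ρ
  set θ := 1 - κ / (α + κ + 2 * M)
  have hM : 0 ≤ M := (hA0 0).trans (hAM 0)
  have hC : 0 ≤ C := (hρ0 0).trans (hρC 0)
  have hθ : 0 ≤ θ := sub_nonneg.2 ((div_le_one (by positivity)).2 (by linarith))
  have hden (q) : 0 < α + κ + 2 * A q := by have := hA0 q; positivity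
  have residual (q) : diffOp α κ A p r (W n) q + G q
      = (α + κ + 2 * A q) * (W (n + 1) q - W n q) := by
    simp only [W, Function.iterate_succ_apply']
    exact diffOp_add_eq_mul_jacobiStep_sub (hden q).ne'
  have increment_nonneg (q) : 0 ≤ W (n + 1) q - W n q :=
    sub_nonneg.2 ((jacobiStep_monotone hα hκ.le hA0).monotone_iterate_of_le_map
      (fun q ↦ le_jacobiStep_of_neg_le_diffOp (hden q) (hsub q)) n.le_succ q)
  have increment_le (q) : W (n + 1) q - W n q ≤ θ ^ n * C :=
    iterate_jacobiStep_succ_sub_le hα hκ hA0 hAM hC (fun q ↦ by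
      linarith [jacobiStep_le (p := p) (r := r) hα hκ (hA0 q) hρC (hGC q), hρ0 q]) n q
  calc _ ≤ (α + κ + 2 * M) * (θ ^ n * C)
        * √(μ.real (closedBall (0 : E) (R + (‖p‖ + ‖r‖) + n * (‖p‖ + ‖r‖)))) := by
        refine lpNorm_two_le_of_bound_of_eq_zero_off measurableSet_closedBall
          measure_closedBall_lt_top.ne (by positivity) (fun q ↦ ?_) fun q hq ↦ ?_
        · rw [residual, Real.norm_of_nonneg (mul_nonneg (hden q).le (increment_nonneg q))]
          exact mul_le_mul (by linarith [hAM q]) (increment_le q) (increment_nonneg q)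
            (by positivity)
        · rw [mem_closedBall_zero_iff, not_le] at hq
          have hW_succ : W (n + 1) q = 0 :=
            iterate_jacobiStep_eq_zero hGR hρR (n + 1) q (by push_cast; linarith)
          have hW : W n q = 0 :=
            iterate_jacobiStep_eq_zero hGR hρR n q
              (by linarith [norm_nonneg p, norm_nonneg r])
          rw [residual, hW, hW_succ, sub_zero, mul_zero]
    _ = _ := by
        rw [Real.sqrt_mul (by positivity), ← pow_mul, mul_comm 2 n, pow_mul,
          Real.sqrt_sq (by positivity)]
        ring

theorem tendsto_lpNorm_diffOp_iterate_add (hα : 0 ≤ α) (hκ : 0 < κ) (hA0 : ∀ q, 0 ≤ A q)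
    (hAM : ∀ q, A q ≤ M) (hρ0 : ∀ q, 0 ≤ ρ q) (hρC : ∀ q, ρ q ≤ C) (hGC : ∀ q, G q ≤ κ * C)
    (hR : 0 ≤ R) (hρR : ∀ q, R < ‖q‖ → ρ q = 0) (hGR : ∀ q, R < ‖q‖ → G q = 0)
    (hsub : ∀ q, -G q ≤ diffOp α κ A p r ρ q) :
    Tendsto (fun n ↦ lpNorm (fun q ↦ diffOp α κ A p r ((jacobiStep α κ A p r G)^[n] ρ) q + G q)
      2 μ) atTop (𝓝 0) := by
  have hM : 0 ≤ M := (hA0 0).trans (hAM 0)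
  have hκM : κ / (α + κ + 2 * M) ≤ 1 := (div_le_one (by positivity)).2 (by linarith)
  have hθ : (1 - κ / (α + κ + 2 * M)) ^ 2 < 1 := by
    have : 0 < κ / (α + κ + 2 * M) := by positivity
    nlinarith
  have vanish := (tendsto_pow_mul_measureReal_closedBall (μ := μ)
    (sq_nonneg _) hθ (by positivity : 0 ≤ R + (‖p‖ + ‖r‖))
    (by positivity : 0 ≤ ‖p‖ + ‖r‖)).sqrt.const_mul ((α + κ + 2 * M) * C)
  rw [Real.sqrt_zero, mul_zero] at vanish
  exact squeeze_zero (fun n ↦ lpNorm_nonneg)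
    (lpNorm_diffOp_iterate_add_le hα hκ hA0 hAM hρ0 hρC hGC hρR hGR hsub) vanish

/-- The Jacobi iterates `W n` started at the subsolution `ρ` increase, so `ρ ≤ W n`, and they solve
the equation up to a residual which decays geometrically while their supports grow linearly. -/
theorem mul_lpNorm_le_of_neg_le_diffOp (hα : 0 ≤ α) (hκ : 0 < κ) (hA : Measurable A)
    (hm : 0 < m) (hAm : ∀ q, m ≤ A q) (hAM : ∀ q, A q ≤ M) (hρ : Measurable ρ)
    (hρ0 : ∀ q, 0 ≤ ρ q) (hρC : ∀ q, ρ q ≤ C) (hR : 0 ≤ R) (hρR : ∀ q, R < ‖q‖ → ρ q = 0)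
    (hG : MemLp G 2 μ) (hGm : Measurable G) (hGC : ∀ q, G q ≤ κ * C)
    (hGR : ∀ q, R < ‖q‖ → G q = 0) (hsub : ∀ q, -G q ≤ diffOp α κ A p r ρ q) :
    κ * lpNorm ρ 2 μ ≤ √(M / m) * lpNorm G 2 μ := by
  set W := fun n ↦ (jacobiStep α κ A p r G)^[n] ρ
  have hA0 (q) : 0 ≤ A q := hm.le.trans (hAm q)
  have hρW (n q) : ρ q ≤ W n q :=
    (jacobiStep_monotone hα hκ.le hA0).monotone_iterate_of_le_map
      (fun q ↦ le_jacobiStep_of_neg_le_diffOp (by have := hA0 q; positivity) (hsub q))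
      n.zero_le q
  have hW (n) : MemLp (W n) 2 μ := by
    refine memLp_of_bound_of_eq_zero_off (c := C)
      (measurable_iterate_jacobiStep hA hGm hρ n).aestronglyMeasurable
      (measurableSet_closedBall (x := (0 : E)) (ε := R + n * (‖p‖ + ‖r‖)))
      measure_closedBall_lt_top.ne (fun q ↦ ?_) (fun q hq ↦ ?_) 2
    · rw [Real.norm_of_nonneg ((hρ0 q).trans (hρW n q))]
      exact iterate_jacobiStep_le hα hκ hA0 hρC hGC n q
    · exact iterate_jacobiStep_eq_zero hGR hρR n q (by simpa using hq)
  have hopW (n) : MemLp (diffOp α κ A p r (W n)) 2 μ :=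
    memLp_diffOp (hW n) hA fun q ↦ by simpa only [abs_of_nonneg (hA0 q)] using hAM q
  have bound (n) : κ * lpNorm ρ 2 μ
      ≤ √(M / m) * (lpNorm (fun q ↦ diffOp α κ A p r (W n) q + G q) 2 μ + lpNorm G 2 μ) := calc
    κ * lpNorm ρ 2 μ ≤ κ * lpNorm (W n) 2 μ := by
        gcongr
        exact lpNorm_mono_real (hW n) fun q ↦ by
          simpa only [Real.norm_of_nonneg (hρ0 q)] using hρW n q
    _ ≤ √(M / m) * lpNorm (diffOp α κ A p r (W n)) 2 μ :=
        mul_lpNorm_le_lpNorm_diffOp (hW n) hα hκ.le hA hm hAm hAM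
    _ ≤ _ := by
        gcongr
        have triangle := lpNorm_sub_le ((hopW n).add hG) one_le_two (g := G)
        rwa [add_sub_cancel_right] at triangle
  have residual := tendsto_lpNorm_diffOp_iterate_add (μ := μ) hα hκ hA0 hAM hρ0 hρC hGC hR hρR
    hGR hsub
  simpa using ge_of_tendsto' ((residual.add_const (lpNorm G 2 μ)).const_mul √(M / m)) bound

end DiscreteComparison

section SubsolutionEstimate

open Filter Topology Metric

theorem le_of_forall_pos_le_add_mul {x y c : ℝ} (h : ∀ ε > 0, x ≤ y + ε * c) : x ≤ y := by
  have lim : Tendsto (fun ε : ℝ ↦ y + ε * c) (𝓝[>] 0) (𝓝 (y + 0 * c)) :=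
    (Continuous.tendsto (by fun_prop) 0).mono_left nhdsWithin_le_nhds
  simpa using ge_of_tendsto lim (eventually_mem_nhdsWithin.mono h)

theorem lpNorm_indicator_eq_lpNorm_restrict {α F : Type*} [MeasurableSpace α]
    [NormedAddCommGroup F] {μ : Measure α} {f : α → F} {p : ENNReal} {s : Set α}
    (hs : MeasurableSet s) (hf : AEStronglyMeasurable f μ) :
    lpNorm (s.indicator f) p μ = lpNorm f p (μ.restrict s) := by
  rw [← toReal_eLpNorm (hf.indicator hs), ← toReal_eLpNorm hf.restrict,
    eLpNorm_indicator_eq_eLpNorm_restrict hs]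

theorem diffOp_indicator_nonneg_of_indicator_eq_zero {G : Type*}
    [AddCommGroup G] {ρ A : G → ℝ} {P : Set G} {α κ : ℝ} {p r q : G} (hα : 0 ≤ α)
    (hA : 0 ≤ A q) (hρ : ∀ q, 0 ≤ ρ q) (hq : P.indicator ρ q = 0) :
    0 ≤ diffOp α κ A p r (P.indicator ρ) q := by
  have hind (q) : 0 ≤ P.indicator ρ q := Set.indicator_nonneg (fun q _ ↦ hρ q) q
  have hfwd := hind (q + p)
  have hsnd : 0 ≤ sndDiff r (P.indicator ρ) q := by
    rw [sndDiff, hq]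
    linarith [hind (q + r), hind (q - r)]
  rw [diffOp, hq, sub_zero, mul_zero, sub_zero]
  positivity

variable {E : Type*} [NormedAddCommGroup E] [NormedSpace ℝ E]

/-- The set `P` is mapped into itself by the translations `q ↦ q + s • e` with `s ≥ 0`. -/
def IsForwardClosed (P : Set E) (e : E) : Prop := ∀ q ∈ P, ∀ s : ℝ, 0 ≤ s → q + s • e ∈ P

/-- Measurable sets, such as a half-space `{t > 0}`, that are carried into themselves by forward
translations along the time direction `e₁` and by all translations along the direction `e₂`. -/
structure IsParabolicDomain [MeasurableSpace E] (P : Set E) (e₁ e₂ : E) : Prop where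
  measurableSet : MeasurableSet P
  time : IsForwardClosed P e₁
  space : IsForwardClosed P e₂
  space_neg : IsForwardClosed P (-e₂)

namespace IsTestFunction

variable {ρ : E → ℝ}

theorem exists_fwdDiff_eq_mul_dirDeriv (hρ : IsTestFunction ρ) (q e : E) {h : ℝ} (hh : 0 < h) :
    ∃ s ∈ Set.Ioo 0 h, ρ (q + h • e) - ρ q = h * dirDeriv e ρ (q + s • e) := by
  obtain ⟨s, hs, hslope⟩ := exists_hasDerivAt_eq_slope (fun s : ℝ ↦ ρ (q + s • e)) _ hh
    (fun s _ ↦ (hρ.hasDerivAt_line q e s).continuousAt.continuousWithinAt)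
    (fun s _ ↦ hρ.hasDerivAt_line q e s)
  refine ⟨s, hs, ?_⟩
  rw [hslope, sub_zero, mul_div_cancel₀ _ hh.ne', zero_smul, add_zero]

theorem exists_sndDiff_eq_mul_dirDeriv (hρ : IsTestFunction ρ) (q e : E) {h : ℝ} (hh : 0 < h) :
    ∃ s, |s| ≤ h ∧ sndDiff (h • e) ρ q = h ^ 2 * dirDeriv e (dirDeriv e ρ) (q + s • e) := by
  have hderiv (s : ℝ) : HasDerivAt (fun s : ℝ ↦ ρ (q + s • e) + ρ (q + (-s) • e))
      (dirDeriv e ρ (q + s • e) - dirDeriv e ρ (q + (-s) • e)) s := by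
    have hneg : HasDerivAt (fun s : ℝ ↦ ρ (q + (-s) • e)) (-dirDeriv e ρ (q + (-s) • e)) s := by
      simpa [Function.comp_def] using
        (hρ.hasDerivAt_line q e (-s)).scomp s (hasDerivAt_neg s)
    simpa only [sub_eq_add_neg] using (hρ.hasDerivAt_line q e s).fun_add hneg
  obtain ⟨t, ht, hratio⟩ := exists_ratio_hasDerivAt_eq_ratio_slope _ _ hh
    (fun s _ ↦ (hderiv s).continuousAt.continuousWithinAt) (fun s _ ↦ hderiv s)
    (fun s : ℝ ↦ s ^ 2) (fun s ↦ 2 * s) (by fun_prop)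
    (fun s _ ↦ by simpa using hasDerivAt_pow 2 s)
  have ht2 : 0 < 2 * t := by linarith [ht.1]
  obtain ⟨s, hs, hincr⟩ := (hρ.dirDeriv e).exists_fwdDiff_eq_mul_dirDeriv (q + (-t) • e) e ht2
  refine ⟨-t + s, abs_le.2 ⟨by linarith [ht.2, hs.1], by linarith [ht.2, hs.2]⟩, ?_⟩
  have hend : q + (-t) • e + (2 * t) • e = q + t • e := by module
  have hmid : q + (-t) • e + s • e = q + (-t + s) • e := by module
  rw [hend, hmid] at hincr
  have hsnd : sndDiff (h • e) ρ q
      = ρ (q + h • e) + ρ (q + (-h) • e) - (ρ (q + (0 : ℝ) • e) + ρ (q + (-0 : ℝ) • e)) := by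
    simp only [sndDiff, neg_smul, ← sub_eq_add_neg, zero_smul, neg_zero, add_zero]
    ring
  rw [hincr, ← hsnd] at hratio
  refine mul_right_cancel₀ ht2.ne' ?_
  linear_combination -hratio

theorem exists_abs_sub_le_of_abs_le (hρ : IsTestFunction ρ) (e : E) {ε : ℝ} (hε : 0 < ε) :
    ∃ η > (0 : ℝ), ∀ s, |s| ≤ η → ∀ q, |ρ (q + s • e) - ρ q| ≤ ε := by
  obtain ⟨η, hη, hclose⟩ := Metric.uniformContinuous_iff.1
    (hρ.hasCompactSupport.uniformContinuous_of_continuous hρ.continuous) ε hε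
  refine ⟨η / (‖e‖ + 1), by positivity, fun s hs q ↦ ?_⟩
  refine (hclose (a := q + s • e) (b := q) ?_).le
  rw [dist_self_add_left, norm_smul, Real.norm_eq_abs]
  calc |s| * ‖e‖ ≤ η / (‖e‖ + 1) * ‖e‖ := by gcongr
    _ < η / (‖e‖ + 1) * (‖e‖ + 1) := by gcongr; linarith
    _ = η := by field_simp

theorem exists_abs_diffOp_sub_le (hρ : IsTestFunction ρ) (e₁ e₂ : E) (κ : ℝ) {M ε : ℝ}
    (hM : 0 ≤ M) (hε : 0 < ε) :
    ∃ h > (0 : ℝ), ∀ (a : E → ℝ) q, |a q| ≤ M →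
      |diffOp h⁻¹ κ (fun q ↦ a q / h ^ 2) (h • e₁) (h • e₂) ρ q
        - (dirDeriv e₁ ρ q + a q * dirDeriv e₂ (dirDeriv e₂ ρ) q - κ * ρ q)| ≤ ε := by
  obtain ⟨η₁, hη₁, hclose₁⟩ := (hρ.dirDeriv e₁).exists_abs_sub_le_of_abs_le e₁ (half_pos hε)
  obtain ⟨η₂, hη₂, hclose₂⟩ := ((hρ.dirDeriv e₂).dirDeriv e₂).exists_abs_sub_le_of_abs_le e₂
    (show 0 < ε / (2 * (M + 1)) by positivity)
  have hh : 0 < min η₁ η₂ := lt_min hη₁ hη₂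
  refine ⟨min η₁ η₂, hh, fun a q haM ↦ ?_⟩
  set h := min η₁ η₂
  obtain ⟨s₁, hs₁, hfwd⟩ := hρ.exists_fwdDiff_eq_mul_dirDeriv q e₁ hh
  obtain ⟨s₂, hs₂, hsnd⟩ := hρ.exists_sndDiff_eq_mul_dirDeriv q e₂ hh
  have hs₁' : |s₁| ≤ h := by rw [abs_of_pos hs₁.1]; exact hs₁.2.le
  have err₁ := hclose₁ s₁ (hs₁'.trans (min_le_left _ _)) q
  have err₂ := hclose₂ s₂ (hs₂.trans (min_le_right _ _)) q
  calc _ = |(dirDeriv e₁ ρ (q + s₁ • e₁) - dirDeriv e₁ ρ q)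
        + a q * (dirDeriv e₂ (dirDeriv e₂ ρ) (q + s₂ • e₂) - dirDeriv e₂ (dirDeriv e₂ ρ) q)| := by
        rw [diffOp, hfwd, hsnd]
        congr 1
        field_simp
        ring
    _ ≤ ε / 2 + M * (ε / (2 * (M + 1))) := by
        refine (abs_add_le _ _).trans (add_le_add err₁ ?_)
        rw [abs_mul]
        gcongr
    _ ≤ ε / 2 + (M + 1) * (ε / (2 * (M + 1))) := by gcongr; linarith
    _ = ε := by field_simp; ring

end IsTestFunction

theorem diffOp_indicator_eq {ρ A : E → ℝ} {P : Set E} {α κ h : ℝ} {e₁ e₂ q : E} (hh : 0 ≤ h)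
    (hP₁ : IsForwardClosed P e₁) (hP₂ : IsForwardClosed P e₂) (hP₂' : IsForwardClosed P (-e₂))
    (hq : q ∈ P) :
    diffOp α κ A (h • e₁) (h • e₂) (P.indicator ρ) q = diffOp α κ A (h • e₁) (h • e₂) ρ q := by
  have hback : q - h • e₂ ∈ P := by simpa [sub_eq_add_neg] using hP₂' q hq h hh
  simp only [diffOp, sndDiff, Set.indicator_of_mem, hq, hP₁ q hq h hh, hP₂ q hq h hh, hback]

variable {P : Set E} {e₁ e₂ : E} {a : E → ℝ}

theorem neg_indicator_le_diffOp_indicator {ρ g : E → ℝ} {κ h R ε : ℝ} (hρ0 : ∀ q, 0 ≤ ρ q)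
    (hP₁ : IsForwardClosed P e₁) (hP₂ : IsForwardClosed P e₂) (hP₂' : IsForwardClosed P (-e₂))
    (ha0 : ∀ q, 0 ≤ a q) (hh : 0 < h) (hρR : ∀ q, R < ‖q‖ → ρ q = 0)
    (hsub : ∀ q ∈ P, ‖q‖ ≤ R →
      -g q ≤ dirDeriv e₁ ρ q + a q * dirDeriv e₂ (dirDeriv e₂ ρ) q - κ * ρ q)
    (hcons : ∀ q, |diffOp h⁻¹ κ (fun q ↦ a q / h ^ 2) (h • e₁) (h • e₂) ρ q
      - (dirDeriv e₁ ρ q + a q * dirDeriv e₂ (dirDeriv e₂ ρ) q - κ * ρ q)| ≤ ε) (q : E) :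
    -(P ∩ closedBall 0 R).indicator (fun q ↦ g q + ε) q
      ≤ diffOp h⁻¹ κ (fun q ↦ a q / h ^ 2) (h • e₁) (h • e₂) (P.indicator ρ) q := by
  by_cases hq : q ∈ P ∩ closedBall 0 R
  · rw [diffOp_indicator_eq hh.le hP₁ hP₂ hP₂' hq.1, Set.indicator_of_mem hq]
    linarith [hsub q hq.1 (by simpa using hq.2), neg_le_of_abs_le (hcons q)]
  · rw [Set.indicator_of_notMem hq, neg_zero]
    have := ha0 q
    refine diffOp_indicator_nonneg_of_indicator_eq_zero (by positivity) (by positivity) hρ0 ?_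
    by_cases hqP : q ∈ P
    · simp [hρR q (by simpa [hqP] using hq)]
    · simp [hqP]

variable [FiniteDimensional ℝ E] [MeasurableSpace E] [BorelSpace E] {μ : Measure E}
  [μ.IsAddHaarMeasure] {m M κ : ℝ}

theorem lpNorm_indicator_inter_add_le {g : E → ℝ} {C R ε : ℝ} (hP : MeasurableSet P)
    (hg : Measurable g) (hgC : ∀ q, |g q| ≤ C) (hgR : ∀ q, R < ‖q‖ → g q = 0) (hε : 0 ≤ ε) :
    lpNorm ((P ∩ closedBall 0 R).indicator fun q ↦ g q + ε) 2 μ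
      ≤ lpNorm g 2 (μ.restrict P) + ε * √(μ.real (closedBall 0 R)) := by
  have hgLp : MemLp g 2 μ := memLp_of_bound_of_eq_zero_off hg.aestronglyMeasurable
    (measurableSet_closedBall (x := 0)) measure_closedBall_lt_top.ne hgC
    (fun q hq ↦ hgR q (by simpa using hq)) 2
  rw [← lpNorm_indicator_eq_lpNorm_restrict hP hg.aestronglyMeasurable]
  refine lpNorm_two_le_add_of_norm_le_add (hgLp.indicator hP) measurableSet_closedBall
    measure_closedBall_lt_top.ne hε (fun q _ ↦ ?_) fun q hq ↦ ?_
  · by_cases hq : q ∈ P ∩ closedBall 0 R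
    · rw [Set.indicator_of_mem hq, Set.indicator_of_mem hq.1]
      exact (norm_add_le _ _).trans_eq (by rw [Real.norm_of_nonneg hε])
    · rw [Set.indicator_of_notMem hq, norm_zero]
      positivity
  · exact Set.indicator_of_notMem (fun h ↦ hq h.2) _

theorem IsTestFunction.mul_lpNorm_le_of_neg_le {ρ g : E → ℝ} {C R : ℝ} (hρ : IsTestFunction ρ)
    (hρ0 : ∀ q, 0 ≤ ρ q) (hP : IsParabolicDomain P e₁ e₂) (ha : Measurable a) (hm : 0 < m)
    (ham : ∀ q, m ≤ a q) (haM : ∀ q, a q ≤ M) (hκ : 0 < κ) (hg : Measurable g)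
    (hgC : ∀ q, |g q| ≤ C) (hR : 0 ≤ R) (hgR : ∀ q, R < ‖q‖ → g q = 0)
    (hρR : ∀ q, R < ‖q‖ → ρ q = 0)
    (hsub : ∀ q ∈ P, ‖q‖ ≤ R →
      -g q ≤ dirDeriv e₁ ρ q + a q * dirDeriv e₂ (dirDeriv e₂ ρ) q - κ * ρ q) :
    κ * lpNorm ρ 2 (μ.restrict P) ≤ √(M / m) * lpNorm g 2 (μ.restrict P) := by
  have ha0 (q) : 0 ≤ a q := hm.le.trans (ham q)
  have hM : 0 ≤ M := (ha0 0).trans (haM 0)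
  obtain ⟨Cρ, hCρ⟩ := hρ.exists_norm_le
  refine le_of_forall_pos_le_add_mul (c := √(M / m) * √(μ.real (closedBall 0 R))) fun ε hε ↦ ?_
  obtain ⟨h, hh, hcons⟩ := hρ.exists_abs_diffOp_sub_le e₁ e₂ κ hM hε
  set G := (P ∩ closedBall 0 R).indicator fun q ↦ g q + ε
  have hGm : Measurable G :=
    (hg.add_const ε).indicator (hP.measurableSet.inter measurableSet_closedBall)
  have hGC (q) : ‖G q‖ ≤ C + ε := (norm_indicator_le_norm_self _ q).trans
    ((abs_add_le _ _).trans (add_le_add (hgC q) (abs_of_pos hε).le))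
  have hGR (q) (hq : R < ‖q‖) : G q = 0 := Set.indicator_of_notMem (by simp [hq]) _
  have hGLp : MemLp G 2 μ := memLp_of_bound_of_eq_zero_off hGm.aestronglyMeasurable
    (measurableSet_closedBall (x := 0)) measure_closedBall_lt_top.ne hGC
    (fun q hq ↦ hGR q (by simpa using hq)) 2
  have hbound := mul_lpNorm_le_of_neg_le_diffOp (μ := μ) (C := max Cρ ((C + ε) / κ))
    (m := m / h ^ 2) (M := M / h ^ 2) (inv_nonneg.2 hh.le) hκ (ha.div_const _) (by positivity)
    (fun q ↦ by gcongr; exact ham q) (fun q ↦ by gcongr; exact haM q)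
    (hρ.continuous.measurable.indicator hP.measurableSet) (Set.indicator_nonneg fun q _ ↦ hρ0 q)
    (fun q ↦ (le_abs_self _).trans <| (norm_indicator_le_norm_self ρ q).trans <|
      (hCρ q).trans (le_max_left _ _)) hR
    (fun q hq ↦ by simp [Set.indicator, hρR q hq]) hGLp hGm
    (fun q ↦ ((le_abs_self _).trans (hGC q)).trans <|
      (div_le_iff₀' hκ).1 (le_max_right _ _)) hGR
    (neg_indicator_le_diffOp_indicator hρ0 hP.time hP.space hP.space_neg ha0 hh hρR hsub
      fun q ↦ hcons a q ((abs_of_nonneg (ha0 q)).trans_le (haM q)))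
  rw [div_div_div_cancel_right₀ (by positivity),
    lpNorm_indicator_eq_lpNorm_restrict hP.measurableSet hρ.continuous.aestronglyMeasurable]
    at hbound
  calc κ * lpNorm ρ 2 (μ.restrict P) ≤ √(M / m) * lpNorm G 2 μ := hbound
    _ ≤ √(M / m) * (lpNorm g 2 (μ.restrict P) + ε * √(μ.real (closedBall 0 R))) := by
        gcongr
        exact lpNorm_indicator_inter_add_le hP.measurableSet hg hgC hgR hε.le
    _ = _ := by ring

end SubsolutionEstimate

section KatoInequality

open scoped ContDiff RealInnerProductSpace
open Complex (I)
open Metric (closedBall)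

/-- The smooth approximation `√(‖v‖² + ε²) - ε` of the norm of `v`. It vanishes where `v` does. -/
noncomputable def smoothNorm {α H : Type*} [NormedAddCommGroup H] (ε : ℝ) (v : α → H) (q : α) : ℝ :=
  √(‖v q‖ ^ 2 + ε ^ 2) - ε

section

variable {α H : Type*} [NormedAddCommGroup H] (ε : ℝ) (v : α → H) (q : α)

theorem smoothNorm_add_sq : (smoothNorm ε v q + ε) ^ 2 = ‖v q‖ ^ 2 + ε ^ 2 := by
  rw [smoothNorm, sub_add_cancel, Real.sq_sqrt (by positivity)]

theorem smoothNorm_nonneg : 0 ≤ smoothNorm ε v q :=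
  sub_nonneg.2 (Real.le_sqrt_of_sq_le (by nlinarith [sq_nonneg ‖v q‖]))

theorem norm_le_smoothNorm_add : ‖v q‖ ≤ smoothNorm ε v q + ε := by
  rw [smoothNorm, sub_add_cancel]
  exact Real.le_sqrt_of_sq_le (by nlinarith [sq_nonneg ε])

end

variable {E H : Type*} [NormedAddCommGroup E] [NormedSpace ℝ E] [NormedAddCommGroup H]
  [InnerProductSpace ℝ H]

namespace IsTestFunction

variable {v : E → H} {ε : ℝ}

protected theorem smoothNorm (hv : IsTestFunction v) (hε : 0 < ε) :
    IsTestFunction (smoothNorm ε v) where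
  contDiff := (((hv.contDiff.norm_sq ℝ).add contDiff_const).sqrt fun q ↦ by positivity).sub
    contDiff_const
  hasCompactSupport := hv.hasCompactSupport.mono fun q hq hvq ↦ hq <| by
    simp [smoothNorm, hvq, Real.sqrt_sq hε.le]

theorem mul_dirDeriv_smoothNorm (hv : IsTestFunction v) (hε : 0 < ε) (e q : E) :
    (smoothNorm ε v q + ε) * dirDeriv e (smoothNorm ε v) q
      = ⟪v q, dirDeriv e v q⟫ := by
  have hsq := ((hv.smoothNorm hε).hasFDerivAt q).add_const ε |>.pow 2
  have hnorm := ((hv.hasFDerivAt q).norm_sq.add_const (ε ^ 2))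
  rw [funext (smoothNorm_add_sq ε v)] at hsq
  have heq := DFunLike.congr_fun (hsq.unique hnorm) e
  simp only [_root_.smul_apply, ContinuousLinearMap.comp_apply, innerSL_apply_apply,
    smul_eq_mul, nsmul_eq_mul, Nat.cast_ofNat, pow_one, Nat.add_one_sub_one, mul_assoc] at heq
  exact mul_left_cancel₀ two_ne_zero heq

theorem mul_dirDeriv_dirDeriv_smoothNorm (hv : IsTestFunction v) (hε : 0 < ε) (e q : E) :
    (smoothNorm ε v q + ε) * dirDeriv e (dirDeriv e (smoothNorm ε v)) q
        + dirDeriv e (smoothNorm ε v) q ^ 2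
      = ‖dirDeriv e v q‖ ^ 2 + ⟪v q, dirDeriv e (dirDeriv e v) q⟫ := by
  have hs := hv.smoothNorm hε
  have hmul := ((hs.hasFDerivAt q).add_const ε).fun_mul ((hs.dirDeriv e).hasFDerivAt q)
  have hinner := (hv.hasFDerivAt q).inner ℝ ((hv.dirDeriv e).hasFDerivAt q)
  rw [funext (hv.mul_dirDeriv_smoothNorm hε e)] at hmul
  rw [sq, ← real_inner_self_eq_norm_sq, add_comm ⟪dirDeriv e v q, _⟫]
  exact DFunLike.congr_fun (hmul.unique hinner) e

end IsTestFunction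

theorem sq_norm_mul_sq_norm_eq_inner_sq_add_inner_I_mul_sq (v w : ℂ) :
    ‖v‖ ^ 2 * ‖w‖ ^ 2 = ⟪v, w⟫ ^ 2 + ⟪v, I * w⟫ ^ 2 := by
  simp only [Complex.inner, Complex.sq_norm, Complex.normSq_apply]
  simp
  ring

theorem quadratic_nonneg_of_sq_le_mul {a b c : ℝ} (ha : 0 < a) (h : b ^ 2 ≤ a * c) (x y : ℝ) :
    0 ≤ a * x ^ 2 - 2 * b * (y * x) + c * y ^ 2 := by
  refine nonneg_of_mul_nonneg_right ?_ ha
  nlinarith [sq_nonneg (a * x - b * y), mul_le_mul_of_nonneg_right h (sq_nonneg y)]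

theorem neg_norm_sub_le_of_sq_le {v v₁ v₂ v₂₂ : ℂ} {a β γ κ ε s s₁ s₂ s₂₂ : ℝ} (ha : 0 < a)
    (hκ : 0 ≤ κ) (hε : 0 < ε) (hβ : β ^ 2 ≤ a * (γ - κ)) (hs : ε ≤ s)
    (hsq : s ^ 2 = ‖v‖ ^ 2 + ε ^ 2) (hs₁ : s * s₁ = ⟪v, v₁⟫) (hs₂ : s * s₂ = ⟪v, v₂⟫)
    (hs₂₂ : s * s₂₂ + s₂ ^ 2 = ‖v₂‖ ^ 2 + ⟪v, v₂₂⟫) :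
    -(‖v₁ + a • v₂₂ + (2 * β) • (I * v₂) - γ • v‖ + γ * ε)
      ≤ s₁ + a * s₂₂ - κ * (s - ε) := by
  have hs0 : 0 < s := hε.trans_le hs
  set f := v₁ + a • v₂₂ + (2 * β) • (I * v₂) - γ • v
  have hvs : ‖v‖ ≤ s := (sq_le_sq₀ (norm_nonneg v) hs0.le).1 (by nlinarith [sq_nonneg ε])
  have hinner : ⟪v, v₁⟫ + a * ⟪v, v₂₂⟫ = ⟪v, f⟫ - 2 * β * ⟪v, I * v₂⟫ + γ * ‖v‖ ^ 2 := by
    simp only [f, inner_sub_right, inner_add_right, real_inner_smul_right,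
      real_inner_self_eq_norm_sq]
    ring
  have hγ : 0 ≤ γ - κ := by
    by_contra! h
    nlinarith [sq_nonneg β]
  have hf : -(s * ‖f‖) ≤ ⟪v, f⟫ := by
    have := neg_le_of_abs_le (abs_real_inner_le_norm v f)
    nlinarith [norm_nonneg f]
  set y := ⟪v, I * v₂⟫ / s
  have hy : s * y = ⟪v, I * v₂⟫ := mul_div_cancel₀ _ hs0.ne'
  have hsplit : s₂ ^ 2 + y ^ 2 ≤ ‖v₂‖ ^ 2 := by
    refine le_of_mul_le_mul_left ?_ (sq_pos_of_pos hs0)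
    calc s ^ 2 * (s₂ ^ 2 + y ^ 2) = ‖v‖ ^ 2 * ‖v₂‖ ^ 2 := by
          rw [sq_norm_mul_sq_norm_eq_inner_sq_add_inner_I_mul_sq, ← hs₂, ← hy]; ring
      _ ≤ s ^ 2 * ‖v₂‖ ^ 2 := by gcongr
  have hdisc : 0 ≤ a * y ^ 2 - 2 * β * (s * y) + (γ - κ) * s ^ 2 :=
    quadratic_nonneg_of_sq_le_mul ha hβ y s
  refine le_of_mul_le_mul_left ?_ hs0
  calc s * -(‖f‖ + γ * ε) ≤ -(s * ‖f‖) - γ * ε ^ 2 := by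
        have : γ * ε * ε ≤ γ * ε * s :=
          mul_le_mul_of_nonneg_left hs (mul_nonneg (by linarith) hε.le)
        linarith
    _ ≤ ⟪v, f⟫ + (a * y ^ 2 - 2 * β * (s * y) + (γ - κ) * s ^ 2) - γ * ε ^ 2 + κ * (ε * s) := by
        have : 0 ≤ κ * (ε * s) := by positivity
        linarith
    _ ≤ ⟪v, v₁⟫ + a * ⟪v, v₂₂⟫ + a * (‖v₂‖ ^ 2 - s₂ ^ 2) - κ * (s * (s - ε)) := by
        rw [hinner, ← hy]
        nlinarith
    _ = s * (s₁ + a * s₂₂ - κ * (s - ε)) := by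
        linear_combination -hs₁ - a * hs₂₂

/-- The operator `∂₁ + a ∂₂² + 2iβ ∂₂ - γ`, to which a second order parabolic operator reduces by
a Fourier transform in the variables on which its coefficients do not depend. -/
noncomputable def symbolOp (e₁ e₂ : E) (a β γ : E → ℝ) (v : E → ℂ) (q : E) : ℂ :=
  dirDeriv e₁ v q + a q • dirDeriv e₂ (dirDeriv e₂ v) q + (2 * β q) • (I * dirDeriv e₂ v q)
    - γ q • v q

variable {e₁ e₂ : E} {a β γ : E → ℝ} {v : E → ℂ} {m M Γ κ : ℝ}

theorem IsTestFunction.exists_symbolOp_eq_zero_of_lt_norm (hv : IsTestFunction v) :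
    ∃ R, 0 ≤ R ∧ ∀ q, R < ‖q‖ → v q = 0 ∧ symbolOp e₁ e₂ a β γ v q = 0 := by
  obtain ⟨R₀, hR₀⟩ := hv.exists_eq_zero_of_lt_norm
  obtain ⟨R₁, hR₁⟩ := (hv.dirDeriv e₁).exists_eq_zero_of_lt_norm
  obtain ⟨R₂, hR₂⟩ := (hv.dirDeriv e₂).exists_eq_zero_of_lt_norm
  obtain ⟨R₂₂, hR₂₂⟩ := ((hv.dirDeriv e₂).dirDeriv e₂).exists_eq_zero_of_lt_norm
  refine ⟨max (max 0 R₀) (max R₁ (max R₂ R₂₂)), by simp, fun q hq ↦ ?_⟩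
  simp only [max_lt_iff] at hq
  simp [symbolOp, hR₀ q hq.1.2, hR₁ q hq.2.1, hR₂ q hq.2.2.1, hR₂₂ q hq.2.2.2]

theorem IsTestFunction.exists_norm_symbolOp_le (hv : IsTestFunction v) (e₁ e₂ : E) (A B Γ : ℝ) :
    ∃ C, ∀ a β γ : E → ℝ, (∀ q, |a q| ≤ A) → (∀ q, |β q| ≤ B) → (∀ q, |γ q| ≤ Γ) →
      ∀ q, ‖symbolOp e₁ e₂ a β γ v q‖ ≤ C := by
  obtain ⟨C₀, hC₀⟩ := hv.exists_norm_le
  obtain ⟨C₁, hC₁⟩ := (hv.dirDeriv e₁).exists_norm_le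
  obtain ⟨C₂, hC₂⟩ := (hv.dirDeriv e₂).exists_norm_le
  obtain ⟨C₂₂, hC₂₂⟩ := ((hv.dirDeriv e₂).dirDeriv e₂).exists_norm_le
  refine ⟨C₁ + A * C₂₂ + 2 * B * C₂ + Γ * C₀, fun a β γ ha hβ hγ q ↦ ?_⟩
  have hA : 0 ≤ A := (abs_nonneg _).trans (ha q)
  have hB : 0 ≤ B := (abs_nonneg _).trans (hβ q)
  have hΓ : 0 ≤ Γ := (abs_nonneg _).trans (hγ q)
  refine (norm_sub_le _ _).trans (add_le_add (norm_add₃_le.trans ?_) ?_)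
  · simp only [norm_smul, norm_mul, Complex.norm_I, one_mul, Real.norm_eq_abs, abs_two]
    gcongr
    exacts [hC₁ q, ha q, hC₂₂ q, hβ q, hC₂ q]
  · rw [norm_smul, Real.norm_eq_abs]
    gcongr
    exacts [hγ q, hC₀ q]

theorem IsTestFunction.neg_norm_symbolOp_sub_le {q : E} {ε : ℝ} (hv : IsTestFunction v)
    (ha : 0 < a q) (hκ : 0 ≤ κ) (hβγ : β q ^ 2 ≤ a q * (γ q - κ)) (hε : 0 < ε) :
    -(‖symbolOp e₁ e₂ a β γ v q‖ + γ q * ε) ≤ dirDeriv e₁ (smoothNorm ε v) q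
      + a q * dirDeriv e₂ (dirDeriv e₂ (smoothNorm ε v)) q - κ * smoothNorm ε v q := by
  simpa only [symbolOp, add_sub_cancel_right] using neg_norm_sub_le_of_sq_le ha hκ hε hβγ
    (le_add_of_nonneg_left (smoothNorm_nonneg ε v q)) (smoothNorm_add_sq ε v q)
    (hv.mul_dirDeriv_smoothNorm hε e₁ q) (hv.mul_dirDeriv_smoothNorm hε e₂ q)
    (hv.mul_dirDeriv_dirDeriv_smoothNorm hε e₂ q)

variable [MeasurableSpace E] [BorelSpace E]

theorem IsTestFunction.measurable_symbolOp (hv : IsTestFunction v) (ha : Measurable a)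
    (hβ : Measurable β) (hγ : Measurable γ) : Measurable (symbolOp e₁ e₂ a β γ v) := by
  have h₀ := hv.continuous.measurable
  have h₁ := (hv.dirDeriv e₁).continuous.measurable
  have h₂ := (hv.dirDeriv e₂).continuous.measurable
  have h₂₂ := ((hv.dirDeriv e₂).dirDeriv e₂).continuous.measurable
  unfold symbolOp
  fun_prop

variable [FiniteDimensional ℝ E] {μ : Measure E} [μ.IsAddHaarMeasure] {P : Set E}

theorem IsTestFunction.mul_lpNorm_smoothNorm_le {C R ε : ℝ} (hv : IsTestFunction v)
    (hP : IsParabolicDomain P e₁ e₂) (ha : Measurable a) (hβ : Measurable β)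
    (hγ : Measurable γ) (hm : 0 < m) (ham : ∀ q, m ≤ a q) (haM : ∀ q, a q ≤ M) (hκ : 0 < κ)
    (hβγ : ∀ q, β q ^ 2 ≤ a q * (γ q - κ)) (hγΓ : ∀ q, γ q ≤ Γ) (hΓ : 0 ≤ Γ) (hε : 0 < ε)
    (hR : 0 ≤ R) (hvR : ∀ q, R < ‖q‖ → v q = 0)
    (hfR : ∀ q, R < ‖q‖ → symbolOp e₁ e₂ a β γ v q = 0)
    (hfC : ∀ q, ‖symbolOp e₁ e₂ a β γ v q‖ ≤ C) :
    κ * lpNorm (smoothNorm ε v) 2 (μ.restrict P)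
      ≤ √(M / m) * (lpNorm (symbolOp e₁ e₂ a β γ v) 2 (μ.restrict P)
        + Γ * ε * √((μ.restrict P).real (closedBall 0 R))) := by
  set f := symbolOp e₁ e₂ a β γ v
  have hfm : Measurable f := hv.measurable_symbolOp ha hβ hγ
  have hball : μ.restrict P (closedBall 0 R) ≠ ⊤ :=
    ((Measure.restrict_apply_le P _).trans_lt measure_closedBall_lt_top).ne
  have hΓε : 0 ≤ Γ * ε := by positivity
  set g : E → ℝ := (closedBall 0 R).indicator fun q ↦ ‖f q‖ + Γ * ε
  have hgf (q) (hq : q ∈ closedBall 0 R) : ‖g q‖ = ‖f q‖ + Γ * ε := by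
    rw [show g q = _ from Set.indicator_of_mem hq _, Real.norm_of_nonneg (by positivity)]
  have hg0 (q) (hq : q ∉ closedBall 0 R) : g q = 0 := Set.indicator_of_notMem hq _
  have hfLp : MemLp f 2 (μ.restrict P) := memLp_of_bound_of_eq_zero_off hfm.aestronglyMeasurable
    measurableSet_closedBall hball hfC (fun q hq ↦ hfR q (by simpa using hq)) 2
  calc κ * lpNorm (smoothNorm ε v) 2 (μ.restrict P)
      ≤ √(M / m) * lpNorm g 2 (μ.restrict P) := by
        refine (hv.smoothNorm hε).mul_lpNorm_le_of_neg_le (C := C + Γ * ε) (R := R)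
          (smoothNorm_nonneg ε v) hP ha hm ham haM hκ
          ((hfm.norm.add_const _).indicator measurableSet_closedBall) (fun q ↦ ?_) hR
          (fun q hq ↦ hg0 q (by simpa using hq))
          (fun q hq ↦ by simp [smoothNorm, hvR q hq, Real.sqrt_sq hε.le]) fun q _ hq ↦ ?_
        · by_cases hq : q ∈ closedBall 0 R
          · exact (hgf q hq).trans_le (by gcongr; exact hfC q)
          · simpa [hg0 q hq] using add_nonneg ((norm_nonneg _).trans (hfC 0)) hΓε
        · refine le_trans ?_ (hv.neg_norm_symbolOp_sub_le (hm.trans_le (ham q)) hκ.le (hβγ q) hε)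
          rw [show g q = _ from Set.indicator_of_mem (by simpa using hq) _]
          gcongr
          exact hγΓ q
    _ ≤ √(M / m) * (lpNorm f 2 (μ.restrict P)
          + Γ * ε * √((μ.restrict P).real (closedBall 0 R))) := by
        gcongr
        exact lpNorm_two_le_add_of_norm_le_add hfLp measurableSet_closedBall hball hΓε
          (fun q hq ↦ (hgf q hq).le) hg0

theorem IsTestFunction.mul_lpNorm_le_lpNorm_symbolOp (hv : IsTestFunction v)
    (hP : IsParabolicDomain P e₁ e₂) (ha : Measurable a) (hβ : Measurable β)
    (hγ : Measurable γ) (hm : 0 < m) (ham : ∀ q, m ≤ a q) (haM : ∀ q, a q ≤ M) (hκ : 0 < κ)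
    (hβγ : ∀ q, β q ^ 2 ≤ a q * (γ q - κ)) (hγΓ : ∀ q, γ q ≤ Γ) :
    κ * lpNorm v 2 (μ.restrict P)
      ≤ √(M / m) * lpNorm (symbolOp e₁ e₂ a β γ v) 2 (μ.restrict P) := by
  have ha0 (q) : 0 < a q := hm.trans_le (ham q)
  have hκγ (q) : κ ≤ γ q :=
    sub_nonneg.1 (nonneg_of_mul_nonneg_right ((sq_nonneg _).trans (hβγ q)) (ha0 q))
  have hγ0 (q) : 0 ≤ γ q := hκ.le.trans (hκγ q)
  have hβB (q) : |β q| ≤ √(M * (Γ - κ)) :=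
    Real.abs_le_sqrt <| (hβγ q).trans <| mul_le_mul (haM q) (sub_le_sub_right (hγΓ q) κ)
      (sub_nonneg.2 (hκγ q)) ((ha0 q).le.trans (haM q))
  obtain ⟨R, hR, hvanish⟩ := hv.exists_symbolOp_eq_zero_of_lt_norm
    (e₁ := e₁) (e₂ := e₂) (a := a) (β := β) (γ := γ)
  obtain ⟨C, hC⟩ := hv.exists_norm_symbolOp_le e₁ e₂ M (√(M * (Γ - κ))) Γ
  have hfC := hC a β γ (fun q ↦ (abs_of_pos (ha0 q)).trans_le (haM q)) hβB
    fun q ↦ (abs_of_nonneg (hγ0 q)).trans_le (hγΓ q)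
  have hball : μ.restrict P (closedBall 0 R) ≠ ⊤ :=
    ((Measure.restrict_apply_le P _).trans_lt measure_closedBall_lt_top).ne
  set B := √((μ.restrict P).real (closedBall 0 R))
  refine le_of_forall_pos_le_add_mul (c := (√(M / m) * Γ + κ) * B) fun ε hε ↦ ?_
  calc κ * lpNorm v 2 (μ.restrict P)
      ≤ κ * (lpNorm (smoothNorm ε v) 2 (μ.restrict P) + ε * B) := by
        gcongr
        refine lpNorm_two_le_add_of_norm_le_add ((hv.smoothNorm hε).memLp 2)
          measurableSet_closedBall hball hε.le (fun q _ ↦ ?_)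
          fun q hq ↦ (hvanish q (by simpa using hq)).1
        rw [Real.norm_of_nonneg (smoothNorm_nonneg ε v q)]
        exact norm_le_smoothNorm_add ε v q
    _ ≤ √(M / m) * (lpNorm (symbolOp e₁ e₂ a β γ v) 2 (μ.restrict P) + Γ * ε * B)
          + κ * (ε * B) := by
        rw [mul_add]
        refine add_le_add_left ?_ _
        exact hv.mul_lpNorm_smoothNorm_le (μ := μ) hP ha hβ hγ hm ham haM hκ hβγ hγΓ
          ((hγ0 0).trans (hγΓ 0)) hε hR (fun q hq ↦ (hvanish q hq).1)
          (fun q hq ↦ (hvanish q hq).2) hfC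
    _ = _ := by ring

end KatoInequality

section PartialFourierTransform

open scoped ContDiff FourierTransform RealInnerProductSpace
open Metric (closedBall)

namespace IsTestFunction

variable {Q E F : Type*} [NormedAddCommGroup Q] [NormedSpace ℝ Q] [NormedAddCommGroup E]
  [NormedSpace ℝ E] [NormedAddCommGroup F] [NormedSpace ℝ F]
  {G : Q × E → F}

theorem dirDeriv_slice (hG : IsTestFunction G) (q : Q) (e : E) :
    dirDeriv e (fun y ↦ G (q, y)) = fun y ↦ dirDeriv (0, e) G (q, y) :=
  dirDeriv_eq_of_hasFDerivAt
    (fun y ↦ (hG.hasFDerivAt (q, y)).comp y (hasFDerivAt_prodMk_right q y)) e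

theorem dirDeriv_smul_comp_snd {𝕜 : Type*} [NormedRing 𝕜] [NormedAlgebra ℝ 𝕜] [Module 𝕜 F]
    [IsBoundedSMul 𝕜 F] [IsScalarTower ℝ 𝕜 F] {c : E → 𝕜} (hG : IsTestFunction G)
    (hc : Differentiable ℝ c) (v : Q) :
    dirDeriv (v, 0) (fun z ↦ c z.2 • G z) = fun z ↦ c z.2 • dirDeriv (v, 0) G z := by
  have hprod (z : Q × E) :=
    ((hc z.2).hasFDerivAt.comp z hasFDerivAt_snd).fun_smul (hG.hasFDerivAt z)
  refine (dirDeriv_eq_of_hasFDerivAt hprod (v, 0)).trans (funext fun z ↦ ?_)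
  simp [dirDeriv]

variable [FiniteDimensional ℝ E]

theorem slice (hG : IsTestFunction G) (q : Q) : IsTestFunction fun y ↦ G (q, y) where
  contDiff := hG.contDiff.comp (contDiff_const.prodMk contDiff_id)
  hasCompactSupport := by
    have := FiniteDimensional.proper ℝ E
    obtain ⟨R, hR⟩ := hG.exists_eq_zero_of_lt_norm
    refine .of_support_subset_isCompact (isCompact_closedBall 0 R) fun y hy ↦ ?_
    by_contra hyR
    rw [mem_closedBall_zero_iff, not_le] at hyR
    exact hy (hR _ (hyR.trans_le (norm_snd_le (q, y))))

variable [MeasurableSpace E] [BorelSpace E] {μ : Measure E} [IsFiniteMeasureOnCompacts μ]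

theorem hasFDerivAt_integral_right (hG : IsTestFunction G) (q : Q) :
    HasFDerivAt (fun q ↦ ∫ y, G (q, y) ∂μ)
      (∫ y, (fderiv ℝ G (q, y)).comp (.inl ℝ Q E) ∂μ) q := by
  have := FiniteDimensional.proper ℝ E
  have hG' : IsTestFunction fun z ↦ (fderiv ℝ G z).comp (.inl ℝ Q E) :=
    hG.fderiv.clm_comp ((ContinuousLinearMap.compL ℝ Q (Q × E) F).flip _)
  obtain ⟨R, hR⟩ := hG'.exists_eq_zero_of_lt_norm
  obtain ⟨C, hC⟩ := hG'.exists_norm_le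
  refine hasFDerivAt_integral_of_dominated_of_fderiv_le
    (F' := fun p y ↦ (fderiv ℝ G (p, y)).comp (.inl ℝ Q E))
    (bound := (closedBall (0 : E) R).indicator fun _ ↦ C) Filter.univ_mem
    (.of_forall fun p ↦ (hG.slice p).continuous.aestronglyMeasurable) (hG.slice q).integrable
    (hG'.slice q).continuous.aestronglyMeasurable (.of_forall fun y p _ ↦ ?_)
    ((integrable_indicator_iff Metric.isClosed_closedBall.measurableSet).2
      (integrableOn_const (isCompact_closedBall 0 R).measure_lt_top.ne))
    (.of_forall fun y p _ ↦ (hG.hasFDerivAt (p, y)).comp p (hasFDerivAt_prodMk_left p y))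
  by_cases hy : y ∈ closedBall 0 R
  · simpa [hy] using hC (p, y)
  · rw [Set.indicator_of_notMem hy, hR, norm_zero]
    rw [mem_closedBall_zero_iff, not_le] at hy
    exact hy.trans_le (norm_snd_le (p, y))

theorem dirDeriv_integral_right (hG : IsTestFunction G) (v : Q) :
    dirDeriv v (fun q ↦ ∫ y, G (q, y) ∂μ) = fun q ↦ ∫ y, dirDeriv (v, 0) G (q, y) ∂μ := by
  rw [dirDeriv_eq_of_hasFDerivAt hG.hasFDerivAt_integral_right]
  funext q
  have hG' : IsTestFunction fun z ↦ (fderiv ℝ G z).comp (.inl ℝ Q E) :=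
    hG.fderiv.clm_comp ((ContinuousLinearMap.compL ℝ Q (Q × E) F).flip _)
  rw [ContinuousLinearMap.integral_apply (hG'.slice q).integrable]
  rfl

theorem integral_right [FiniteDimensional ℝ Q] (hG : IsTestFunction G) :
    IsTestFunction fun q ↦ ∫ y, G (q, y) ∂μ where
  contDiff := by
    refine contDiff_infty.2 fun n ↦ ?_
    induction n generalizing G with
    | zero =>
      exact contDiff_zero.2 (continuous_iff_continuousAt.2 fun q ↦
        (hG.hasFDerivAt_integral_right q).continuousAt)
    | succ n ih =>
      push_cast
      refine contDiff_succ_iff_fderiv_apply.2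
        ⟨fun q ↦ (hG.hasFDerivAt_integral_right q).differentiableAt, by simp, fun v ↦ ?_⟩
      exact (congrArg (ContDiff ℝ n) (hG.dirDeriv_integral_right v)).mpr (ih (hG.dirDeriv (v, 0)))
  hasCompactSupport := by
    have := FiniteDimensional.proper ℝ Q
    obtain ⟨R, hR⟩ := hG.exists_eq_zero_of_lt_norm
    refine .of_support_subset_isCompact (isCompact_closedBall 0 R) fun q hq ↦ ?_
    by_contra hqR
    rw [mem_closedBall_zero_iff, not_le] at hqR
    exact hq (by simp [fun y ↦ hR (q, y) (hqR.trans_le (norm_fst_le (q, y)))])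

end IsTestFunction

variable {Q E : Type*} [NormedAddCommGroup E] [InnerProductSpace ℝ E]

theorem contDiff_fourierChar_inner (ξ : E) :
    ContDiff ℝ ∞ fun y ↦ (Real.fourierChar (-⟪y, ξ⟫) : ℂ) := by
  have h : ContDiff ℝ ∞ fun y : E ↦ 2 * Real.pi * -⟪y, ξ⟫ :=
    contDiff_const.mul (contDiff_id.inner ℝ contDiff_const).neg
  simp only [Real.fourierChar_apply]
  exact ((Complex.ofRealCLM.contDiff.comp h).mul contDiff_const).cexp

theorem IsTestFunction.fourierChar_smul [NormedAddCommGroup Q] [NormedSpace ℝ Q]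
    {G : Q × E → ℂ} (hG : IsTestFunction G) (ξ : E) :
    IsTestFunction fun z ↦ (Real.fourierChar (-⟪z.2, ξ⟫) : ℂ) • G z :=
  hG.smul ((contDiff_fourierChar_inner ξ).comp contDiff_snd)

variable [FiniteDimensional ℝ E] [MeasurableSpace E] [BorelSpace E]

/-- The Fourier transform of `G` in its second variable, at frequency `ξ`, as a function of the
first variable. -/
noncomputable def partialFourier (G : Q × E → ℂ) (ξ : E) : Q → ℂ :=
  fun q ↦ 𝓕 (fun y ↦ G (q, y)) ξ

theorem lintegral_enorm_fourier_sq {f : E → ℂ} (hf : IsTestFunction f) :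
    ∫⁻ ξ, ‖𝓕 f ξ‖ₑ ^ 2 = ∫⁻ y, ‖f y‖ₑ ^ 2 := by
  obtain ⟨φ, rfl⟩ : ∃ φ : SchwartzMap E ℂ, ⇑φ = f :=
    ⟨hf.hasCompactSupport.toSchwartzMap hf.contDiff, rfl⟩
  have lintegral_eq (ψ : SchwartzMap E ℂ) :
      ∫⁻ y, ‖ψ y‖ₑ ^ 2 = ENNReal.ofReal (∫ y, ‖ψ y‖ ^ 2) := by
    have hψ : Integrable fun y ↦ ‖ψ y‖ ^ 2 := (ψ.memLp 2).integrable_norm_pow two_ne_zero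
    rw [ofReal_integral_eq_lintegral_ofReal hψ (.of_forall fun _ ↦ sq_nonneg _)]
    simp only [ENNReal.ofReal_pow (norm_nonneg _), ofReal_norm]
  rw [← SchwartzMap.fourier_coe, lintegral_eq, lintegral_eq, SchwartzMap.integral_norm_sq_fourier]

section

variable [MeasurableSpace Q] {ν : Measure Q} [SFinite ν] {H H₁ H₂ : Q × E → ℂ} {C : ℝ}

theorem measurable_partialFourier (hH : Measurable H) :
    Measurable fun z : E × Q ↦ partialFourier H z.1 z.2 := by
  have hinner : Measurable fun z : (E × Q) × E ↦ -⟪z.2, z.1.1⟫ := by fun_prop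
  have hchar : Measurable fun z : (E × Q) × E ↦ (Real.fourierChar (-⟪z.2, z.1.1⟫) : ℂ) :=
    (continuous_subtype_val.comp Real.continuous_fourierChar).measurable.comp hinner
  have hH' : Measurable fun z : (E × Q) × E ↦ H (z.1.2, z.2) := hH.comp (by fun_prop)
  exact (hchar.smul hH').stronglyMeasurable.integral_prod_right'.measurable

theorem lintegral_eLpNorm_partialFourier_sq (hH : Measurable H)
    (hslice : ∀ q, IsTestFunction fun y ↦ H (q, y)) :
    ∫⁻ ξ, eLpNorm (partialFourier H ξ) 2 ν ^ 2 = eLpNorm H 2 (ν.prod volume) ^ 2 := by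
  calc ∫⁻ ξ, eLpNorm (partialFourier H ξ) 2 ν ^ 2
      = ∫⁻ ξ, ∫⁻ q, ‖partialFourier H ξ q‖ₑ ^ 2 ∂ν := by simp only [eLpNorm_two_sq]
    _ = ∫⁻ q, (∫⁻ ξ, ‖partialFourier H ξ q‖ₑ ^ 2) ∂ν :=
        lintegral_lintegral_swap ((measurable_partialFourier hH).enorm.pow_const 2).aemeasurable
    _ = ∫⁻ q, (∫⁻ y, ‖H (q, y)‖ₑ ^ 2) ∂ν :=
        lintegral_congr fun q ↦ lintegral_enorm_fourier_sq (hslice q)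
    _ = eLpNorm H 2 (ν.prod volume) ^ 2 := by
        rw [eLpNorm_two_sq, lintegral_prod _ (hH.enorm.pow_const 2).aemeasurable]

theorem lpNorm_two_le_of_forall_partialFourier (hC : 0 ≤ C) (hH₁ : Measurable H₁)
    (hslice₁ : ∀ q, IsTestFunction fun y ↦ H₁ (q, y))
    (hmem₁ : ∀ ξ, MemLp (partialFourier H₁ ξ) 2 ν) (hH₂ : Measurable H₂)
    (hslice₂ : ∀ q, IsTestFunction fun y ↦ H₂ (q, y)) (hmem₂ : MemLp H₂ 2 (ν.prod volume))
    (hle : ∀ ξ, lpNorm (partialFourier H₁ ξ) 2 ν ≤ C * lpNorm (partialFourier H₂ ξ) 2 ν) :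
    lpNorm H₁ 2 (ν.prod volume) ≤ C * lpNorm H₂ 2 (ν.prod volume) := by
  have hle' (ξ) :
      eLpNorm (partialFourier H₁ ξ) 2 ν ≤ .ofReal C * eLpNorm (partialFourier H₂ ξ) 2 ν := by
    calc eLpNorm (partialFourier H₁ ξ) 2 ν
        = .ofReal (lpNorm (partialFourier H₁ ξ) 2 ν) := (ofReal_lpNorm (hmem₁ ξ)).symm
      _ ≤ .ofReal (C * lpNorm (partialFourier H₂ ξ) 2 ν) := ENNReal.ofReal_le_ofReal (hle ξ)
      _ ≤ .ofReal C * eLpNorm (partialFourier H₂ ξ) 2 ν := by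
          rw [ENNReal.ofReal_mul hC, lpNorm]
          gcongr
          split_ifs
          exacts [ENNReal.ofReal_toReal_le, by simp]
  have hsq : eLpNorm H₁ 2 (ν.prod volume) ^ 2 ≤ (.ofReal C * eLpNorm H₂ 2 (ν.prod volume)) ^ 2 := by
    rw [mul_pow, ← lintegral_eLpNorm_partialFourier_sq hH₁ hslice₁,
      ← lintegral_eLpNorm_partialFourier_sq hH₂ hslice₂, ← lintegral_const_mul' _ _ (by simp)]
    exact lintegral_mono fun ξ ↦ (pow_le_pow_left' (hle' ξ) 2).trans_eq (mul_pow ..)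
  rw [← toReal_eLpNorm hH₁.aestronglyMeasurable, ← toReal_eLpNorm hH₂.aestronglyMeasurable,
    ← ENNReal.toReal_ofReal hC, ← ENNReal.toReal_mul]
  exact ENNReal.toReal_mono (ENNReal.mul_ne_top ENNReal.ofReal_ne_top hmem₂.eLpNorm_ne_top)
    ((ENNReal.pow_le_pow_left_iff two_ne_zero).1 hsq)

end

namespace IsTestFunction

variable [NormedAddCommGroup Q] [NormedSpace ℝ Q] {G : Q × E → ℂ}

protected theorem partialFourier [FiniteDimensional ℝ Q] (hG : IsTestFunction G) (ξ : E) :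
    IsTestFunction (partialFourier G ξ) :=
  (hG.fourierChar_smul ξ).integral_right

theorem dirDeriv_partialFourier (hG : IsTestFunction G) (v : Q) (ξ : E) :
    dirDeriv v (partialFourier G ξ) = partialFourier (dirDeriv (v, 0) G) ξ := by
  refine ((hG.fourierChar_smul ξ).dirDeriv_integral_right v).trans ?_
  rw [hG.dirDeriv_smul_comp_snd ((contDiff_fourierChar_inner ξ).differentiable (by simp)) v]
  rfl

theorem partialFourier_dirDeriv (hG : IsTestFunction G) (e ξ : E) :
    partialFourier (dirDeriv (0, e) G) ξ
      = fun q ↦ (2 * Real.pi * ⟪e, ξ⟫) • (Complex.I * partialFourier G ξ q) := by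
  funext q
  have hs := hG.slice q
  have h := Real.fourier_fderiv hs.integrable (hs.contDiff.differentiable (by simp))
    hs.fderiv.integrable
  calc partialFourier (dirDeriv (0, e) G) ξ q
      = 𝓕 (fun y ↦ fderiv ℝ (fun y ↦ G (q, y)) y e) ξ :=
        congrArg (fun f : E → ℂ ↦ 𝓕 f ξ) (hG.dirDeriv_slice q e).symm
    _ = (2 * Real.pi * ⟪e, ξ⟫) • (Complex.I * partialFourier G ξ q) := by
        have hinner : innerSL ℝ ξ e = ⟪e, ξ⟫ := real_inner_comm e ξ
        rw [← Real.fourier_continuousLinearMap_apply hs.fderiv.integrable, h]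
        simp [partialFourier, hinner]
        ring

end IsTestFunction

end PartialFourierTransform

section ParabolicOperator

variable {ι : Type*} [Fintype ι] {δ : ℝ}

/-- The ellipticity condition of the theorem for one coefficient matrix: `A` is symmetric and its
quadratic form lies between `δ |θ|²` and `δ⁻¹ |θ|²`. -/
structure IsElliptic (δ : ℝ) (A : ι → ι → ℝ) : Prop where
  symm : ∀ j k, A j k = A k j
  le_form : ∀ θ : ι → ℝ, δ * ∑ j, θ j ^ 2 ≤ ∑ j, ∑ k, A j k * θ j * θ k
  form_le : ∀ θ : ι → ℝ, ∑ j, ∑ k, A j k * θ j * θ k ≤ δ⁻¹ * ∑ j, θ j ^ 2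

namespace IsElliptic

variable {A : ι → ι → ℝ}

theorem le_diag (hA : IsElliptic δ A) (j : ι) : δ ≤ A j j := by
  classical
  simpa [Pi.single_apply] using hA.le_form (Pi.single j 1)

theorem diag_le (hA : IsElliptic δ A) (j : ι) : A j j ≤ δ⁻¹ := by
  classical
  simpa [Pi.single_apply] using hA.form_le (Pi.single j 1)

-- Polarization: `4 A(θ, η) = A(θ + η, θ + η) - A(θ - η, θ - η)`.
theorem two_mul_form_le (hA : IsElliptic δ A) (hδ : 0 < δ) (θ η : ι → ℝ) :
    2 * ∑ j, ∑ k, A j k * θ j * η k ≤ δ⁻¹ * (∑ j, θ j ^ 2 + ∑ j, η j ^ 2) := by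
  have hform : 4 * ∑ j, ∑ k, A j k * θ j * η k
      = (∑ j, ∑ k, A j k * (θ j + η j) * (θ k + η k))
        - ∑ j, ∑ k, A j k * (θ j - η j) * (θ k - η k) := by
    have hswap : ∑ j, ∑ k, A j k * θ j * η k = ∑ j, ∑ k, A j k * η j * θ k := by
      rw [Finset.sum_comm]
      exact Finset.sum_congr rfl fun j _ ↦ Finset.sum_congr rfl fun k _ ↦ by
        rw [hA.symm k j]; ring
    simp only [mul_add, mul_sub, add_mul, sub_mul, Finset.sum_add_distrib, Finset.sum_sub_distrib]
    linarith
  have hnorm : ∑ j, (θ j + η j) ^ 2 ≤ 2 * (∑ j, θ j ^ 2 + ∑ j, η j ^ 2) := by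
    rw [← Finset.sum_add_distrib, Finset.mul_sum]
    exact Finset.sum_le_sum fun j _ ↦ add_sq_le
  have hpos : 0 ≤ ∑ j, ∑ k, A j k * (θ j - η j) * (θ k - η k) :=
    le_trans (by positivity) (hA.le_form fun j ↦ θ j - η j)
  have hle := (hA.form_le fun j ↦ θ j + η j).trans
    (mul_le_mul_of_nonneg_left hnorm (inv_pos.2 hδ).le)
  linarith

theorem abs_le (hA : IsElliptic δ A) (hδ : 0 < δ) (j k : ι) : |A j k| ≤ δ⁻¹ := by
  classical
  have hle := hA.two_mul_form_le hδ (Pi.single j 1) (Pi.single k 1)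
  have hge := hA.two_mul_form_le hδ (Pi.single j 1) (Pi.single k (-1))
  simp only [Pi.single_apply, ite_pow, mul_ite, mul_one, mul_zero, mul_neg, one_pow,
    even_two, Even.neg_pow, ne_eq, OfNat.ofNat_ne_zero, not_false_eq_true, zero_pow,
    Finset.sum_neg_distrib, Finset.sum_ite_eq', Finset.mem_univ, if_true] at hle hge
  exact _root_.abs_le.2 ⟨by linarith, by linarith⟩

theorem form_succ_le {m : ℕ} {A : Fin (m + 1) → Fin (m + 1) → ℝ} (hA : IsElliptic δ A)
    (η : Fin m → ℝ) :
    ∑ j, ∑ k, A j.succ k.succ * η j * η k ≤ δ⁻¹ * ∑ j, η j ^ 2 := by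
  simpa [Fin.sum_univ_succ] using hA.form_le (Fin.cons 0 η)

theorem sq_sum_mul_le {m : ℕ} {A : Fin (m + 1) → Fin (m + 1) → ℝ} (hA : IsElliptic δ A)
    (hδ : 0 < δ) (η : Fin m → ℝ) :
    (∑ k, A 0 k.succ * η k) ^ 2
      ≤ A 0 0 * (∑ j, ∑ k, A j.succ k.succ * η j * η k - δ * ∑ j, η j ^ 2) := by
  set S := ∑ k, A 0 k.succ * η k
  set B := ∑ j, ∑ k, A j.succ k.succ * η j * η k
  have form_cons (s : ℝ) : 0 ≤ A 0 0 * (s * s) + 2 * S * s + (B - δ * ∑ j, η j ^ 2) := by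
    have h := hA.le_form (Fin.cons s η)
    have hrow : ∑ k, A 0 k.succ * s * η k = S * s := by
      rw [Finset.sum_mul]; exact Finset.sum_congr rfl fun k _ ↦ by ring
    have hcol : ∑ j, A j.succ 0 * η j * s = S * s := by
      rw [Finset.sum_mul]; exact Finset.sum_congr rfl fun j _ ↦ by rw [hA.symm 0 j.succ]
    simp only [Fin.sum_univ_succ, Fin.cons_zero, Fin.cons_succ, Finset.sum_add_distrib, hrow,
      hcol] at h
    nlinarith [mul_nonneg hδ.le (sq_nonneg s)]
  have hdisc := discrim_le_zero form_cons
  rw [discrim] at hdisc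
  linarith

end IsElliptic

variable {V F : Type*} [NormedAddCommGroup V] [NormedSpace ℝ V] [NormedAddCommGroup F]
  [NormedSpace ℝ F]

/-- The operator `u ↦ ∂_τ u + Σ_{j,k} a^{jk} ∂_{D_j} ∂_{D_k} u - lam u`. -/
noncomputable def parabolicOp (τ : V) (D : ι → V) (a : V → ι → ι → ℝ) (lam : ℝ) (u : V → F) :
    V → F := fun z ↦
  dirDeriv τ u z + ∑ j, ∑ k, a z j k • dirDeriv (D j) (dirDeriv (D k) u) z - lam • u z

/-- The operator `u ↦ lam u - Σ_j ∂_{D_j}² u`. -/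
noncomputable def laplaceResolvent (D : ι → V) (lam : ℝ) (u : V → F) : V → F := fun z ↦
  lam • u z - ∑ j, dirDeriv (D j) (dirDeriv (D j) u) z

namespace IsTestFunction

variable {τ : V} {D : ι → V} {a : V → ι → ι → ℝ} {lam : ℝ} {u : V → F}

protected theorem laplaceResolvent (hu : IsTestFunction u) :
    IsTestFunction (laplaceResolvent D lam u) :=
  (hu.const_smul lam).sub (.sum _ fun j ↦ (hu.dirDeriv (D j)).dirDeriv (D j))

theorem laplaceResolvent_clm_comp {F' : Type*} [NormedAddCommGroup F'] [NormedSpace ℝ F']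
    (hu : IsTestFunction u) (L : F →L[ℝ] F') :
    laplaceResolvent D lam (fun z ↦ L (u z)) = fun z ↦ L (laplaceResolvent D lam u z) := by
  funext z
  simp [laplaceResolvent, hu.dirDeriv_clm_comp, (hu.dirDeriv _).dirDeriv_clm_comp]

theorem parabolicOp_clm_comp {F' : Type*} [NormedAddCommGroup F'] [NormedSpace ℝ F']
    (hu : IsTestFunction u) (L : F →L[ℝ] F') :
    parabolicOp τ D a lam (fun z ↦ L (u z)) = fun z ↦ L (parabolicOp τ D a lam u z) := by
  funext z
  simp [parabolicOp, hu.dirDeriv_clm_comp, (hu.dirDeriv _).dirDeriv_clm_comp]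

variable [MeasurableSpace V] [BorelSpace V] [SecondCountableTopology V]

theorem stronglyMeasurable_parabolicOp (hu : IsTestFunction u)
    (ha : ∀ j k, Measurable fun z ↦ a z j k) : StronglyMeasurable (parabolicOp τ D a lam u) := by
  have hmeas {f : V → F} (hf : IsTestFunction f) : StronglyMeasurable f :=
    hf.continuous.stronglyMeasurable
  exact ((hmeas (hu.dirDeriv τ)).add (Finset.stronglyMeasurable_fun_sum _ fun j _ ↦
    Finset.stronglyMeasurable_fun_sum _ fun k _ ↦ (ha j k).stronglyMeasurable.smul
      (hmeas ((hu.dirDeriv (D k)).dirDeriv (D j))))).sub ((hmeas hu).const_smul lam)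

variable {μ : Measure V} [IsFiniteMeasureOnCompacts μ] {C : ℝ}

theorem memLp_smul_of_abs_le {b : V → ℝ} (hu : IsTestFunction u) (hb : Measurable b)
    (hbC : ∀ z, |b z| ≤ C) (p : ENNReal) : MemLp (fun z ↦ b z • u z) p μ :=
  (hu.memLp p).of_le_mul (c := C)
    (hb.aestronglyMeasurable.smul hu.continuous.aestronglyMeasurable) (.of_forall fun z ↦
      (norm_smul_le _ _).trans (mul_le_mul_of_nonneg_right (hbC z) (norm_nonneg _)))

theorem memLp_parabolicOp (hu : IsTestFunction u) (ha : ∀ j k, Measurable fun z ↦ a z j k)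
    (haC : ∀ z j k, |a z j k| ≤ C) (p : ENNReal) : MemLp (parabolicOp τ D a lam u) p μ :=
  (((hu.dirDeriv τ).memLp p).add (memLp_finsetSum _ fun j _ ↦ memLp_finsetSum _ fun k _ ↦
    ((hu.dirDeriv (D k)).dirDeriv (D j)).memLp_smul_of_abs_le (ha j k) (fun z ↦ haC z j k) p)).sub
      ((hu.memLp p).const_smul lam)

end IsTestFunction

end ParabolicOperator

section TangentialEstimate

open scoped FourierTransform RealInnerProductSpace

section Linearity

variable {Q E : Type*} [NormedAddCommGroup E] [InnerProductSpace ℝ E] [FiniteDimensional ℝ E]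
  [MeasurableSpace E] [BorelSpace E] {G H : Q × E → ℂ}

theorem partialFourier_add (hG : ∀ q, Integrable fun y ↦ G (q, y))
    (hH : ∀ q, Integrable fun y ↦ H (q, y)) (ξ : E) :
    partialFourier (fun z ↦ G z + H z) ξ = fun q ↦ partialFourier G ξ q + partialFourier H ξ q := by
  funext q
  simp only [partialFourier, Real.fourier_eq, smul_add]
  exact integral_add ((Real.fourierIntegral_convergent_iff ξ).2 (hG q))
    ((Real.fourierIntegral_convergent_iff ξ).2 (hH q))

theorem partialFourier_sub (hG : ∀ q, Integrable fun y ↦ G (q, y))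
    (hH : ∀ q, Integrable fun y ↦ H (q, y)) (ξ : E) :
    partialFourier (fun z ↦ G z - H z) ξ = fun q ↦ partialFourier G ξ q - partialFourier H ξ q := by
  funext q
  simp only [partialFourier, Real.fourier_eq, smul_sub]
  exact integral_sub ((Real.fourierIntegral_convergent_iff ξ).2 (hG q))
    ((Real.fourierIntegral_convergent_iff ξ).2 (hH q))

theorem partialFourier_smul (c : Q → ℝ) (G : Q × E → ℂ) (ξ : E) :
    partialFourier (fun z ↦ c z.1 • G z) ξ = fun q ↦ c q • partialFourier G ξ q := by
  funext q
  simp only [partialFourier, Real.fourier_eq, smul_comm _ (c q), integral_smul]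

theorem partialFourier_sum {ι : Type*} (s : Finset ι) {G : ι → Q × E → ℂ}
    (hG : ∀ i q, Integrable fun y ↦ G i (q, y)) (ξ : E) :
    partialFourier (fun z ↦ ∑ i ∈ s, G i z) ξ = fun q ↦ ∑ i ∈ s, partialFourier (G i) ξ q := by
  funext q
  simp only [partialFourier, Real.fourier_eq, Finset.smul_sum]
  exact integral_finsetSum s fun i _ ↦ (Real.fourierIntegral_convergent_iff ξ).2 (hG i q)

theorem partialFourier_sum_sum_smul {ι κ : Type*} [Fintype ι] [Fintype κ] (c : Q → ι → κ → ℝ)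
    {G : ι → κ → Q × E → ℂ} (hG : ∀ j k q, Integrable fun y ↦ G j k (q, y)) (ξ : E) :
    partialFourier (fun z ↦ ∑ j, ∑ k, c z.1 j k • G j k z) ξ
      = fun q ↦ ∑ j, ∑ k, c q j k • partialFourier (G j k) ξ q := by
  have hint (j k q) : Integrable fun y ↦ c q j k • G j k (q, y) := (hG j k q).fun_smul (c q j k)
  rw [partialFourier_sum _ fun j q ↦ integrable_finsetSum _ fun k _ ↦ hint j k q]
  funext q
  refine Finset.sum_congr rfl fun j _ ↦ ?_
  rw [partialFourier_sum _ fun k q ↦ hint j k q]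
  exact Finset.sum_congr rfl fun k _ ↦ congrFun (partialFourier_smul (fun q ↦ c q j k) _ ξ) q

end Linearity

variable {Q : Type*} [NormedAddCommGroup Q] [NormedSpace ℝ Q] {m : ℕ} {e₁ e₂ : Q} {δ lam : ℝ}
  {a : Q → Fin (m + 1) → Fin (m + 1) → ℝ}

/-- The coordinate directions of the second factor of `Q × ℝᵐ`. -/
noncomputable def tangentialDir (Q : Type*) [Zero Q] {m : ℕ} (j : Fin m) :
    Q × EuclideanSpace ℝ (Fin m) :=
  (0, EuclideanSpace.single j 1)

/-- The spatial directions in `Q × ℝᵐ`: first `e ∈ Q`, then the coordinate directions of `ℝᵐ`. -/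
noncomputable def spatialDir (e : Q) : Fin (m + 1) → Q × EuclideanSpace ℝ (Fin m) :=
  Fin.cons (e, 0) (tangentialDir Q)

namespace IsTestFunction

variable {u : Q × EuclideanSpace ℝ (Fin m) → ℂ}

theorem integrable_slice (hu : IsTestFunction u) (q : Q) : Integrable fun y ↦ u (q, y) :=
  (hu.slice q).integrable

theorem slice_secondOrder (hu : IsTestFunction u) (q : Q) :
    IsTestFunction fun y ↦ ∑ j, ∑ k,
      a q j k • dirDeriv (spatialDir e₂ j) (dirDeriv (spatialDir e₂ k) u) (q, y) :=
  .sum _ fun j ↦ .sum _ fun k ↦ (((hu.dirDeriv _).dirDeriv _).slice q).const_smul (a q j k)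

theorem slice_parabolicOp (hu : IsTestFunction u) (q : Q) :
    IsTestFunction fun y ↦ parabolicOp (e₁, 0) (spatialDir e₂) (fun z ↦ a z.1) lam u (q, y) :=
  (((hu.dirDeriv _).slice q).add (hu.slice_secondOrder q)).sub ((hu.slice q).const_smul lam)

theorem partialFourier_tangentialDeriv (hu : IsTestFunction u) (j : Fin m)
    (ξ : EuclideanSpace ℝ (Fin m)) :
    partialFourier (dirDeriv (tangentialDir Q j) u) ξ
      = fun q ↦ (2 * Real.pi * ξ j) • (Complex.I * partialFourier u ξ q) := by
  have h := hu.partialFourier_dirDeriv (EuclideanSpace.single j 1) ξ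
  rwa [EuclideanSpace.inner_single_left, map_one, one_mul] at h

theorem partialFourier_tangentialDeriv_tangentialDeriv (hu : IsTestFunction u) (j k : Fin m)
    (ξ : EuclideanSpace ℝ (Fin m)) :
    partialFourier (dirDeriv (tangentialDir Q j) (dirDeriv (tangentialDir Q k) u)) ξ
      = fun q ↦ -((2 * Real.pi * ξ j) * (2 * Real.pi * ξ k)) • partialFourier u ξ q := by
  funext q
  simp only [(hu.dirDeriv _).partialFourier_tangentialDeriv, hu.partialFourier_tangentialDeriv,
    Complex.real_smul]
  push_cast
  linear_combination (4 * Real.pi ^ 2 * ξ j * ξ k * partialFourier u ξ q) * Complex.I_sq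

theorem partialFourier_laplaceResolvent (hu : IsTestFunction u) (lam : ℝ)
    (ξ : EuclideanSpace ℝ (Fin m)) :
    partialFourier (laplaceResolvent (tangentialDir Q) lam u) ξ
      = fun q ↦ (lam + ∑ j, (2 * Real.pi * ξ j) ^ 2) • partialFourier u ξ q := by
  have huu (j : Fin m) := (hu.dirDeriv (tangentialDir Q j)).dirDeriv (tangentialDir Q j)
  unfold laplaceResolvent
  rw [partialFourier_sub (hu.const_smul lam).integrable_slice
    (IsTestFunction.sum _ huu).integrable_slice, partialFourier_smul (fun _ ↦ lam),
    partialFourier_sum _ fun j ↦ (huu j).integrable_slice]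
  funext q
  simp [hu.partialFourier_tangentialDeriv_tangentialDeriv, add_mul, Finset.sum_mul, sq]

theorem partialFourier_secondOrder (hu : IsTestFunction u) (ha : ∀ q, IsElliptic δ (a q))
    (ξ : EuclideanSpace ℝ (Fin m)) :
    partialFourier (fun z ↦ ∑ j, ∑ k,
        a z.1 j k • dirDeriv (spatialDir e₂ j) (dirDeriv (spatialDir e₂ k) u) z) ξ
      = fun q ↦ a q 0 0 • dirDeriv e₂ (dirDeriv e₂ (partialFourier u ξ)) q
        + (2 * ∑ k, a q 0 k.succ * (2 * Real.pi * ξ k))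
          • (Complex.I * dirDeriv e₂ (partialFourier u ξ) q)
        - (∑ j, ∑ k, a q j.succ k.succ * (2 * Real.pi * ξ j) * (2 * Real.pi * ξ k))
          • partialFourier u ξ q := by
  have hnormal : partialFourier (dirDeriv (e₂, 0) (dirDeriv (e₂, 0) u)) ξ
      = dirDeriv e₂ (dirDeriv e₂ (partialFourier u ξ)) := by
    rw [hu.dirDeriv_partialFourier, (hu.dirDeriv _).dirDeriv_partialFourier]
  have hmixed (k : Fin m) :
      partialFourier (dirDeriv (tangentialDir Q k) (dirDeriv (e₂, 0) u)) ξ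
        = fun q ↦ (2 * Real.pi * ξ k) • (Complex.I * dirDeriv e₂ (partialFourier u ξ) q) := by
    rw [(hu.dirDeriv _).partialFourier_tangentialDeriv, hu.dirDeriv_partialFourier]
  rw [partialFourier_sum_sum_smul a fun j k ↦ ((hu.dirDeriv _).dirDeriv _).integrable_slice]
  funext q
  simp only [Fin.sum_univ_succ, spatialDir, Fin.cons_zero, Fin.cons_succ,
    hu.dirDeriv_comm (e₂, 0) (tangentialDir Q _), hnormal, hmixed,
    hu.partialFourier_tangentialDeriv_tangentialDeriv, Finset.sum_add_distrib, smul_smul,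
    ← Finset.sum_smul, (ha q).symm _ 0, mul_neg, Finset.sum_neg_distrib, ← mul_assoc]
  module

theorem partialFourier_parabolicOp (hu : IsTestFunction u) (ha : ∀ q, IsElliptic δ (a q))
    (ξ : EuclideanSpace ℝ (Fin m)) :
    partialFourier (parabolicOp (e₁, 0) (spatialDir e₂) (fun z ↦ a z.1) lam u) ξ
      = symbolOp e₁ e₂ (fun q ↦ a q 0 0) (fun q ↦ ∑ k, a q 0 k.succ * (2 * Real.pi * ξ k))
        (fun q ↦ ∑ j, ∑ k, a q j.succ k.succ * (2 * Real.pi * ξ j) * (2 * Real.pi * ξ k) + lam)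
        (partialFourier u ξ) := by
  have hsum (q) := (hu.slice_secondOrder (a := a) (e₂ := e₂) q).integrable (μ := volume)
  unfold parabolicOp
  rw [partialFourier_sub (fun q ↦ ((hu.dirDeriv _).integrable_slice q).fun_add (hsum q))
    (hu.const_smul lam).integrable_slice,
    partialFourier_add (hu.dirDeriv _).integrable_slice hsum, partialFourier_smul (fun _ ↦ lam),
    hu.partialFourier_secondOrder ha, ← hu.dirDeriv_partialFourier]
  funext q
  simp only [symbolOp]
  module

variable [FiniteDimensional ℝ Q] [MeasurableSpace Q] [BorelSpace Q] {μ : Measure Q}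
  [μ.IsAddHaarMeasure] {P : Set Q}

theorem lpNorm_partialFourier_laplaceResolvent_le (hu : IsTestFunction u)
    (hP : IsParabolicDomain P e₁ e₂) (hδ : 0 < δ) (hδ1 : δ ≤ 1) (hlam : 0 < lam)
    (hameas : ∀ j k, Measurable fun q ↦ a q j k) (ha : ∀ q, IsElliptic δ (a q))
    (ξ : EuclideanSpace ℝ (Fin m)) :
    lpNorm (partialFourier (laplaceResolvent (tangentialDir Q) lam u) ξ) 2 (μ.restrict P)
      ≤ (δ ^ 2)⁻¹ * lpNorm (partialFourier
        (parabolicOp (e₁, 0) (spatialDir e₂) (fun z ↦ a z.1) lam u) ξ) 2 (μ.restrict P) := by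
  set η : Fin m → ℝ := fun j ↦ 2 * Real.pi * ξ j
  have hη : 0 ≤ ∑ j, η j ^ 2 := Finset.sum_nonneg fun j _ ↦ sq_nonneg _
  have hdisc (q : Q) : (∑ k, a q 0 k.succ * η k) ^ 2 ≤ a q 0 0 *
      (∑ j, ∑ k, a q j.succ k.succ * η j * η k + lam - δ * (lam + ∑ j, η j ^ 2)) := by
    refine ((ha q).sq_sum_mul_le hδ η).trans
      (mul_le_mul_of_nonneg_left ?_ (hδ.le.trans ((ha q).le_diag 0)))
    linarith [mul_le_mul_of_nonneg_right hδ1 hlam.le]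
  have hsqrt : √(δ⁻¹ / δ) = δ⁻¹ := by
    rw [div_eq_mul_inv, Real.sqrt_mul_self (inv_pos.2 hδ).le]
  have hmain := (hu.partialFourier ξ).mul_lpNorm_le_lpNorm_symbolOp (μ := μ) hP (hameas 0 0)
    (Finset.measurable_fun_sum _ fun k _ ↦ (hameas 0 k.succ).mul_const (η k))
    ((Finset.measurable_fun_sum _ fun j _ ↦ Finset.measurable_fun_sum _ fun k _ ↦
      ((hameas j.succ k.succ).mul_const (η j)).mul_const (η k)).add_const lam) hδ
    (fun q ↦ (ha q).le_diag 0) (fun q ↦ (ha q).diag_le 0)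
    (mul_pos hδ (add_pos_of_pos_of_nonneg hlam hη)) hdisc
    (fun q ↦ add_le_add ((ha q).form_succ_le η) le_rfl)
  have hnorm : lpNorm (fun q ↦ (lam + ∑ j, η j ^ 2) • partialFourier u ξ q) 2 (μ.restrict P)
      = (lam + ∑ j, η j ^ 2) * lpNorm (partialFourier u ξ) 2 (μ.restrict P) := by
    have h := lpNorm_const_smul (p := 2) (lam + ∑ j, η j ^ 2) (partialFourier u ξ) (μ.restrict P)
    rwa [coe_nnnorm, Real.norm_of_nonneg (add_nonneg hlam.le hη)] at h
  rw [hsqrt, ← hu.partialFourier_parabolicOp ha ξ, mul_assoc, ← le_div_iff₀' hδ] at hmain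
  rw [hu.partialFourier_laplaceResolvent, hnorm]
  exact hmain.trans_eq (by field_simp)

theorem lpNorm_laplaceResolvent_le (hu : IsTestFunction u)
    (hP : IsParabolicDomain P e₁ e₂) (hδ : 0 < δ) (hδ1 : δ ≤ 1) (hlam : 0 < lam)
    (hameas : ∀ j k, Measurable fun q ↦ a q j k) (ha : ∀ q, IsElliptic δ (a q)) :
    lpNorm (laplaceResolvent (tangentialDir Q) lam u) 2 ((μ.restrict P).prod volume)
      ≤ (δ ^ 2)⁻¹ * lpNorm (parabolicOp (e₁, 0) (spatialDir e₂) (fun z ↦ a z.1) lam u) 2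
        ((μ.restrict P).prod volume) := by
  have hres : IsTestFunction (laplaceResolvent (tangentialDir Q) lam u) := hu.laplaceResolvent
  have hameas' (j k) : Measurable fun z : Q × EuclideanSpace ℝ (Fin m) ↦ a z.1 j k :=
    (hameas j k).comp measurable_fst
  exact lpNorm_two_le_of_forall_partialFourier (by positivity) hres.continuous.measurable hres.slice
    (fun ξ ↦ (hres.partialFourier ξ).memLp 2) (hu.stronglyMeasurable_parabolicOp hameas').measurable
    hu.slice_parabolicOp (hu.memLp_parabolicOp hameas' (fun z ↦ (ha z.1).abs_le hδ) 2)
    (hu.lpNorm_partialFourier_laplaceResolvent_le hP hδ hδ1 hlam hameas ha)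

theorem integral_laplaceResolvent_sq_le {u : Q × EuclideanSpace ℝ (Fin m) → ℝ}
    (hu : IsTestFunction u) (hP : IsParabolicDomain P e₁ e₂) (hδ : 0 < δ) (hδ1 : δ ≤ 1)
    (hlam : 0 < lam) (hameas : ∀ j k, Measurable fun q ↦ a q j k)
    (ha : ∀ q, IsElliptic δ (a q)) :
    δ ^ 4 * ∫ z, laplaceResolvent (tangentialDir Q) lam u z ^ 2 ∂(μ.restrict P).prod volume
      ≤ ∫ z, parabolicOp (e₁, 0) (spatialDir e₂) (fun z ↦ a z.1) lam u z ^ 2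
        ∂(μ.restrict P).prod volume := by
  have hres : IsTestFunction fun z ↦
      Complex.ofRealCLM (laplaceResolvent (tangentialDir Q) lam u z) :=
    hu.laplaceResolvent.clm_comp Complex.ofRealCLM
  have hpar : StronglyMeasurable fun z ↦ Complex.ofRealCLM
      (parabolicOp (e₁, 0) (spatialDir e₂) (fun z ↦ a z.1) lam u z) :=
    Complex.ofRealCLM.continuous.comp_stronglyMeasurable (hu.stronglyMeasurable_parabolicOp
      fun j k ↦ (hameas j k).comp measurable_fst)
  have h := (hu.clm_comp Complex.ofRealCLM).lpNorm_laplaceResolvent_le (μ := μ) hP hδ hδ1 hlam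
    hameas ha
  rw [hu.laplaceResolvent_clm_comp, hu.parabolicOp_clm_comp, inv_mul_eq_div,
    le_div_iff₀' (by positivity)] at h
  have hsq := pow_le_pow_left₀ (mul_nonneg (by positivity) lpNorm_nonneg) h 2
  rw [mul_pow, lpNorm_two_sq hres.continuous.aestronglyMeasurable,
    lpNorm_two_sq hpar.aestronglyMeasurable, ← pow_mul] at hsq
  simpa using hsq

end IsTestFunction

end TangentialEstimate

section IntegrationByParts

open scoped Topology

theorem sq_add_sq_add_mul_le_sq_add_mul {δ a : ℝ} (hδ : 0 < δ) (hδa : δ ≤ a) (haδ : a ≤ δ⁻¹)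
    (x y : ℝ) : δ ^ 2 * (x ^ 2 + y ^ 2) + 2 * δ * (x * y) ≤ (x + a * y) ^ 2 := by
  have ha : 0 < a := hδ.trans_le hδa
  have hδa' : δ ≤ a⁻¹ := (le_inv_comm₀ hδ ha).2 haδ
  calc δ ^ 2 * (x ^ 2 + y ^ 2) + 2 * δ * (x * y)
      = δ * (δ * x ^ 2 + 2 * (x * y) + δ * y ^ 2) := by ring
    _ ≤ δ * (a⁻¹ * x ^ 2 + 2 * (x * y) + a * y ^ 2) := by gcongr
    _ = δ * a⁻¹ * (x + a * y) ^ 2 := by field_simp; ring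
    _ ≤ 1 * (x + a * y) ^ 2 := by
        gcongr
        exact (mul_inv_le_iff₀ ha).2 (by simpa using hδa)
    _ = (x + a * y) ^ 2 := one_mul _

variable {V : Type*} [NormedAddCommGroup V] [NormedSpace ℝ V] [MeasurableSpace V] [BorelSpace V]
  [ProperSpace V] {μ : Measure V} [IsFiniteMeasureOnCompacts μ] {P : Set V} {e d e₁ e₂ : V}

namespace IsTestFunction

variable {f g u : V → ℝ}

theorem hasDerivAt_integral_translate (hf : IsTestFunction f) (P : Set V) (e : V) :
    HasDerivAt (fun s : ℝ ↦ ∫ q in P, f (q + s • e) ∂μ) (∫ q in P, dirDeriv e f q ∂μ) 0 := by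
  have hf' := hf.dirDeriv e
  obtain ⟨C, hC⟩ := hf'.exists_norm_le
  obtain ⟨R, hR⟩ := hf'.exists_eq_zero_of_lt_norm
  have hmeas {φ : V → ℝ} (hφ : IsTestFunction φ) (s : ℝ) :
      AEStronglyMeasurable (fun q ↦ φ (q + s • e)) (μ.restrict P) :=
    (hφ.continuous.comp (by fun_prop)).aestronglyMeasurable
  have hbound : Integrable ((Metric.closedBall (0 : V) (R + ‖e‖)).indicator fun _ ↦ C)
      (μ.restrict P) :=
    ((integrable_indicator_iff measurableSet_closedBall).2 (integrableOn_const
      (isCompact_closedBall _ _).measure_lt_top.ne)).restrict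
  have h := (hasDerivAt_integral_of_dominated_loc_of_deriv_le (𝕜 := ℝ) (x₀ := (0 : ℝ))
    (Metric.ball_mem_nhds 0 one_pos) (.of_forall (hmeas hf)) (by simpa using hf.integrable)
    (hmeas hf' 0) (.of_forall fun q s hs ↦ ?_) hbound
    (.of_forall fun q s _ ↦ hf.hasDerivAt_line q e s)).2
  · simpa using h
  · by_cases hq : q ∈ Metric.closedBall (0 : V) (R + ‖e‖)
    · simpa [hq] using hC (q + s • e)
    · rw [mem_closedBall_zero_iff, not_le] at hq
      have hse : ‖s • e‖ ≤ ‖e‖ := by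
        rw [norm_smul]
        exact mul_le_of_le_one_left (norm_nonneg e) (mem_ball_zero_iff.1 hs).le
      rw [hR _ (by linarith [norm_le_add_norm_add q (s • e)])]
      simpa using Set.indicator_nonneg (fun _ _ ↦ (norm_nonneg _).trans (hC 0)) q

variable [μ.IsAddRightInvariant]

theorem integral_dirDeriv_nonpos (hf : IsTestFunction f) (hf₀ : ∀ q, 0 ≤ f q)
    (hPm : MeasurableSet P) (hP : IsForwardClosed P e) : ∫ q in P, dirDeriv e f q ∂μ ≤ 0 := by
  have hle (s : ℝ) (hs : 0 ≤ s) : ∫ q in P, f (q + s • e) ∂μ ≤ ∫ q in P, f q ∂μ := by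
    have hint : Integrable (P.indicator f) μ := hf.integrable.indicator hPm
    rw [← integral_indicator hPm, ← integral_indicator hPm,
      ← integral_add_right_eq_self (P.indicator f) (s • e)]
    refine integral_mono_of_nonneg (.of_forall fun q ↦ Set.indicator_nonneg (fun _ _ ↦ hf₀ _) q)
      (hint.comp_add_right _) (.of_forall fun q ↦ ?_)
    by_cases hq : q ∈ P
    · simp [hq, hP q hq s hs]
    · simpa [hq] using Set.indicator_nonneg (fun _ _ ↦ hf₀ _) (q + s • e)
  refine le_of_tendsto (hf.hasDerivAt_integral_translate P e).tendsto_slope_zero_right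
    (eventually_mem_nhdsWithin.mono fun s (hs : 0 < s) ↦ ?_)
  simpa using mul_nonpos_of_nonneg_of_nonpos (inv_pos.2 hs).le (sub_nonpos.2 (hle s hs.le))

theorem integral_dirDeriv_eq_zero (hf : IsTestFunction f) (hPm : MeasurableSet P)
    (hP : IsForwardClosed P e) (hP' : IsForwardClosed P (-e)) :
    ∫ q in P, dirDeriv e f q ∂μ = 0 := by
  have hmem (q : V) (s : ℝ) : q + s • e ∈ P ↔ q ∈ P := by
    have hforward {q : V} (hq : q ∈ P) (s : ℝ) : q + s • e ∈ P := by
      rcases le_total 0 s with hs | hs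
      · exact hP q hq s hs
      · simpa using hP' q hq (-s) (neg_nonneg.2 hs)
    exact ⟨fun h ↦ by simpa [add_assoc, ← add_smul] using hforward h (-s), fun h ↦ hforward h s⟩
  have hconst (s : ℝ) : ∫ q in P, f (q + s • e) ∂μ = ∫ q in P, f q ∂μ := by
    rw [← integral_indicator hPm, ← integral_indicator hPm,
      ← integral_add_right_eq_self (P.indicator f) (s • e)]
    congr with q
    by_cases hq : q ∈ P <;> simp [hq, hmem]
  have h := hf.hasDerivAt_integral_translate (μ := μ) P e
  simp only [hconst] at h
  exact h.unique (hasDerivAt_const _ _)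

theorem integral_mul_dirDeriv (hf : IsTestFunction f) (hg : IsTestFunction g)
    (hP : IsParabolicDomain P e₁ e) :
    ∫ q in P, f q * dirDeriv e g q ∂μ = -∫ q in P, dirDeriv e f q * g q ∂μ := by
  have h := (hf.mul hg).integral_dirDeriv_eq_zero (μ := μ) hP.measurableSet hP.space hP.space_neg
  rw [hf.dirDeriv_mul hg, integral_add (hf.mul (hg.dirDeriv e)).integrable
    (hg.mul (hf.dirDeriv e)).integrable] at h
  simp only [mul_comm (dirDeriv e f _)]
  linarith

theorem integral_dirDeriv_sq (hu : IsTestFunction u) (hP : IsParabolicDomain P e₁ e) :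
    ∫ q in P, dirDeriv e u q ^ 2 ∂μ = -∫ q in P, u q * dirDeriv e (dirDeriv e u) q ∂μ := by
  rw [hu.integral_mul_dirDeriv (hu.dirDeriv e) hP, neg_neg]
  simp only [sq]

theorem integral_dirDeriv_dirDeriv_sq (hu : IsTestFunction u) (he : IsParabolicDomain P e₁ e)
    (hd : IsParabolicDomain P e₂ d) :
    ∫ q in P, dirDeriv e (dirDeriv d u) q ^ 2 ∂μ
      = ∫ q in P, dirDeriv e (dirDeriv e u) q * dirDeriv d (dirDeriv d u) q ∂μ := by
  have hue := hu.dirDeriv e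
  have hud := hu.dirDeriv d
  calc ∫ q in P, dirDeriv e (dirDeriv d u) q ^ 2 ∂μ
      = ∫ q in P, dirDeriv e (dirDeriv d u) q * dirDeriv d (dirDeriv e u) q ∂μ := by
        simp only [hu.dirDeriv_comm d e, sq]
    _ = -∫ q in P, dirDeriv d (dirDeriv e (dirDeriv d u)) q * dirDeriv e u q ∂μ :=
        (hud.dirDeriv e).integral_mul_dirDeriv hue hd
    _ = ∫ q in P, dirDeriv d (dirDeriv d u) q * dirDeriv e (dirDeriv e u) q ∂μ := by
        rw [(hud.dirDeriv d).integral_mul_dirDeriv hue he, hud.dirDeriv_comm d e]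
    _ = ∫ q in P, dirDeriv e (dirDeriv e u) q * dirDeriv d (dirDeriv d u) q ∂μ := by
        simp only [mul_comm]

theorem integral_mul_dirDeriv_dirDeriv_nonneg (hu : IsTestFunction u)
    (hP : IsParabolicDomain P e₁ e₂) :
    0 ≤ ∫ q in P, dirDeriv e₁ u q * dirDeriv e₂ (dirDeriv e₂ u) q ∂μ := by
  have hu₁ := hu.dirDeriv e₁
  have hu₂ := hu.dirDeriv e₂
  have hdecr := (hu₂.mul hu₂).integral_dirDeriv_nonpos (μ := μ) (fun _ ↦ mul_self_nonneg _)
    hP.measurableSet hP.time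
  rw [hu₂.dirDeriv_mul hu₂, integral_add (hu₂.mul (hu₂.dirDeriv e₁)).integrable
    (hu₂.mul (hu₂.dirDeriv e₁)).integrable] at hdecr
  rw [hu₁.integral_mul_dirDeriv hu₂ hP, hu.dirDeriv_comm e₂ e₁]
  simp only [mul_comm (dirDeriv e₁ (dirDeriv e₂ u) _)]
  linarith

theorem integral_sq_add_integral_sq_le {a : V → ℝ} {δ : ℝ} (hu : IsTestFunction u)
    (hP : IsParabolicDomain P e₁ e₂) (ha : Measurable a) (hδ : 0 < δ) (hδa : ∀ q, δ ≤ a q)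
    (haδ : ∀ q, a q ≤ δ⁻¹) :
    δ ^ 2 * (∫ q in P, dirDeriv e₁ u q ^ 2 ∂μ + ∫ q in P, dirDeriv e₂ (dirDeriv e₂ u) q ^ 2 ∂μ)
      ≤ ∫ q in P, (dirDeriv e₁ u q + a q * dirDeriv e₂ (dirDeriv e₂ u) q) ^ 2 ∂μ := by
  have hu₁ := hu.dirDeriv e₁
  have hu₂₂ := (hu.dirDeriv e₂).dirDeriv e₂
  have hint : Integrable
      (fun q ↦ (dirDeriv e₁ u q + a q * dirDeriv e₂ (dirDeriv e₂ u) q) ^ 2) (μ.restrict P) := by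
    exact ((hu₁.memLp 2).add (hu₂₂.memLp_smul_of_abs_le ha (fun q ↦
      (abs_of_nonneg (hδ.le.trans (hδa q))).trans_le (haδ q)) 2)).integrable_sq
  have hsq {f : V → ℝ} (hf : IsTestFunction f) : Integrable (fun q ↦ f q ^ 2) (μ.restrict P) :=
    (hf.memLp 2).integrable_sq
  have hcross := (hu₁.mul hu₂₂).integrable (μ := μ.restrict P)
  calc δ ^ 2 * (∫ q in P, dirDeriv e₁ u q ^ 2 ∂μ
        + ∫ q in P, dirDeriv e₂ (dirDeriv e₂ u) q ^ 2 ∂μ)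
      ≤ δ ^ 2 * (∫ q in P, dirDeriv e₁ u q ^ 2 ∂μ
          + ∫ q in P, dirDeriv e₂ (dirDeriv e₂ u) q ^ 2 ∂μ)
        + 2 * δ * ∫ q in P, dirDeriv e₁ u q * dirDeriv e₂ (dirDeriv e₂ u) q ∂μ :=
        le_add_of_nonneg_right
          (mul_nonneg (by positivity) (hu.integral_mul_dirDeriv_dirDeriv_nonneg hP))
    _ = ∫ q in P, (δ ^ 2 * (dirDeriv e₁ u q ^ 2 + dirDeriv e₂ (dirDeriv e₂ u) q ^ 2)
        + 2 * δ * (dirDeriv e₁ u q * dirDeriv e₂ (dirDeriv e₂ u) q)) ∂μ := by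
        rw [integral_add (((hsq hu₁).fun_add (hsq hu₂₂)).const_mul _) (hcross.const_mul _),
          integral_const_mul, integral_const_mul, integral_add (hsq hu₁) (hsq hu₂₂)]
    _ ≤ ∫ q in P, (dirDeriv e₁ u q + a q * dirDeriv e₂ (dirDeriv e₂ u) q) ^ 2 ∂μ :=
        integral_mono
          ((((hsq hu₁).fun_add (hsq hu₂₂)).const_mul _).fun_add (hcross.const_mul _)) hint fun q ↦
            sq_add_sq_add_mul_le_sq_add_mul hδ (hδa q) (haδ q) _ _

end IsTestFunction

end IntegrationByParts

section FullEstimate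

theorem sq_sum_mul_le_card_mul {κ : Type*} [Fintype κ] {A : κ → ℝ} {C : ℝ}
    (hA : ∀ i, |A i| ≤ C) (h : κ → ℝ) :
    (∑ i, A i * h i) ^ 2 ≤ Fintype.card κ * C ^ 2 * ∑ i, h i ^ 2 := by
  have hAC : ∑ i, A i ^ 2 ≤ Fintype.card κ * C ^ 2 := by
    simpa using Finset.sum_le_sum fun i (_ : i ∈ Finset.univ) ↦
      sq_le_sq.2 ((hA i).trans (le_abs_self C))
  exact (Finset.sum_mul_sq_le_sq_mul_sq _ A h).trans
    (mul_le_mul_of_nonneg_right hAC (by positivity))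

theorem sq_add_mul_zero_zero_le {m : ℕ} {A h : Fin (m + 1) → Fin (m + 1) → ℝ} {C : ℝ}
    (hA : ∀ j k, |A j k| ≤ C) (hAsymm : ∀ j k, A j k = A k j) (hhsymm : ∀ j k, h j k = h k j)
    (p r : ℝ) :
    (p + A 0 0 * h 0 0) ^ 2 ≤ 3 * (p + ∑ j, ∑ k, A j k * h j k - r) ^ 2 + 3 * r ^ 2
      + 24 * m ^ 2 * C ^ 2 * (∑ k, h 0 (Fin.succ k) ^ 2
        + ∑ j, ∑ k, h (Fin.succ j) (Fin.succ k) ^ 2) := by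
  set X := ∑ k, A 0 (Fin.succ k) * h 0 (Fin.succ k) with hX
  set Y := ∑ j, ∑ k, A (Fin.succ j) (Fin.succ k) * h (Fin.succ j) (Fin.succ k) with hY
  have hsplit : ∑ j, ∑ k, A j k * h j k = A 0 0 * h 0 0 + 2 * X + Y := by
    simp only [Fin.sum_univ_succ, Finset.sum_add_distrib, hAsymm (Fin.succ _) 0,
      hhsymm (Fin.succ _) 0, ← hX, ← hY]
    ring
  have hX2 : X ^ 2 ≤ m ^ 2 * C ^ 2 * ∑ k, h 0 (Fin.succ k) ^ 2 := by
    refine (sq_sum_mul_le_card_mul (fun k ↦ hA 0 (Fin.succ k)) _).trans ?_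
    rw [Fintype.card_fin]
    gcongr
    exact_mod_cast Nat.le_self_pow two_ne_zero m
  have hY2 : Y ^ 2 ≤ m ^ 2 * C ^ 2 * ∑ j, ∑ k, h (Fin.succ j) (Fin.succ k) ^ 2 := by
    have h := sq_sum_mul_le_card_mul
      (fun i : Fin m × Fin m ↦ hA (Fin.succ i.1) (Fin.succ i.2)) fun i ↦ h i.1.succ i.2.succ
    simpa [Fintype.sum_prod_type, ← hY, ← sq] using h
  rw [hsplit]
  nlinarith [sq_nonneg (p + (A 0 0 * h 0 0 + 2 * X + Y) - r - r),
    sq_nonneg (p + (A 0 0 * h 0 0 + 2 * X + Y) - r + 2 * X + Y),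
    sq_nonneg (r + 2 * X + Y), sq_nonneg (2 * X - Y)]

theorem exists_le_mul_of_absorption {c₁ c₂ κ : ℝ} (hc₁ : 0 < c₁) (hc₂ : 0 < c₂) (hκ : 0 < κ) :
    ∃ N, 0 < N ∧ ∀ R U S G G₀ A B M : ℝ, 0 ≤ U → 0 ≤ S → 0 ≤ G → 0 ≤ A → 0 ≤ B →
      c₁ * (U + 2 * G + S) ≤ R → c₂ * (B + A) ≤ 3 * R + 3 * U + κ * (M + S) →
      (∀ ε, 0 < ε → 2 * M ≤ ε * A + ε⁻¹ * S) → 2 * G₀ ≤ U + A →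
      U + (G₀ + G) + B + (A + 2 * M + S) ≤ N * R := by
  set L := 3 + κ + κ ^ 2 / (2 * c₂)
  refine ⟨2 / c₁ + 6 / c₂ * (3 + L / c₁), by positivity, ?_⟩
  intro R U S G G₀ A B M hU hS hG hA hB hR hAB hM hG₀
  have htan : U + 2 * G + S ≤ R / c₁ := (le_div_iff₀' hc₁).2 hR
  have hκM : κ * M ≤ c₂ / 2 * A + κ ^ 2 / (2 * c₂) * S := by
    have h := mul_le_mul_of_nonneg_left (hM (c₂ / κ) (by positivity)) hκ.le
    rw [show κ * (c₂ / κ * A + (c₂ / κ)⁻¹ * S) = 2 * (c₂ / 2 * A + κ ^ 2 / (2 * c₂) * S) by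
      field_simp] at h
    linarith
  have hL3 : 3 * U + (κ + κ ^ 2 / (2 * c₂)) * S ≤ L * (R / c₁) :=
    calc 3 * U + (κ + κ ^ 2 / (2 * c₂)) * S ≤ L * U + L * S := by
          gcongr
          · linarith [show 0 ≤ κ ^ 2 / (2 * c₂) by positivity]
          · linarith
      _ ≤ L * (R / c₁) := by rw [← mul_add]; gcongr; linarith
  have hnormal : A + B ≤ 2 / c₂ * ((3 + L / c₁) * R) := by
    have h : (A + B) * c₂ ≤ 2 * ((3 + L / c₁) * R) := by
      rw [add_mul 3, div_mul_eq_mul_div, ← mul_div_assoc']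
      nlinarith
    rw [div_mul_eq_mul_div]
    exact (le_div_iff₀ hc₂).2 h
  have hmixed : 2 * M ≤ A + S := by simpa using hM 1 one_pos
  calc U + (G₀ + G) + B + (A + 2 * M + S) ≤ 2 * (R / c₁) + 3 * (A + B) := by linarith
    _ ≤ 2 * (R / c₁) + 3 * (2 / c₂ * ((3 + L / c₁) * R)) := by gcongr
    _ = (2 / c₁ + 6 / c₂ * (3 + L / c₁)) * R := by ring

theorem two_mul_integral_mul_le {α : Type*} [MeasurableSpace α] {ν : Measure α} {f g : α → ℝ}
    (hf : MemLp f 2 ν) (hg : MemLp g 2 ν) {ε : ℝ} (hε : 0 < ε) :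
    2 * ∫ q, f q * g q ∂ν ≤ ε * ∫ q, f q ^ 2 ∂ν + ε⁻¹ * ∫ q, g q ^ 2 ∂ν := by
  have hf2 := hf.integrable_sq.const_mul ε
  have hg2 := hg.integrable_sq.const_mul ε⁻¹
  rw [← integral_const_mul, ← integral_const_mul, ← integral_const_mul, ← integral_add hf2 hg2]
  refine integral_mono ((hf.integrable_mul hg).const_mul 2) (hf2.add hg2) fun q ↦ ?_
  have hsq : ε⁻¹ * (ε * f q - g q) ^ 2 = ε * f q ^ 2 - 2 * (f q * g q) + ε⁻¹ * g q ^ 2 := by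
    field_simp
    ring
  have hnonneg := mul_nonneg (inv_pos.2 hε).le (sq_nonneg (ε * f q - g q))
  simp only
  linarith

variable {V : Type*} [NormedAddCommGroup V] [NormedSpace ℝ V] [MeasurableSpace V] [BorelSpace V]
  [ProperSpace V] {μ : Measure V} [IsFiniteMeasureOnCompacts μ] [μ.IsAddRightInvariant]
  {P : Set V} {τ : V} {ι : Type*} [Fintype ι] {D : ι → V} {u : V → ℝ} {lam : ℝ}

namespace IsTestFunction

theorem integral_sum_dirDeriv_dirDeriv_sq (hu : IsTestFunction u)
    (hP : ∀ j, IsParabolicDomain P τ (D j)) :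
    ∫ q in P, (∑ j, dirDeriv (D j) (dirDeriv (D j) u) q) ^ 2 ∂μ
      = ∑ j, ∑ k, ∫ q in P, dirDeriv (D j) (dirDeriv (D k) u) q ^ 2 ∂μ := by
  have hint (j k : ι) : Integrable (fun q ↦ dirDeriv (D j) (dirDeriv (D j) u) q
      * dirDeriv (D k) (dirDeriv (D k) u) q) (μ.restrict P) :=
    (((hu.dirDeriv _).dirDeriv _).mul ((hu.dirDeriv _).dirDeriv _)).integrable
  simp only [sq (Finset.sum _ _), Finset.sum_mul_sum]
  rw [integral_finsetSum _ fun j _ ↦ integrable_finsetSum _ fun k _ ↦ hint j k]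
  refine Finset.sum_congr rfl fun j _ ↦ ?_
  rw [integral_finsetSum _ fun k _ ↦ hint j k]
  exact Finset.sum_congr rfl fun k _ ↦ (hu.integral_dirDeriv_dirDeriv_sq (hP j) (hP k)).symm

theorem integral_laplaceResolvent_sq (hu : IsTestFunction u)
    (hP : ∀ j, IsParabolicDomain P τ (D j)) :
    ∫ q in P, laplaceResolvent D lam u q ^ 2 ∂μ
      = lam ^ 2 * ∫ q in P, u q ^ 2 ∂μ + 2 * (lam * ∑ j, ∫ q in P, dirDeriv (D j) u q ^ 2 ∂μ)
        + ∑ j, ∑ k, ∫ q in P, dirDeriv (D j) (dirDeriv (D k) u) q ^ 2 ∂μ := by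
  have hΔ : IsTestFunction fun q ↦ ∑ j, dirDeriv (D j) (dirDeriv (D j) u) q :=
    .sum _ fun j ↦ (hu.dirDeriv (D j)).dirDeriv (D j)
  have hcross : ∫ q in P, u q * ∑ j, dirDeriv (D j) (dirDeriv (D j) u) q ∂μ
      = -∑ j, ∫ q in P, dirDeriv (D j) u q ^ 2 ∂μ := by
    simp only [Finset.mul_sum]
    rw [integral_finsetSum _ fun j _ ↦ (hu.mul ((hu.dirDeriv _).dirDeriv _)).integrable,
      ← Finset.sum_neg_distrib]
    exact Finset.sum_congr rfl fun j _ ↦ by rw [hu.integral_dirDeriv_sq (hP j), neg_neg]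
  have hexpand (q : V) : laplaceResolvent D lam u q ^ 2 = lam ^ 2 * u q ^ 2
      + -2 * lam * (u q * ∑ j, dirDeriv (D j) (dirDeriv (D j) u) q)
      + (∑ j, dirDeriv (D j) (dirDeriv (D j) u) q) ^ 2 := by
    rw [laplaceResolvent, smul_eq_mul]; ring
  have hu2 : Integrable (fun q ↦ lam ^ 2 * u q ^ 2) (μ.restrict P) :=
    (hu.memLp 2).integrable_sq.const_mul _
  have huΔ := (hu.mul hΔ).integrable (μ := μ.restrict P) |>.const_mul (-2 * lam)
  simp only [hexpand]
  rw [integral_add (hu2.fun_add huΔ) (hΔ.memLp 2).integrable_sq, integral_add hu2 huΔ,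
    integral_const_mul, integral_const_mul, hcross, hu.integral_sum_dirDeriv_dirDeriv_sq hP]
  ring

theorem two_mul_sum_integral_dirDeriv_dirDeriv_sq_le {e τ' : V} (hu : IsTestFunction u)
    (he : IsParabolicDomain P τ' e) (hP : ∀ j, IsParabolicDomain P τ (D j)) {ε : ℝ} (hε : 0 < ε) :
    2 * ∑ k, ∫ q in P, dirDeriv e (dirDeriv (D k) u) q ^ 2 ∂μ
      ≤ ε * ∫ q in P, dirDeriv e (dirDeriv e u) q ^ 2 ∂μ
        + ε⁻¹ * ∑ j, ∑ k, ∫ q in P, dirDeriv (D j) (dirDeriv (D k) u) q ^ 2 ∂μ := by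
  have hee := (hu.dirDeriv e).dirDeriv e
  have hmixed : ∑ k, ∫ q in P, dirDeriv e (dirDeriv (D k) u) q ^ 2 ∂μ
      = ∫ q in P, dirDeriv e (dirDeriv e u) q * ∑ k, dirDeriv (D k) (dirDeriv (D k) u) q ∂μ := by
    simp only [Finset.mul_sum]
    rw [integral_finsetSum _ fun k _ ↦ (hee.mul ((hu.dirDeriv _).dirDeriv _)).integrable]
    exact Finset.sum_congr rfl fun k _ ↦ hu.integral_dirDeriv_dirDeriv_sq he (hP k)
  rw [hmixed, ← hu.integral_sum_dirDeriv_dirDeriv_sq hP]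
  exact two_mul_integral_mul_le (hee.memLp 2)
    ((IsTestFunction.sum _ fun k ↦ (hu.dirDeriv (D k)).dirDeriv (D k)).memLp 2) hε

theorem two_mul_integral_dirDeriv_sq_le {e : V} (hu : IsTestFunction u)
    (he : IsParabolicDomain P τ e) (hlam : 0 < lam) :
    2 * (lam * ∫ q in P, dirDeriv e u q ^ 2 ∂μ)
      ≤ lam ^ 2 * ∫ q in P, u q ^ 2 ∂μ + ∫ q in P, dirDeriv e (dirDeriv e u) q ^ 2 ∂μ := by
  have hue := (hu.dirDeriv e).dirDeriv e
  have h := two_mul_integral_mul_le ((hu.const_smul (-1)).memLp 2 (μ := μ.restrict P))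
    (hue.memLp 2) hlam
  have hneg : 2 * ∫ q in P, dirDeriv e u q ^ 2 ∂μ
      ≤ lam * ∫ q in P, u q ^ 2 ∂μ
        + lam⁻¹ * ∫ q in P, dirDeriv e (dirDeriv e u) q ^ 2 ∂μ := by
    rw [hu.integral_dirDeriv_sq he, ← integral_neg]
    simpa using h
  calc 2 * (lam * ∫ q in P, dirDeriv e u q ^ 2 ∂μ)
      = lam * (2 * ∫ q in P, dirDeriv e u q ^ 2 ∂μ) := by ring
    _ ≤ lam * (lam * ∫ q in P, u q ^ 2 ∂μ
        + lam⁻¹ * ∫ q in P, dirDeriv e (dirDeriv e u) q ^ 2 ∂μ) := by gcongr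
    _ = _ := by field_simp

end IsTestFunction

/-- The square of the norm of the parabolic Sobolev space `W₂^{1,2}` of the measure `ν`, with time
direction `τ`, space directions `D` and weights `lam ^ 2` and `lam` on `u` and on its gradient. -/
noncomputable def parabolicNormSq (ν : Measure V) (τ : V) (D : ι → V) (lam : ℝ) (u : V → ℝ) : ℝ :=
  lam ^ 2 * ∫ q, u q ^ 2 ∂ν + lam * ∑ j, ∫ q, dirDeriv (D j) u q ^ 2 ∂ν
    + ∫ q, dirDeriv τ u q ^ 2 ∂ν + ∑ j, ∑ k, ∫ q, dirDeriv (D j) (dirDeriv (D k) u) q ^ 2 ∂ν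

namespace IsTestFunction

variable {m : ℕ} {D : Fin (m + 1) → V} {a : V → Fin (m + 1) → Fin (m + 1) → ℝ} {δ : ℝ}

theorem integral_normal_sq_le (hu : IsTestFunction u) (hP : IsParabolicDomain P τ (D 0))
    (hδ : 0 < δ) (hameas : ∀ j k, Measurable fun q ↦ a q j k) (ha : ∀ q, IsElliptic δ (a q)) :
    δ ^ 2 * (∫ q in P, dirDeriv τ u q ^ 2 ∂μ
        + ∫ q in P, dirDeriv (D 0) (dirDeriv (D 0) u) q ^ 2 ∂μ)
      ≤ 3 * ∫ q in P, parabolicOp τ D a lam u q ^ 2 ∂μ + 3 * (lam ^ 2 * ∫ q in P, u q ^ 2 ∂μ)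
        + 24 * m ^ 2 * δ⁻¹ ^ 2
          * (∑ k, ∫ q in P, dirDeriv (D 0) (dirDeriv (D (Fin.succ k)) u) q ^ 2 ∂μ
            + ∑ j, ∑ k, ∫ q in P,
                dirDeriv (D (Fin.succ j)) (dirDeriv (D (Fin.succ k)) u) q ^ 2 ∂μ) := by
  refine (hu.integral_sq_add_integral_sq_le hP (hameas 0 0) hδ (fun q ↦ (ha q).le_diag 0)
    fun q ↦ (ha q).diag_le 0).trans ?_
  have hsq (j k : Fin (m + 1)) : Integrable (fun q ↦ dirDeriv (D j) (dirDeriv (D k) u) q ^ 2)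
      (μ.restrict P) := (((hu.dirDeriv (D k)).dirDeriv (D j)).memLp 2).integrable_sq
  have hop : Integrable (fun q ↦ 3 * parabolicOp τ D a lam u q ^ 2) (μ.restrict P) :=
    (hu.memLp_parabolicOp hameas (fun q ↦ (ha q).abs_le hδ) 2).integrable_sq.const_mul 3
  have hlow : Integrable (fun q ↦ 3 * (lam * u q) ^ 2) (μ.restrict P) :=
    ((hu.const_smul lam).memLp 2).integrable_sq.const_mul 3
  have hrow := integrable_finsetSum Finset.univ fun k _ ↦ hsq 0 (Fin.succ k)
  have hblock := integrable_finsetSum Finset.univ fun j _ ↦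
    integrable_finsetSum Finset.univ fun k _ ↦ hsq (Fin.succ j) (Fin.succ k)
  have hbound := (hop.fun_add hlow).fun_add
    ((hrow.fun_add hblock).const_mul (24 * m ^ 2 * δ⁻¹ ^ 2))
  refine (integral_mono_of_nonneg (.of_forall fun q ↦ sq_nonneg _) hbound
    (.of_forall fun q ↦ sq_add_mul_zero_zero_le (fun j k ↦ (ha q).abs_le hδ j k) (ha q).symm
      (h := fun j k ↦ dirDeriv (D j) (dirDeriv (D k) u) q)
      (fun j k ↦ congrFun (hu.dirDeriv_comm (D j) (D k)) q) _ (lam * u q))).trans_eq ?_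
  rw [integral_add (hop.fun_add hlow) ((hrow.fun_add hblock).const_mul _), integral_add hop hlow,
    integral_const_mul, integral_const_mul, integral_const_mul, integral_add hrow hblock,
    integral_finsetSum _ fun k _ ↦ hsq 0 (Fin.succ k), integral_finsetSum _ fun j _ ↦
      integrable_finsetSum Finset.univ fun k _ ↦ hsq (Fin.succ j) (Fin.succ k)]
  simp only [integral_finsetSum _ fun k _ ↦ hsq _ (Fin.succ k), mul_pow, integral_const_mul]

end IsTestFunction

theorem exists_parabolicNormSq_le (m : ℕ) {δ : ℝ} (hδ : 0 < δ) :
    ∃ N, 0 < N ∧ ∀ {D : Fin (m + 1) → V} {a : V → Fin (m + 1) → Fin (m + 1) → ℝ} {u : V → ℝ}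
      {lam : ℝ}, IsTestFunction u → (∀ j, IsParabolicDomain P τ (D j)) → 0 < lam →
      (∀ j k, Measurable fun q ↦ a q j k) → (∀ q, IsElliptic δ (a q)) →
      δ ^ 4 * ∫ q in P, laplaceResolvent (fun j ↦ D (Fin.succ j)) lam u q ^ 2 ∂μ
        ≤ ∫ q in P, parabolicOp τ D a lam u q ^ 2 ∂μ →
      parabolicNormSq (μ.restrict P) τ D lam u
        ≤ N * ∫ q in P, parabolicOp τ D a lam u q ^ 2 ∂μ := by
  obtain ⟨N, hN, hle⟩ := exists_le_mul_of_absorption (c₁ := δ ^ 4) (c₂ := δ ^ 2)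
    (κ := 24 * m ^ 2 * δ⁻¹ ^ 2 + 1) (by positivity) (by positivity) (by positivity)
  refine ⟨N, hN, fun {D a u lam} hu hP hlam hameas ha htan ↦ ?_⟩
  have hint_nonneg (f : V → ℝ) : 0 ≤ ∫ q in P, f q ^ 2 ∂μ := integral_nonneg fun q ↦ sq_nonneg _
  rw [hu.integral_laplaceResolvent_sq fun j ↦ hP (Fin.succ j)] at htan
  have h := hle _ _ _ _ (lam * ∫ q in P, dirDeriv (D 0) u q ^ 2 ∂μ) _ _ _
    (mul_nonneg (sq_nonneg lam) (hint_nonneg _))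
    (Finset.sum_nonneg fun j _ ↦ Finset.sum_nonneg fun k _ ↦ hint_nonneg _)
    (mul_nonneg hlam.le (Finset.sum_nonneg fun j _ ↦ hint_nonneg _))
    (hint_nonneg _) (hint_nonneg _) htan
    ((hu.integral_normal_sq_le (lam := lam) (hP 0) hδ hameas ha).trans ?_)
    (fun ε hε ↦ hu.two_mul_sum_integral_dirDeriv_dirDeriv_sq_le (hP 0)
      (fun j ↦ hP (Fin.succ j)) hε) (hu.two_mul_integral_dirDeriv_sq_le (hP 0) hlam)
  · refine le_trans (le_of_eq ?_) h
    simp only [parabolicNormSq, Fin.sum_univ_succ, Finset.sum_add_distrib,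
      hu.dirDeriv_comm (D (Fin.succ _)) (D 0)]
    ring
  · gcongr
    linarith

end FullEstimate

section HalfSpace

open Set (Ioi univ)

namespace IsTestFunction

variable {V V' F ι : Type*} [NormedAddCommGroup V] [NormedSpace ℝ V] [NormedAddCommGroup V']
  [NormedSpace ℝ V'] [NormedAddCommGroup F] [NormedSpace ℝ F] [Fintype ι] {u : V → F} {lam : ℝ}

theorem laplaceResolvent_comp_equiv (hu : IsTestFunction u) (e : V' ≃L[ℝ] V) (D : ι → V') :
    laplaceResolvent D lam (fun z ↦ u (e z))
      = fun z ↦ laplaceResolvent (fun j ↦ e (D j)) lam u (e z) := by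
  funext z
  simp only [laplaceResolvent, hu.dirDeriv_comp_equiv, (hu.dirDeriv _).dirDeriv_comp_equiv]

theorem parabolicOp_comp_equiv (hu : IsTestFunction u) (e : V' ≃L[ℝ] V) (τ : V') (D : ι → V')
    (a : V → ι → ι → ℝ) :
    parabolicOp τ D (fun z ↦ a (e z)) lam (fun z ↦ u (e z))
      = fun z ↦ parabolicOp (e τ) (fun j ↦ e (D j)) a lam u (e z) := by
  funext z
  simp only [parabolicOp, hu.dirDeriv_comp_equiv, (hu.dirDeriv _).dirDeriv_comp_equiv]

end IsTestFunction

theorem isParabolicDomain_Ioi_prod_univ {X : Type*} [NormedAddCommGroup X] [NormedSpace ℝ X]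
    [MeasurableSpace X] (x : X) :
    IsParabolicDomain (Ioi (0 : ℝ) ×ˢ (univ : Set X)) (1, 0) (0, x) where
  measurableSet := measurableSet_Ioi.prod .univ
  time q hq s hs := by simpa using add_pos_of_pos_of_nonneg hq.1 hs
  space q hq s _ := by simpa using hq
  space_neg q hq s _ := by simpa using hq

/-- The identification `((t, x¹), x') ↦ (t, (x¹, x'))`. The tangential variable `x'` carries the
Euclidean norm on the left, as the Fourier transform requires. -/
noncomputable def splitEquiv (m : ℕ) :
    ((ℝ × ℝ) × EuclideanSpace ℝ (Fin m)) ≃L[ℝ] ℝ × (Fin (m + 1) → ℝ) :=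
  (ContinuousLinearEquiv.prodAssoc ℝ ℝ ℝ (EuclideanSpace ℝ (Fin m))).trans
    ((ContinuousLinearEquiv.refl ℝ ℝ).prodCongr
      (((ContinuousLinearEquiv.refl ℝ ℝ).prodCongr (EuclideanSpace.equiv (Fin m) ℝ)).trans
        (Fin.consEquivL ℝ fun _ ↦ ℝ)))

variable {m : ℕ}

theorem splitEquiv_apply (z : (ℝ × ℝ) × EuclideanSpace ℝ (Fin m)) :
    splitEquiv m z = (z.1.1, Fin.cons z.1.2 z.2.ofLp) := rfl

theorem splitEquiv_time : splitEquiv m ((1, 0), 0) = (1, 0) := by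
  refine Prod.ext rfl (funext fun j ↦ ?_)
  refine Fin.cases ?_ (fun i ↦ ?_) j <;> simp [splitEquiv_apply]

theorem splitEquiv_tangentialDir (j : Fin m) :
    splitEquiv m (tangentialDir (ℝ × ℝ) j) = (0, Pi.single j.succ 1) := by
  refine Prod.ext rfl (funext fun k ↦ ?_)
  refine Fin.cases ?_ (fun i ↦ ?_) k <;>
    simp [splitEquiv_apply, tangentialDir, Pi.single_apply]

theorem splitEquiv_spatialDir (j : Fin (m + 1)) :
    splitEquiv m (spatialDir (0, 1) j) = (0, Pi.single j 1) := by
  refine Fin.cases ?_ splitEquiv_tangentialDir j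
  refine Prod.ext rfl (funext fun k ↦ ?_)
  refine Fin.cases ?_ (fun i ↦ ?_) k <;> simp [splitEquiv_apply, spatialDir]

theorem measurePreserving_splitEquiv : MeasurePreserving (splitEquiv m) := by
  have hid := MeasurePreserving.id (volume : Measure ℝ)
  have h := (hid.prod (volume_preserving_piFinSuccAbove (fun _ : Fin (m + 1) ↦ ℝ) 0).symm).comp
    ((hid.prod (hid.prod (PiLp.volume_preserving_ofLp (Fin m)))).comp
      volume_preserving_prodAssoc)
  convert! h using 1
  funext z
  refine Prod.ext rfl (funext fun j ↦ ?_)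
  refine Fin.cases ?_ (fun i ↦ ?_) j <;> rfl

theorem integral_comp_splitEquiv (f : ℝ × (Fin (m + 1) → ℝ) → ℝ) :
    ∫ z, f (splitEquiv m z) ∂(volume.restrict (Ioi (0 : ℝ) ×ˢ univ)).prod volume
      = ∫ z in Ioi (0 : ℝ) ×ˢ univ, f z := by
  have hmeasure : (volume.restrict (Ioi (0 : ℝ) ×ˢ univ)).prod volume
      = volume.restrict (splitEquiv m ⁻¹' (Ioi (0 : ℝ) ×ˢ univ)) := by
    conv_lhs => rw [← Measure.restrict_univ (μ := (volume : Measure (EuclideanSpace ℝ (Fin m)))),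
      Measure.prod_restrict]
    congr 1
    ext z
    simp [splitEquiv_apply]
  rw [hmeasure]
  exact measurePreserving_splitEquiv.setIntegral_preimage_emb
    (splitEquiv m).toHomeomorph.measurableEmbedding f _

theorem IsTestFunction.integral_laplaceResolvent_sq_le_halfSpace {δ lam : ℝ}
    {a : ℝ × ℝ → Fin (m + 1) → Fin (m + 1) → ℝ} {u : ℝ × (Fin (m + 1) → ℝ) → ℝ}
    (hu : IsTestFunction u) (hδ : 0 < δ) (hδ1 : δ ≤ 1) (hlam : 0 < lam)
    (hameas : ∀ j k, Measurable fun q ↦ a q j k) (ha : ∀ q, IsElliptic δ (a q)) :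
    δ ^ 4 * ∫ z in Ioi (0 : ℝ) ×ˢ univ,
        laplaceResolvent (fun j : Fin m ↦ (0, Pi.single j.succ 1)) lam u z ^ 2
      ≤ ∫ z in Ioi (0 : ℝ) ×ˢ univ, parabolicOp (1, 0) (fun j ↦ (0, Pi.single j 1))
        (fun z ↦ a (z.1, z.2 0)) lam u z ^ 2 := by
  have h := (hu.comp_equiv (splitEquiv m)).integral_laplaceResolvent_sq_le (μ := volume)
    (isParabolicDomain_Ioi_prod_univ 1) hδ hδ1 hlam hameas ha
  have hop : parabolicOp ((1, 0), 0) (spatialDir (0, 1)) (fun z ↦ a z.1) lam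
      (fun z ↦ u (splitEquiv m z)) = fun z ↦ parabolicOp (1, 0) (fun j ↦ (0, Pi.single j 1))
        (fun z ↦ a (z.1, z.2 0)) lam u (splitEquiv m z) :=
    (hu.parabolicOp_comp_equiv (splitEquiv m) _ _ fun z ↦ a (z.1, z.2 0)).trans
      (by simp only [splitEquiv_time, splitEquiv_spatialDir])
  rw [hu.laplaceResolvent_comp_equiv] at h
  simp only [hop, splitEquiv_tangentialDir] at h
  rwa [integral_comp_splitEquiv fun z ↦ laplaceResolvent _ lam u z ^ 2,
    integral_comp_splitEquiv fun z ↦ parabolicOp _ _ _ lam u z ^ 2] at h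

theorem exists_parabolicNormSq_halfSpace_le (m : ℕ) {δ : ℝ} (hδ : 0 < δ) (hδ1 : δ ≤ 1) :
    ∃ N, 0 < N ∧ ∀ {a : ℝ × ℝ → Fin (m + 1) → Fin (m + 1) → ℝ} {u : ℝ × (Fin (m + 1) → ℝ) → ℝ}
      {lam : ℝ}, IsTestFunction u → 0 < lam → (∀ j k, Measurable fun q ↦ a q j k) →
      (∀ q, IsElliptic δ (a q)) →
      parabolicNormSq (volume.restrict (Ioi (0 : ℝ) ×ˢ univ)) (1, 0) (fun j ↦ (0, Pi.single j 1))
          lam u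
        ≤ N * ∫ z in Ioi (0 : ℝ) ×ˢ univ, parabolicOp (1, 0) (fun j ↦ (0, Pi.single j 1))
          (fun z ↦ a (z.1, z.2 0)) lam u z ^ 2 := by
  have : (volume : Measure (ℝ × (Fin (m + 1) → ℝ))).IsAddHaarMeasure :=
    Measure.prod.instIsAddHaarMeasure volume volume
  obtain ⟨N, hN, hle⟩ := exists_parabolicNormSq_le
    (μ := (volume : Measure (ℝ × (Fin (m + 1) → ℝ)))) (P := Ioi 0 ×ˢ univ) (τ := (1, 0)) m hδ
  exact ⟨N, hN, fun hu hlam hameas ha ↦ hle hu (fun j ↦ isParabolicDomain_Ioi_prod_univ _) hlam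
    (fun j k ↦ (hameas j k).comp (by fun_prop)) (fun z ↦ ha _)
    (hu.integral_laplaceResolvent_sq_le_halfSpace hδ hδ1 hlam hameas ha)⟩

end HalfSpace

section LowerOrderTerms

variable {V ι : Type*} [NormedAddCommGroup V] [NormedSpace ℝ V] [Fintype ι] {τ : V} {D : ι → V}
  {a : V → ι → ι → ℝ} {b : V → ι → ℝ} {c : V → ℝ} {lam K C : ℝ} {u : V → ℝ}

/-- The operator `u ↦ ∂_τ u + Σ_{j,k} a^{jk} ∂_{D_j} ∂_{D_k} u + Σ_j b^j ∂_{D_j} u + c u - lam u`,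
which is `L - lam` in the notation of the theorem. -/
noncomputable def fullParabolicOp (τ : V) (D : ι → V) (a : V → ι → ι → ℝ) (b : V → ι → ℝ)
    (c : V → ℝ) (lam : ℝ) (u : V → ℝ) : V → ℝ := fun z ↦
  parabolicOp τ D a lam u z + ∑ j, b z j * dirDeriv (D j) u z + c z * u z

theorem parabolicOp_sq_le (hb : ∀ z j, |b z j| ≤ K) (hc : ∀ z, |c z| ≤ K) (z : V) :
    parabolicOp τ D a lam u z ^ 2 ≤ 3 * fullParabolicOp τ D a b c lam u z ^ 2
      + 3 * (Fintype.card ι * K ^ 2) * ∑ j, dirDeriv (D j) u z ^ 2 + 3 * K ^ 2 * u z ^ 2 := by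
  have hbu := sq_sum_mul_le_card_mul (hb z) fun j ↦ dirDeriv (D j) u z
  have hcu : (c z * u z) ^ 2 ≤ K ^ 2 * u z ^ 2 := by
    rw [mul_pow]
    exact mul_le_mul_of_nonneg_right (sq_le_sq.2 ((hc z).trans (le_abs_self K))) (sq_nonneg _)
  rw [fullParabolicOp]
  set p := parabolicOp τ D a lam u z
  set q := ∑ j, b z j * dirDeriv (D j) u z
  nlinarith [sq_nonneg (p + 2 * q + c z * u z), sq_nonneg (p + q + 2 * (c z * u z)),
    sq_nonneg (q - c z * u z)]

variable [MeasurableSpace V] [BorelSpace V] [SecondCountableTopology V] {ν : Measure V}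
  [IsFiniteMeasureOnCompacts ν]

namespace IsTestFunction

theorem memLp_fullParabolicOp (hu : IsTestFunction u) (ha : ∀ j k, Measurable fun z ↦ a z j k)
    (haC : ∀ z j k, |a z j k| ≤ C) (hb : ∀ j, Measurable fun z ↦ b z j)
    (hbK : ∀ z j, |b z j| ≤ K) (hc : Measurable c) (hcK : ∀ z, |c z| ≤ K) (p : ENNReal) :
    MemLp (fullParabolicOp τ D a b c lam u) p ν :=
  ((hu.memLp_parabolicOp ha haC p).add (memLp_finsetSum _ fun j _ ↦
    (hu.dirDeriv (D j)).memLp_smul_of_abs_le (hb j) (fun z ↦ hbK z j) p)).add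
    (hu.memLp_smul_of_abs_le hc hcK p)

theorem integral_parabolicOp_sq_le (hu : IsTestFunction u)
    (ha : ∀ j k, Measurable fun z ↦ a z j k) (haC : ∀ z j k, |a z j k| ≤ C)
    (hb : ∀ j, Measurable fun z ↦ b z j) (hbK : ∀ z j, |b z j| ≤ K) (hc : Measurable c)
    (hcK : ∀ z, |c z| ≤ K) :
    ∫ z, parabolicOp τ D a lam u z ^ 2 ∂ν ≤ 3 * ∫ z, fullParabolicOp τ D a b c lam u z ^ 2 ∂ν
      + 3 * (Fintype.card ι * K ^ 2) * ∑ j, ∫ z, dirDeriv (D j) u z ^ 2 ∂ν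
      + 3 * K ^ 2 * ∫ z, u z ^ 2 ∂ν := by
  have hgrad (j : ι) : Integrable (fun z ↦ dirDeriv (D j) u z ^ 2) ν :=
    ((hu.dirDeriv (D j)).memLp 2).integrable_sq
  have hfull : Integrable (fun z ↦ 3 * fullParabolicOp τ D a b c lam u z ^ 2) ν :=
    (hu.memLp_fullParabolicOp ha haC hb hbK hc hcK 2).integrable_sq.const_mul _
  have hsum := (integrable_finsetSum Finset.univ fun j _ ↦ hgrad j).const_mul
    (3 * (Fintype.card ι * K ^ 2))
  have hu2 : Integrable (fun z ↦ 3 * K ^ 2 * u z ^ 2) ν :=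
    (hu.memLp 2).integrable_sq.const_mul _
  refine (integral_mono_of_nonneg (.of_forall fun z ↦ sq_nonneg _)
    ((hfull.fun_add hsum).fun_add hu2) (.of_forall (parabolicOp_sq_le hbK hcK))).trans_eq ?_
  rw [integral_add (hfull.fun_add hsum) hu2, integral_add hfull hsum, integral_const_mul,
    integral_const_mul, integral_const_mul, integral_finsetSum _ fun j _ ↦ hgrad j]

theorem parabolicNormSq_le_of_absorption {N : ℝ} (hu : IsTestFunction u)
    (ha : ∀ j k, Measurable fun z ↦ a z j k) (haC : ∀ z j k, |a z j k| ≤ C)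
    (hb : ∀ j, Measurable fun z ↦ b z j) (hbK : ∀ z j, |b z j| ≤ K) (hc : Measurable c)
    (hcK : ∀ z, |c z| ≤ K) (hN : 0 ≤ N)
    (hlam₁ : 6 * N * (Fintype.card ι * K ^ 2) ≤ lam) (hlam₂ : 6 * N * K ^ 2 ≤ lam ^ 2)
    (hle : parabolicNormSq ν τ D lam u ≤ N * ∫ z, parabolicOp τ D a lam u z ^ 2 ∂ν) :
    parabolicNormSq ν τ D lam u ≤ 6 * N * ∫ z, fullParabolicOp τ D a b c lam u z ^ 2 ∂ν := by
  have hsq_nonneg (f : V → ℝ) : 0 ≤ ∫ z, f z ^ 2 ∂ν := integral_nonneg fun z ↦ sq_nonneg _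
  have hop := mul_le_mul_of_nonneg_left
    (hu.integral_parabolicOp_sq_le (τ := τ) (D := D) (lam := lam) (ν := ν) ha haC hb hbK hc hcK) hN
  have hgrad := mul_le_mul_of_nonneg_right hlam₁
    (Finset.sum_nonneg fun j (_ : j ∈ Finset.univ) ↦ hsq_nonneg (dirDeriv (D j) u))
  have hzero := mul_le_mul_of_nonneg_right hlam₂ (hsq_nonneg u)
  have htop : lam ^ 2 * ∫ z, u z ^ 2 ∂ν + lam * ∑ j, ∫ z, dirDeriv (D j) u z ^ 2 ∂ν
      ≤ parabolicNormSq ν τ D lam u := by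
    rw [parabolicNormSq, add_assoc _ (∫ z, dirDeriv τ u z ^ 2 ∂ν)]
    exact le_add_of_nonneg_right (add_nonneg (hsq_nonneg _)
      (Finset.sum_nonneg fun j _ ↦ Finset.sum_nonneg fun k _ ↦ hsq_nonneg _))
  linarith

end IsTestFunction

end LowerOrderTerms

section ExponentialWeight

open Set (Ioi Ioo univ)
open scoped ContDiff

/-- The function `(t, x) ↦ exp (lam t) u(t, x)`. Conjugating by this weight replaces `∂_t` by
`∂_t - lam`, which makes the zeroth-order term of the operator large. -/
noncomputable def expWeight {E : Type*} (lam : ℝ) (u : ℝ × E → ℝ) : ℝ × E → ℝ := fun z ↦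
  Real.exp (lam * z.1) * u z

section Integral

variable {E : Type*} [MeasureSpace E] {lam T : ℝ} {f : ℝ × E → ℝ}

theorem integral_sq_le_integral_expWeight_sq (hlam : 0 ≤ lam)
    (hf : Integrable (fun z ↦ expWeight lam f z ^ 2) (volume.restrict (Ioi (0 : ℝ) ×ˢ univ)))
    (T : ℝ) :
    ∫ z in Ioo 0 T ×ˢ univ, f z ^ 2 ≤ ∫ z in Ioi (0 : ℝ) ×ˢ univ, expWeight lam f z ^ 2 := by
  have hsub : Ioo 0 T ×ˢ (univ : Set E) ⊆ Ioi (0 : ℝ) ×ˢ univ :=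
    Set.prod_mono_left Set.Ioo_subset_Ioi_self
  calc ∫ z in Ioo 0 T ×ˢ univ, f z ^ 2 ≤ ∫ z in Ioo 0 T ×ˢ univ, expWeight lam f z ^ 2 := by
        refine integral_mono_of_nonneg (.of_forall fun z ↦ sq_nonneg _) (hf.mono_measure
          (Measure.restrict_mono hsub le_rfl)) ?_
        filter_upwards [ae_restrict_mem (measurableSet_Ioo.prod .univ)] with z hz
        rw [expWeight, mul_pow]
        exact le_mul_of_one_le_left (sq_nonneg _)
          (one_le_pow₀ (Real.one_le_exp (mul_nonneg hlam hz.1.1.le)))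
    _ ≤ ∫ z in Ioi (0 : ℝ) ×ˢ univ, expWeight lam f z ^ 2 :=
        setIntegral_mono_set hf (.of_forall fun z ↦ sq_nonneg _) hsub.eventuallyLE

theorem integral_expWeight_sq_le (hlam : 0 ≤ lam)
    (hf : MemLp f 2 (volume.restrict (Ioo 0 T ×ˢ univ))) (hfT : ∀ z, T ≤ z.1 → f z = 0) :
    ∫ z in Ioi (0 : ℝ) ×ˢ univ, expWeight lam f z ^ 2
      ≤ Real.exp (lam * T) ^ 2 * ∫ z in Ioo 0 T ×ˢ univ, f z ^ 2 := by
  have hzero (z : ℝ × E) (hz : z ∈ Ioi (0 : ℝ) ×ˢ univ \ Ioo 0 T ×ˢ univ) :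
      expWeight lam f z ^ 2 = 0 := by
    have hzT : T ≤ z.1 := not_lt.1 fun h ↦ hz.2 ⟨⟨hz.1.1, h⟩, trivial⟩
    simp [expWeight, hfT z hzT]
  rw [setIntegral_eq_of_subset_of_forall_sdiff_eq_zero (measurableSet_Ioi.prod .univ)
    (Set.prod_mono_left Set.Ioo_subset_Ioi_self) hzero, ← integral_const_mul]
  refine integral_mono_of_nonneg (.of_forall fun z ↦ sq_nonneg _) (hf.integrable_sq.const_mul _) ?_
  filter_upwards [ae_restrict_mem (measurableSet_Ioo.prod .univ)] with z hz
  rw [expWeight, mul_pow]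
  gcongr
  exact hz.1.2.le

end Integral

variable {E ι : Type*} [NormedAddCommGroup E] [NormedSpace ℝ E] [Fintype ι] {lam T : ℝ}
  {u : ℝ × E → ℝ}

namespace IsTestFunction

protected theorem expWeight (hu : IsTestFunction u) (lam : ℝ) :
    IsTestFunction (expWeight lam u) :=
  hu.smul (c := fun z : ℝ × E ↦ Real.exp (lam * z.1)) (by fun_prop)

theorem dirDeriv_expWeight (hu : IsTestFunction u) (v : ℝ × E) :
    dirDeriv v (expWeight lam u)
      = expWeight lam fun z ↦ dirDeriv v u z + lam * v.1 * u z := by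
  have hexp (z : ℝ × E) : HasFDerivAt (fun z : ℝ × E ↦ Real.exp (lam * z.1))
      (Real.exp (lam * z.1) • lam • ContinuousLinearMap.fst ℝ ℝ E) z :=
    (hasFDerivAt_fst.const_mul lam).exp
  refine (dirDeriv_eq_of_hasFDerivAt (f := expWeight lam u)
    (fun z ↦ (hexp z).mul (hu.hasFDerivAt z)) v).trans (funext fun z ↦ ?_)
  simp [expWeight, dirDeriv]
  ring

theorem dirDeriv_space_expWeight (hu : IsTestFunction u) (x : E) :
    dirDeriv (0, x) (expWeight lam u) = expWeight lam (dirDeriv (0, x) u) := by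
  simp [hu.dirDeriv_expWeight]

theorem fullParabolicOp_expWeight (hu : IsTestFunction u) (D : ι → E) (a : ℝ × E → ι → ι → ℝ)
    (b : ℝ × E → ι → ℝ) (c : ℝ × E → ℝ) :
    fullParabolicOp (1, 0) (fun j ↦ (0, D j)) a b c lam (expWeight lam u)
      = expWeight lam (fullParabolicOp (1, 0) (fun j ↦ (0, D j)) a b c 0 u) := by
  funext z
  simp only [fullParabolicOp, parabolicOp, hu.dirDeriv_space_expWeight,
    (hu.dirDeriv _).dirDeriv_space_expWeight, hu.dirDeriv_expWeight (1, 0), expWeight, smul_eq_mul,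
    mul_add, mul_sub, Finset.mul_sum, mul_left_comm (Real.exp _)]
  ring

theorem dirDeriv_eq_zero_of_forall_le (hu : IsTestFunction u) (hT : ∀ z, T ≤ z.1 → u z = 0)
    (v z : ℝ × E) (hz : T ≤ z.1) : dirDeriv v u z = 0 := by
  have hopen : Set.EqOn (dirDeriv v u) 0 (Ioi T ×ˢ univ) := fun z hz ↦ by
    have hnhds : u =ᶠ[nhds z] fun _ ↦ 0 :=
      Filter.mem_of_superset ((isOpen_Ioi.prod isOpen_univ).mem_nhds hz) fun w hw ↦ hT w hw.1.le
    simp [dirDeriv, hnhds.fderiv_eq]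
  refine hopen.closure (hu.dirDeriv v).continuous continuous_zero ?_
  simpa [closure_prod_eq] using hz

theorem fullParabolicOp_eq_zero_of_forall_le (hu : IsTestFunction u)
    (hT : ∀ z, T ≤ z.1 → u z = 0) (τ : ℝ × E) (D : ι → ℝ × E) (a : ℝ × E → ι → ι → ℝ)
    (b : ℝ × E → ι → ℝ) (c : ℝ × E → ℝ) (z : ℝ × E) (hz : T ≤ z.1) :
    fullParabolicOp τ D a b c lam u z = 0 := by
  have hD (v : ℝ × E) := hu.dirDeriv_eq_zero_of_forall_le hT v
  have hDD (v w : ℝ × E) := (hu.dirDeriv w).dirDeriv_eq_zero_of_forall_le (hD w) v z hz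
  simp [fullParabolicOp, parabolicOp, hT z hz, hD _ z hz, hDD]

variable [MeasureSpace E] [BorelSpace E] [SecondCountableTopology E]
  [IsFiniteMeasureOnCompacts (volume : Measure (ℝ × E))]

theorem integral_dirDeriv_time_sq_le (hu : IsTestFunction u) (hlam : 0 ≤ lam) (T : ℝ) :
    ∫ z in Ioo 0 T ×ˢ univ, dirDeriv (1, 0) u z ^ 2
      ≤ 2 * (∫ z in Ioi (0 : ℝ) ×ˢ univ, dirDeriv (1, 0) (expWeight lam u) z ^ 2)
        + 2 * (lam ^ 2 * ∫ z in Ioi (0 : ℝ) ×ˢ univ, expWeight lam u z ^ 2) := by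
  have hw := hu.expWeight lam
  have hw2 := ((hw.memLp 2).integrable_sq (μ := volume)).restrict (s := Ioi (0 : ℝ) ×ˢ univ)
  have hdw2 := (((hw.dirDeriv (1, 0)).memLp 2).integrable_sq (μ := volume)).restrict
    (s := Ioi (0 : ℝ) ×ˢ univ)
  refine (integral_sq_le_integral_expWeight_sq hlam
    (((hu.dirDeriv (1, 0)).expWeight lam).memLp 2).integrable_sq T).trans ?_
  rw [← integral_const_mul, ← integral_const_mul, ← integral_const_mul,
    ← integral_add (hdw2.const_mul 2) ((hw2.const_mul _).const_mul 2)]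
  refine integral_mono (((hu.dirDeriv (1, 0)).expWeight lam).memLp 2).integrable_sq
    ((hdw2.const_mul 2).add ((hw2.const_mul _).const_mul 2)) fun z ↦ ?_
  have hcomm : expWeight lam (dirDeriv (1, 0) u) z
      = dirDeriv (1, 0) (expWeight lam u) z - lam * expWeight lam u z := by
    rw [hu.dirDeriv_expWeight]
    simp only [expWeight]
    ring
  simp only [hcomm]
  nlinarith [sq_nonneg (dirDeriv (1, 0) (expWeight lam u) z + lam * expWeight lam u z)]

theorem parabolicNormSq_one_le_expWeight (hu : IsTestFunction u) (D : ι → E) (hlam : 1 ≤ lam)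
    (T : ℝ) :
    parabolicNormSq (volume.restrict (Ioo 0 T ×ˢ univ)) (1, 0) (fun j ↦ (0, D j)) 1 u
      ≤ 3 * parabolicNormSq (volume.restrict (Ioi (0 : ℝ) ×ˢ univ)) (1, 0) (fun j ↦ (0, D j)) lam
        (expWeight lam u) := by
  have hlam0 : 0 ≤ lam := zero_le_one.trans hlam
  have hle {f : ℝ × E → ℝ} (hf : IsTestFunction f) := integral_sq_le_integral_expWeight_sq hlam0
    ((hf.expWeight lam).memLp 2).integrable_sq T
  have hgrad := Finset.sum_le_sum fun j (_ : j ∈ Finset.univ) ↦ hle (hu.dirDeriv (0, D j))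
  have hhess := Finset.sum_le_sum fun j (_ : j ∈ Finset.univ) ↦ Finset.sum_le_sum
    fun k (_ : k ∈ Finset.univ) ↦ hle ((hu.dirDeriv (0, D k)).dirDeriv (0, D j))
  have htime := hu.integral_dirDeriv_time_sq_le hlam0 T
  have hzero := hle hu
  simp only [parabolicNormSq, hu.dirDeriv_space_expWeight,
    (hu.dirDeriv _).dirDeriv_space_expWeight]
  have hzero0 : 0 ≤ ∫ z in Ioi (0 : ℝ) ×ˢ univ, expWeight lam u z ^ 2 :=
    integral_nonneg fun z ↦ sq_nonneg _
  have hgrad0 : 0 ≤ ∑ j, ∫ z in Ioi (0 : ℝ) ×ˢ univ, expWeight lam (dirDeriv (0, D j) u) z ^ 2 :=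
    Finset.sum_nonneg fun j _ ↦ integral_nonneg fun z ↦ sq_nonneg _
  have hhess0 : 0 ≤ ∑ j, ∑ k, ∫ z in Ioi (0 : ℝ) ×ˢ univ,
      expWeight lam (dirDeriv (0, D j) (dirDeriv (0, D k) u)) z ^ 2 :=
    Finset.sum_nonneg fun j _ ↦ Finset.sum_nonneg fun k _ ↦ integral_nonneg fun z ↦ sq_nonneg _
  have htime0 : 0 ≤ ∫ z in Ioi (0 : ℝ) ×ˢ univ, dirDeriv (1, 0) (expWeight lam u) z ^ 2 :=
    integral_nonneg fun z ↦ sq_nonneg _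
  have hzero1 := le_mul_of_one_le_left hzero0 (one_le_pow₀ (n := 2) hlam)
  have hgrad1 := le_mul_of_one_le_left hgrad0 hlam
  linarith

end IsTestFunction

end ExponentialWeight

section AprioriEstimate

open Set (Ioi Ioo univ)

theorem IsTestFunction.sum_sqrt_integral_le {V ι : Type*} [NormedAddCommGroup V]
    [NormedSpace ℝ V] [MeasurableSpace V] [BorelSpace V] [SecondCountableTopology V] [Fintype ι]
    {ν : Measure V} [IsFiniteMeasureOnCompacts ν] {u : V → ℝ} (hu : IsTestFunction u) (τ : V)
    (D : ι → V) :
    √(∫ z, u z ^ 2 ∂ν) + √(∫ z, dirDeriv τ u z ^ 2 ∂ν)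
        + √(∫ z, ∑ j, dirDeriv (D j) u z ^ 2 ∂ν)
        + √(∫ z, ∑ j, ∑ k, dirDeriv (D j) (dirDeriv (D k) u) z ^ 2 ∂ν)
      ≤ 4 * √(parabolicNormSq ν τ D 1 u) := by
  have hint {f : V → ℝ} (hf : IsTestFunction f) : Integrable (fun z ↦ f z ^ 2) ν :=
    (hf.memLp 2).integrable_sq
  have hgrad : ∫ z, ∑ j, dirDeriv (D j) u z ^ 2 ∂ν = ∑ j, ∫ z, dirDeriv (D j) u z ^ 2 ∂ν :=
    integral_finsetSum _ fun j _ ↦ hint (hu.dirDeriv _)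
  have hhess : ∫ z, ∑ j, ∑ k, dirDeriv (D j) (dirDeriv (D k) u) z ^ 2 ∂ν
      = ∑ j, ∑ k, ∫ z, dirDeriv (D j) (dirDeriv (D k) u) z ^ 2 ∂ν := by
    simp only [integral_finsetSum _ fun j _ ↦ integrable_finsetSum _ fun k _ ↦
      hint ((hu.dirDeriv (D k)).dirDeriv (D j)), integral_finsetSum _ fun k _ ↦
      hint ((hu.dirDeriv (D k)).dirDeriv (D _))]
  have hsq_nonneg (f : V → ℝ) : 0 ≤ ∫ z, f z ^ 2 ∂ν := integral_nonneg fun z ↦ sq_nonneg _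
  have hgrad0 := Finset.sum_nonneg fun j (_ : j ∈ Finset.univ) ↦ hsq_nonneg (dirDeriv (D j) u)
  have hhess0 := Finset.sum_nonneg fun j (_ : j ∈ Finset.univ) ↦ Finset.sum_nonneg
    fun k (_ : k ∈ Finset.univ) ↦ hsq_nonneg (dirDeriv (D j) (dirDeriv (D k) u))
  have hzero0 := hsq_nonneg u
  have htime0 := hsq_nonneg (dirDeriv τ u)
  have hsqrt {x : ℝ} (hx : x ≤ parabolicNormSq ν τ D 1 u) := Real.sqrt_le_sqrt hx
  simp only [parabolicNormSq, one_pow, one_mul] at hsqrt ⊢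
  rw [hgrad, hhess]
  have h₁ := hsqrt (x := ∫ z, u z ^ 2 ∂ν) (by linarith)
  have h₂ := hsqrt (x := ∫ z, dirDeriv τ u z ^ 2 ∂ν) (by linarith)
  have h₃ := hsqrt (x := ∑ j, ∫ z, dirDeriv (D j) u z ^ 2 ∂ν) (by linarith)
  have h₄ := hsqrt (x := ∑ j, ∑ k, ∫ z, dirDeriv (D j) (dirDeriv (D k) u) z ^ 2 ∂ν) (by linarith)
  linarith

theorem exists_parabolicNormSq_le_fullParabolicOp (m : ℕ) {δ : ℝ} (hδ : 0 < δ) (hδ1 : δ ≤ 1)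
    (K : ℝ) :
    ∃ lam N, 1 ≤ lam ∧ 0 < N ∧ ∀ {a : ℝ × ℝ → Fin (m + 1) → Fin (m + 1) → ℝ}
      {b : ℝ × (Fin (m + 1) → ℝ) → Fin (m + 1) → ℝ} {c u : ℝ × (Fin (m + 1) → ℝ) → ℝ},
      IsTestFunction u → (∀ j k, Measurable fun q ↦ a q j k) → (∀ q, IsElliptic δ (a q)) →
      (∀ j, Measurable fun z ↦ b z j) → (∀ z j, |b z j| ≤ K) → Measurable c → (∀ z, |c z| ≤ K) →
      parabolicNormSq (volume.restrict (Ioi (0 : ℝ) ×ˢ univ)) (1, 0) (fun j ↦ (0, Pi.single j 1))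
          lam u
        ≤ N * ∫ z in Ioi (0 : ℝ) ×ˢ univ, fullParabolicOp (1, 0) (fun j ↦ (0, Pi.single j 1))
          (fun z ↦ a (z.1, z.2 0)) b c lam u z ^ 2 := by
  have : (volume : Measure (ℝ × (Fin (m + 1) → ℝ))).IsAddHaarMeasure :=
    Measure.prod.instIsAddHaarMeasure volume volume
  obtain ⟨N, hN, hle⟩ := exists_parabolicNormSq_halfSpace_le m hδ hδ1
  set lam := 6 * N * ((m + 1 : ℕ) * K ^ 2) + 1 with hlam
  have hlam1 : 1 ≤ lam := le_add_of_nonneg_left (by positivity)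
  refine ⟨lam, 6 * N, hlam1, by positivity, fun hu hameas ha hb hbK hc hcK ↦ ?_⟩
  refine hu.parabolicNormSq_le_of_absorption (fun j k ↦ (hameas j k).comp (by fun_prop))
    (fun z ↦ (ha (z.1, z.2 0)).abs_le hδ) hb hbK hc hcK hN.le ?_ ?_
    (hle hu (zero_lt_one.trans_le hlam1) hameas ha)
  · rw [Fintype.card_fin, hlam]
    exact le_add_of_nonneg_right zero_le_one
  · calc 6 * N * K ^ 2 ≤ 6 * N * ((m + 1 : ℕ) * K ^ 2) := by
          gcongr
          exact le_mul_of_one_le_left (sq_nonneg K) (by simp)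
      _ ≤ lam := le_add_of_nonneg_right zero_le_one
      _ ≤ lam ^ 2 := le_self_pow₀ hlam1 two_ne_zero

theorem exists_parabolicNormSq_slab_le (m : ℕ) {δ : ℝ} (hδ : 0 < δ) (hδ1 : δ ≤ 1) (K T : ℝ) :
    ∃ N, 0 < N ∧ ∀ {a : ℝ × ℝ → Fin (m + 1) → Fin (m + 1) → ℝ}
      {b : ℝ × (Fin (m + 1) → ℝ) → Fin (m + 1) → ℝ} {c u : ℝ × (Fin (m + 1) → ℝ) → ℝ},
      IsTestFunction u → (∀ z, T ≤ z.1 → u z = 0) → (∀ j k, Measurable fun q ↦ a q j k) →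
      (∀ q, IsElliptic δ (a q)) → (∀ j, Measurable fun z ↦ b z j) → (∀ z j, |b z j| ≤ K) →
      Measurable c → (∀ z, |c z| ≤ K) →
      parabolicNormSq (volume.restrict (Ioo 0 T ×ˢ univ)) (1, 0) (fun j ↦ (0, Pi.single j 1)) 1 u
        ≤ N * ∫ z in Ioo 0 T ×ˢ univ, fullParabolicOp (1, 0) (fun j ↦ (0, Pi.single j 1))
          (fun z ↦ a (z.1, z.2 0)) b c 0 u z ^ 2 := by
  have : (volume : Measure (ℝ × (Fin (m + 1) → ℝ))).IsAddHaarMeasure :=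
    Measure.prod.instIsAddHaarMeasure volume volume
  obtain ⟨lam, N, hlam, hN, hle⟩ := exists_parabolicNormSq_le_fullParabolicOp m hδ hδ1 K
  refine ⟨3 * (N * Real.exp (lam * T) ^ 2), by positivity,
    fun {a b c u} hu huT hameas ha hb hbK hc hcK ↦ ?_⟩
  set L := fullParabolicOp (1, 0) (fun j ↦ (0, Pi.single j 1)) (fun z ↦ a (z.1, z.2 0)) b c 0 u
  have hL : MemLp L 2 (volume.restrict (Ioo 0 T ×ˢ univ)) :=
    hu.memLp_fullParabolicOp (fun j k ↦ (hameas j k).comp (by fun_prop))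
      (fun z ↦ (ha (z.1, z.2 0)).abs_le hδ) hb hbK hc hcK 2
  have hweighted := hle (hu.expWeight lam) hameas ha hb hbK hc hcK
  rw [hu.fullParabolicOp_expWeight] at hweighted
  calc _ ≤ 3 * parabolicNormSq (volume.restrict (Ioi (0 : ℝ) ×ˢ univ)) (1, 0)
          (fun j ↦ (0, Pi.single j 1)) lam (expWeight lam u) :=
        hu.parabolicNormSq_one_le_expWeight _ hlam T
    _ ≤ 3 * (N * ∫ z in Ioi (0 : ℝ) ×ˢ univ, expWeight lam L z ^ 2) := by gcongr
    _ ≤ 3 * (N * (Real.exp (lam * T) ^ 2 * ∫ z in Ioo 0 T ×ˢ univ, L z ^ 2)) := by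
        gcongr
        exact integral_expWeight_sq_le (zero_le_one.trans hlam) hL
          (hu.fullParabolicOp_eq_zero_of_forall_le huT _ _ _ _ _)
    _ = 3 * (N * Real.exp (lam * T) ^ 2) * ∫ z in Ioo 0 T ×ˢ univ, L z ^ 2 := by ring

end AprioriEstimate

theorem stmt17 (d : ℕ) (hd : 0 < d) (δ : ℝ) (hδ : δ ∈ Set.Ioo (0 : ℝ) 1)
    (K : ℝ) (hK : 0 < K) (T : ℝ) (hT : 0 < T) :
    ∃ N : ℝ, 0 < N ∧
      ∀ (a : ℝ × ℝ → Fin d → Fin d → ℝ)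
        (b : ℝ × (Fin d → ℝ) → Fin d → ℝ)
        (c : ℝ × (Fin d → ℝ) → ℝ),
        (∀ j k, Measurable fun q => a q j k) →
        (∀ j, Measurable fun q => b q j) → Measurable c →
        (∀ q j k, a q j k = a q k j) →
        (∀ q j, |b q j| ≤ K) → (∀ q, |c q| ≤ K) →
        (∀ (q : ℝ × ℝ) (θ : Fin d → ℝ),
          δ * ∑ j, (θ j) ^ 2 ≤ ∑ j, ∑ k, a q j k * θ j * θ k ∧
          ∑ j, ∑ k, a q j k * θ j * θ k ≤ δ⁻¹ * ∑ j, (θ j) ^ 2) →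
        ∀ u : ℝ × (Fin d → ℝ) → ℝ, ContDiff ℝ (⊤ : ℕ∞) u → HasCompactSupport u →
          (∀ q : ℝ × (Fin d → ℝ), T ≤ q.1 → u q = 0) →
          L2NormOn (OmegaT d T) u
              + L2NormOn (OmegaT d T) (pdt u)
              + Real.sqrt (∫ q in OmegaT d T, ∑ j, (pdx j u q) ^ 2)
              + Real.sqrt (∫ q in OmegaT d T, ∑ j, ∑ k, (pdxx j k u q) ^ 2)
            ≤ N * L2NormOn (OmegaT d T) (fun q =>
                pdt u q + (∑ j, ∑ k, a (q.1, q.2 ⟨0, hd⟩) j k * pdxx j k u q)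
                  + (∑ j, b q j * pdx j u q) + c q * u q) := by
  have : (volume : Measure (ℝ × (Fin d → ℝ))).IsAddHaarMeasure :=
    Measure.prod.instIsAddHaarMeasure volume volume
  obtain ⟨m, rfl⟩ := Nat.exists_eq_add_one.2 hd
  obtain ⟨N, hN, hle⟩ := exists_parabolicNormSq_slab_le m hδ.1 hδ.2.le K T
  refine ⟨4 * √N, by positivity, fun a b c ha hb hc hsymm hbK hcK hform u hu husupp huT ↦ ?_⟩
  have htest : IsTestFunction u := ⟨hu, husupp⟩
  have hell (q : ℝ × ℝ) : IsElliptic δ (a q) :=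
    ⟨hsymm q, fun θ ↦ (hform q θ).1, fun θ ↦ (hform q θ).2⟩
  calc _ ≤ 4 * √(parabolicNormSq (volume.restrict (OmegaT (m + 1) T)) (1, 0)
          (fun j ↦ (0, Pi.single j 1)) 1 u) := htest.sum_sqrt_integral_le _ _
    _ ≤ 4 * √(N * ∫ q in OmegaT (m + 1) T, fullParabolicOp (1, 0) (fun j ↦ (0, Pi.single j 1))
          (fun z ↦ a (z.1, z.2 0)) b c 0 u q ^ 2) := by
        gcongr
        exact hle htest huT ha hell hb hbK hc hcK
    _ = _ := by
        rw [Real.sqrt_mul hN.le, ← mul_assoc]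
        simp only [fullParabolicOp, parabolicOp, smul_eq_mul, zero_mul, sub_zero]
        rfl
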